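/- Let D be a non-trivial, non-symmetric 2-(v,k,3) design with 3 dividing the replication number r, admitting a flag-transitive, point-primitive automorphism group G that is almost simple with socle X = PSL(2,q), q ≥ 4 a prime power. Then X itself acts point-primitively on D; equivalently, the stabilizer X_α in X of a point α of D is a maximal subgroup of X. -/

import Mathlib

open scoped Pointwise
open Matrix

namespace FT

variable {Pt : Type*}

/-- `IsDesign 𝓑 k lam` says that the family `𝓑` of subsets of the point set `Pt` is the
block set of a `2-(v, k, lam)` design: every block has `k` points and any two distinct
points lie on exactly `lam` common blocks. -/
structure IsDesign (𝓑 : Set (Set Pt)) (k lam : ℕ) : Prop where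
  block_card : ∀ B ∈ 𝓑, Nat.card B = k
  pair_count : ∀ x y : Pt, x ≠ y → Nat.card {B : Set Pt | B ∈ 𝓑 ∧ x ∈ B ∧ y ∈ B} = lam

/-- The group `G` acts on the design with point set `Pt` and block set `𝓑` as a group of
automorphisms. -/
def ActsOn (G : Type*) [Group G] [MulAction G Pt] (𝓑 : Set (Set Pt)) : Prop :=
  ∀ (g : G), ∀ B ∈ 𝓑, g • B ∈ 𝓑

/-- The group `G` is transitive on the flags (incident point-block pairs) of the design. -/
def FlagTransitive (G : Type*) [Group G] [MulAction G Pt] (𝓑 : Set (Set Pt)) : Prop :=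
  ∀ B ∈ 𝓑, ∀ C ∈ 𝓑, ∀ x ∈ B, ∀ y ∈ C, ∃ g : G, g • B = C ∧ g • x = y

/-- The action of `G` on `Pt` is primitive: it is transitive and every block of
imprimitivity is trivial. -/
def PointPrimitive (G : Type*) [Group G] (Pt : Type*) [MulAction G Pt] : Prop :=
  MulAction.IsPretransitive G Pt ∧
    ∀ s : Set Pt, MulAction.IsBlock G s → s.Subsingleton ∨ s = Set.univ

/-- The number of blocks of `𝓑` through the point `x` (the replication number, for a
flag-transitive design). -/
noncomputable def repNum (𝓑 : Set (Set Pt)) (x : Pt) : ℕ :=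
  Nat.card {B : Set Pt | B ∈ 𝓑 ∧ x ∈ B}

/-- The projective general linear group `PGL(2,K)`, as the quotient of `GL(2,K)` by its
center. -/
abbrev PGL2 (K : Type*) [Field K] :=
  GL (Fin 2) K ⧸ Subgroup.center (GL (Fin 2) K)

/-- The projective special linear group `PSL(2,K)`. -/
abbrev PSL2 (K : Type*) [Field K] := Matrix.ProjectiveSpecialLinearGroup (Fin 2) K

end FT

open FT

/-!
Write `S = SL(2,q)` and let `φ : S → G` be the composite of `S → PSL(2,q)` with the embedding of the
socle `X`. Its kernel is the center and its image is `X`, so it suffices to show that the preimage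
in `S` of some point stabilizer is maximal, or that the number `v` of points is prime. Let
`q = p ^ f` and `r = 3 R`.

*Design theory.* Counting and Fisher's inequality give `v = R (k - 1) + 1`, `R ≥ 2`, `k < 3 R` and
`k ∣ 3 R (R - 1)`. Flag-transitivity gives `3 R ∣ |G_α|`, and `R` divides the length of every
`G_α`-orbit on the other points.

*The characteristic does not divide `v`.* Then the group of upper unitriangular matrices fixes a
point `α`. As `X_α` is proper, its preimage lies in a Borel subgroup; hence `G_α` normalizes the
unipotent group, and by maximality of `G_α` the preimage is the Borel subgroup, which is maximal.

*The characteristic divides `v`.* Let `ℓ` be a prime divisor of `R`; it divides neither `v` nor `q`.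
A Sylow `ℓ`-subgroup of a torus fixes a point `α`. If it fixes only `α`, the normalizer of the torus
fixes `α`, and then `X_α` is maximal by the classification of the subgroups of `S` containing such a
normalizer; the small exceptions contradict the divisibility conditions. If it fixes two points, the
orbit condition bounds the `ℓ`-part of `R`. Doing this for the split and the nonsplit torus shows
that `R` divides `(q + 1, 4) f`. On the other hand, Burnside's lemma for the unipotent group gives
`q ≤ 2 v`, and `q ≤ v` unless `q ≡ 1 (mod 4)`. Since `v ≤ 3 R ^ 2`, only finitely many parameters
remain, and a search leaves `v = 5`.

The overgroups of torus normalizers are found by counting. Commuting is a transitive relation on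
noncentral elements of `S`, so the elements of a subgroup without fixed points on the projective
line fall into disjoint classes whose sizes are determined by the orders of centralizers, while
Burnside's lemma on the projective line prescribes how many such elements there are. The bound
`|G| ∣ |S| f` comes from a Frattini argument for the unipotent group together with the fact that an
element normalizing both root subgroups acts semilinearly.
-/

namespace SLTwo

/-! ### Commuting classes -/

section Commuting

variable {S : Type*} [Group S]

/-- A group is commutative transitive if any two elements commuting with the same noncentral
element commute with each other. -/
def IsCommTransitive (S : Type*) [Group S] : Prop :=
  ∀ a b c : S, b ∉ Subgroup.center S → Commute a b → Commute b c → Commute a c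

/-- The centralizer of `y` in the subgroup `M`. -/
def relCentralizer (M : Subgroup S) (y : S) : Subgroup S := M ⊓ Subgroup.centralizer {y}

/-- The elements of `M` that conjugate `y` into its own centralizer. In a commutative transitive
group this is the normalizer in `M` of the centralizer of a noncentral `y`. -/
def conjugators (M : Subgroup S) (y : S) : Set S := {g | g ∈ M ∧ Commute (g * y * g⁻¹) y}

/-- The commuting class of `y` in `M`: the noncentral elements of `M` having an `M`-conjugate that
commutes with `y`. In a commutative transitive group these classes partition the noncentral
elements of `M`. -/
def commClass (M : Subgroup S) (y : S) : Set S :=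
  {z | z ∈ M ∧ z ∉ Subgroup.center S ∧ ∃ g ∈ M, Commute (g * z * g⁻¹) y}

variable {M : Subgroup S} {y z : S}

lemma mem_relCentralizer : z ∈ relCentralizer M y ↔ z ∈ M ∧ Commute z y := by
  simp [relCentralizer, Subgroup.mem_centralizer_singleton_iff, Commute, SemiconjBy, eq_comm]

lemma center_le_relCentralizer (hZ : Subgroup.center S ≤ M) (y : S) :
    Subgroup.center S ≤ relCentralizer M y :=
  fun _ hz => mem_relCentralizer.2 ⟨hZ hz, (Subgroup.mem_center_iff.1 hz y).symm⟩

lemma conj_mem_center_iff {g : S} : g * z * g⁻¹ ∈ Subgroup.center S ↔ z ∈ Subgroup.center S := by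
  refine ⟨fun h => ?_, fun h => Subgroup.Normal.conj_mem inferInstance z h g⟩
  have := Subgroup.Normal.conj_mem inferInstance _ h g⁻¹
  simpa [mul_assoc] using this

lemma commClass_subset : commClass M y ⊆ (M : Set S) \ Subgroup.center S :=
  fun _ hz => ⟨hz.1, hz.2.1⟩

lemma disjoint_commClass (hS : IsCommTransitive S) (hzM : z ∈ M)
    (hz : z ∉ Subgroup.center S) (hzy : z ∉ commClass M y) :
    Disjoint (commClass M y) (commClass M z) := by
  rw [Set.disjoint_left]
  rintro x ⟨-, hxc, g, hg, hgx⟩ ⟨-, -, h, hh, hhx⟩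
  refine hzy ⟨hzM, hz, g * h⁻¹, M.mul_mem hg (M.inv_mem hh), ?_⟩
  have key := (Commute.conj_iff (g * h⁻¹)).2 hhx
  rw [show g * h⁻¹ * (h * x * h⁻¹) * (g * h⁻¹)⁻¹ = g * x * g⁻¹ by group] at key
  exact hS _ _ _ (mt conj_mem_center_iff.1 hxc) key.symm hgx

lemma ncard_conj_commute_add_card_center [Finite S] (hZ : Subgroup.center S ≤ M) {g : S}
    (hg : g ∈ M) (y : S) :
    {z | (z ∈ M ∧ z ∉ Subgroup.center S) ∧ Commute (g * z * g⁻¹) y}.ncard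
      + Nat.card (Subgroup.center S) = Nat.card (relCentralizer M y) := by
  have image_eq : (fun z => g * z * g⁻¹) ''
      {z | (z ∈ M ∧ z ∉ Subgroup.center S) ∧ Commute (g * z * g⁻¹) y}
        = (relCentralizer M y : Set S) \ Subgroup.center S := by
    ext c
    simp only [Set.mem_image, Set.mem_ofPred_eq, Set.mem_sdiff, SetLike.mem_coe, mem_relCentralizer]
    constructor
    · rintro ⟨z, ⟨⟨hz, hzc⟩, hc⟩, rfl⟩
      exact ⟨⟨M.mul_mem (M.mul_mem hg hz) (M.inv_mem hg), hc⟩, mt conj_mem_center_iff.1 hzc⟩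
    · rintro ⟨⟨hc, hcy⟩, hcc⟩
      have conj_inv : g * (g⁻¹ * c * g) * g⁻¹ = c := by group
      refine ⟨g⁻¹ * c * g, ⟨⟨M.mul_mem (M.mul_mem (M.inv_mem hg) hc) hg, fun h => hcc ?_⟩, ?_⟩,
        conj_inv⟩
      · rw [← conj_inv]
        exact conj_mem_center_iff.2 h
      · rwa [conj_inv]
  rw [← Set.ncard_image_of_injective _ (MulAut.conj g).injective]
  exact (congrArg (·.ncard + _) image_eq).trans
    (Set.ncard_sdiff_add_ncard_of_subset (center_le_relCentralizer hZ y))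

lemma ncard_conj_commute_eq_ncard_conjugators (hS : IsCommTransitive S)
    (hy : y ∉ Subgroup.center S) (hz : z ∈ commClass M y) :
    {g | g ∈ M ∧ Commute (g * z * g⁻¹) y}.ncard = (conjugators M y).ncard := by
  obtain ⟨-, hzc, g, hg, hgz⟩ := hz
  have image_eq : (· * g) '' conjugators M y = {h | h ∈ M ∧ Commute (h * z * h⁻¹) y} := by
    ext h
    constructor
    · rintro ⟨n, ⟨hn, hny⟩, rfl⟩
      refine ⟨M.mul_mem hn hg, ?_⟩
      have key := (Commute.conj_iff n).2 hgz
      rw [show n * (g * z * g⁻¹) * n⁻¹ = n * g * z * (n * g)⁻¹ by group] at key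
      exact hS _ _ _ (mt conj_mem_center_iff.1 hy) key hny
    · rintro ⟨hh, hhz⟩
      refine ⟨h * g⁻¹, ⟨M.mul_mem hh (M.inv_mem hg), ?_⟩, inv_mul_cancel_right h g⟩
      have key := (Commute.conj_iff (h * g⁻¹)).2 hgz
      rw [show h * g⁻¹ * (g * z * g⁻¹) * (h * g⁻¹)⁻¹ = h * z * h⁻¹ by group] at key
      exact hS _ _ _ (mt conj_mem_center_iff.1 hzc) key.symm hhz
  rw [← image_eq, Set.ncard_image_of_injective _ (mul_left_injective g)]

lemma ncard_commClass_mul_ncard_conjugators [Finite S] (hS : IsCommTransitive S)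
    (hZ : Subgroup.center S ≤ M) (hy : y ∉ Subgroup.center S) :
    (commClass M y).ncard * (conjugators M y).ncard + Nat.card (Subgroup.center S) * Nat.card M
      = Nat.card (relCentralizer M y) * Nat.card M := by
  classical
  have := Fintype.ofFinite S
  have double_count := Finset.sum_card_bipartiteAbove_eq_sum_card_bipartiteBelow
    (s := (M : Set S).toFinset) (t := (commClass M y).toFinset)
    (fun g z => Commute (g * z * g⁻¹) y)
  have above : ∀ g ∈ (M : Set S).toFinset,
      ((commClass M y).toFinset.bipartiteAbove (fun g z => Commute (g * z * g⁻¹) y) g).card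
        + Nat.card (Subgroup.center S) = Nat.card (relCentralizer M y) := by
    intro g hg
    rw [Set.mem_toFinset] at hg
    rw [← ncard_conj_commute_add_card_center hZ hg y, ← Set.ncard_coe_finset]
    congr 2
    ext z
    rw [Finset.coe_bipartiteAbove, Set.mem_ofPred_eq, Set.mem_toFinset]
    exact ⟨fun h => ⟨⟨h.1.1, h.1.2.1⟩, h.2⟩, fun h => ⟨⟨h.1.1, h.1.2, g, hg, h.2⟩, h.2⟩⟩
  have below : ∀ z ∈ (commClass M y).toFinset,
      ((M : Set S).toFinset.bipartiteBelow (fun g z => Commute (g * z * g⁻¹) y) z).card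
        = (conjugators M y).ncard := by
    intro z hz
    rw [← ncard_conj_commute_eq_ncard_conjugators hS hy (Set.mem_toFinset.1 hz),
      ← Set.ncard_coe_finset]
    simp [Finset.coe_bipartiteBelow]
  have card_M : Nat.card M = (M : Set S).toFinset.card := by
    rw [← Set.ncard_eq_toFinset_card', ← Nat.card_coe_set_eq, SetLike.coe_sort_coe]
  rw [Finset.sum_congr rfl below, Finset.sum_const, smul_eq_mul,
    ← Set.ncard_eq_toFinset_card'] at double_count
  rw [← double_count, card_M, mul_comm, mul_comm _ (Finset.card _), ← smul_eq_mul,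
    ← smul_eq_mul, ← Finset.sum_const, ← Finset.sum_const, ← Finset.sum_add_distrib]
  exact Finset.sum_congr rfl above

lemma ncard_conjugators_of_inverted [Finite S]
    (hinv : ∀ g ∈ M, Commute (g * y * g⁻¹) y → g * y * g⁻¹ = y ∨ g * y * g⁻¹ = y⁻¹)
    (hy : y⁻¹ ≠ y) {n : S} (hn : n ∈ M) (hny : n * y * n⁻¹ = y⁻¹) :
    (conjugators M y).ncard = 2 * Nat.card (relCentralizer M y) := by
  have conj_mul (c : S) (hc : Commute c y) : n * c * y * (n * c)⁻¹ = y⁻¹ := by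
    rw [show n * c * y * (n * c)⁻¹ = n * (c * y * c⁻¹) * n⁻¹ by group, hc.mul_inv_cancel, hny]
  have union_eq : conjugators M y
      = (relCentralizer M y : Set S) ∪ (n * ·) '' (relCentralizer M y : Set S) := by
    ext g
    constructor
    · rintro ⟨hg, hgy⟩
      rcases hinv g hg hgy with h | h
      · exact Or.inl (mem_relCentralizer.2 ⟨hg, mul_inv_eq_iff_eq_mul.1 h⟩)
      · refine Or.inr ⟨n⁻¹ * g, mem_relCentralizer.2 ⟨M.mul_mem (M.inv_mem hn) hg, ?_⟩, by group⟩
        refine mul_inv_eq_iff_eq_mul.1 ?_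
        rw [show n⁻¹ * g * y * (n⁻¹ * g)⁻¹ = n⁻¹ * (g * y * g⁻¹) * n by group, h, ← hny]
        group
    · rintro (h | ⟨c, h, rfl⟩) <;> obtain ⟨hM, hc⟩ := mem_relCentralizer.1 h
      · exact ⟨hM, by rw [hc.mul_inv_cancel]⟩
      · exact ⟨M.mul_mem hn hM, by rw [conj_mul c hc]; exact (Commute.refl y).inv_left⟩
  have disj : Disjoint (relCentralizer M y : Set S) ((n * ·) '' (relCentralizer M y : Set S)) := by
    rw [Set.disjoint_left]
    rintro _ h₁ ⟨c, h₂, rfl⟩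
    exact hy ((conj_mul c (mem_relCentralizer.1 h₂).2).symm.trans
      (mem_relCentralizer.1 h₁).2.mul_inv_cancel)
  rw [union_eq, Set.ncard_union_eq disj, Set.ncard_image_of_injective _ (mul_right_injective n),
    ← Nat.card_coe_set_eq, SetLike.coe_sort_coe, two_mul]

lemma ncard_conjugators_of_not_inverted
    (hinv : ∀ g ∈ M, Commute (g * y * g⁻¹) y → g * y * g⁻¹ = y) :
    (conjugators M y).ncard = Nat.card (relCentralizer M y) := by
  rw [← SetLike.coe_sort_coe, Nat.card_coe_set_eq]
  congr 1
  ext g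
  rw [SetLike.mem_coe, mem_relCentralizer]
  refine and_congr_right fun hg => ⟨fun h => mul_inv_eq_iff_eq_mul.1 (hinv g hg h), fun h => ?_⟩
  rw [h.mul_inv_cancel]

lemma ncard_conjugators_eq_or [Finite S]
    (hinv : ∀ g ∈ M, Commute (g * y * g⁻¹) y → g * y * g⁻¹ = y ∨ g * y * g⁻¹ = y⁻¹) :
    (conjugators M y).ncard = Nat.card (relCentralizer M y) ∨
      (conjugators M y).ncard = 2 * Nat.card (relCentralizer M y) := by
  by_cases h : ∃ n ∈ M, n * y * n⁻¹ = y⁻¹ ∧ y⁻¹ ≠ y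
  · obtain ⟨n, hn, hny, hy⟩ := h
    exact Or.inr (ncard_conjugators_of_inverted hinv hy hn hny)
  · push Not at h
    refine Or.inl (ncard_conjugators_of_not_inverted fun g hg hgy => ?_)
    rcases hinv g hg hgy with h' | h'
    · exact h'
    · rw [h', h g hg h']

/-- The proportion of the elements of `M` that belong to the commuting class of `y`. -/
noncomputable def commDensity (M : Subgroup S) (y : S) : ℚ :=
  (commClass M y).ncard / Nat.card M

lemma exists_card_relCentralizer_eq [Finite S] (hZ : Subgroup.center S ≤ M) (hyM : y ∈ M)
    (hy : y ∉ Subgroup.center S) :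
    ∃ e : ℕ, 2 ≤ e ∧ Nat.card (relCentralizer M y) = Nat.card (Subgroup.center S) * e := by
  obtain ⟨e, he⟩ := Subgroup.card_dvd_of_le (center_le_relCentralizer hZ y)
  refine ⟨e, ?_, he⟩
  by_contra! h
  have card_le : Nat.card (relCentralizer M y) ≤ Nat.card (Subgroup.center S) := by
    rw [he]
    exact mul_le_of_le_one_right' (by lia)
  have := Subgroup.eq_of_le_of_card_ge (center_le_relCentralizer hZ y) card_le
  exact hy (this ▸ mem_relCentralizer.2 ⟨hyM, Commute.refl y⟩)

lemma commDensity_eq_div [Finite S] (hS : IsCommTransitive S) (hZ : Subgroup.center S ≤ M)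
    (hy : y ∉ Subgroup.center S) {e s : ℕ} (hs : s ≠ 0)
    (he : Nat.card (relCentralizer M y) = Nat.card (Subgroup.center S) * e)
    (hse : (conjugators M y).ncard = s * Nat.card (relCentralizer M y)) :
    commDensity M y = (1 - 1 / e) / s := by
  have count := ncard_commClass_mul_ncard_conjugators hS hZ hy
  rw [hse, he] at count
  have hz : (Nat.card (Subgroup.center S) : ℚ) ≠ 0 := by exact_mod_cast Nat.card_pos.ne'
  have hM : (Nat.card M : ℚ) ≠ 0 := by exact_mod_cast Nat.card_pos.ne'
  have e_ne : (e : ℚ) ≠ 0 := by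
    rintro h
    rw [Nat.cast_eq_zero.1 h, mul_zero] at he
    exact Nat.card_pos.ne' he
  have hs' : (s : ℚ) ≠ 0 := Nat.cast_ne_zero.2 hs
  have count' : ((commClass M y).ncard : ℚ) * (s * e) + Nat.card M = e * Nat.card M := by
    refine mul_left_cancel₀ hz ?_
    have := congrArg (Nat.cast (R := ℚ)) count
    push_cast at this
    linear_combination this
  rw [commDensity]
  field_simp
  linear_combination count'

/-- The possible densities of the commuting class of an element that commutes with no conjugate but
itself and its inverse; `e` is the order of its centralizer modulo the center. -/
def IsClassDensity (d : ℚ) : Prop :=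
  ∃ e : ℕ, 2 ≤ e ∧ (d = 1 - 1 / e ∨ d = (1 - 1 / e) / 2)

lemma isClassDensity_commDensity [Finite S] (hS : IsCommTransitive S) (hZ : Subgroup.center S ≤ M)
    (hyM : y ∈ M) (hy : y ∉ Subgroup.center S)
    (hinv : ∀ g ∈ M, Commute (g * y * g⁻¹) y → g * y * g⁻¹ = y ∨ g * y * g⁻¹ = y⁻¹) :
    IsClassDensity (commDensity M y) := by
  obtain ⟨e, he, hC⟩ := exists_card_relCentralizer_eq hZ hyM hy
  refine ⟨e, he, (ncard_conjugators_eq_or hinv).imp (fun h => ?_) fun h => ?_⟩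
  · simpa using commDensity_eq_div hS hZ hy one_ne_zero hC (by rwa [one_mul])
  · exact_mod_cast commDensity_eq_div hS hZ hy two_ne_zero hC h

lemma one_div_natCast_le {k n : ℕ} (hk : 0 < k) (hkn : k ≤ n) : (1 / n : ℚ) ≤ 1 / k :=
  one_div_le_one_div_of_le (by exact_mod_cast hk) (by exact_mod_cast hkn)

lemma IsClassDensity.quarter_le {d : ℚ} (hd : IsClassDensity d) : 1 / 4 ≤ d := by
  obtain ⟨e, he, h | h⟩ := hd <;>
    · have := one_div_natCast_le two_pos he
      push_cast at *
      linarith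

lemma two_mul_card_relCentralizer_le [Finite S]
    (h : (conjugators M y).ncard = 2 * Nat.card (relCentralizer M y)) :
    2 * Nat.card (relCentralizer M y) ≤ Nat.card M := by
  rw [← h, ← SetLike.coe_sort_coe, Nat.card_coe_set_eq]
  exact Set.ncard_le_ncard fun _ hg => hg.1

lemma ncard_div_card_eq [Finite S] (hZ : Subgroup.center S ≤ M) {g : ℕ}
    (hg : Nat.card M = Nat.card (Subgroup.center S) * g) :
    (((M : Set S) \ Subgroup.center S).ncard : ℚ) / Nat.card M = 1 - 1 / g := by
  have hz : (Nat.card (Subgroup.center S) : ℚ) ≠ 0 := by exact_mod_cast Nat.card_pos.ne'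
  have g_ne : (g : ℚ) ≠ 0 := by
    rintro h
    rw [Nat.cast_eq_zero.1 h, mul_zero] at hg
    exact Nat.card_pos.ne' hg
  have sdiff := Set.ncard_sdiff_add_ncard_of_subset (s := (Subgroup.center S : Set S)) (t := M) hZ
  rw [← Nat.card_coe_set_eq (Subgroup.center S : Set S), ← Nat.card_coe_set_eq (M : Set S),
    SetLike.coe_sort_coe, SetLike.coe_sort_coe, hg] at sdiff
  have := congrArg (Nat.cast (R := ℚ)) sdiff
  push_cast at this
  rw [hg]
  push_cast
  field_simp
  linear_combination this

lemma commDensity_partition [Finite S] (hS : IsCommTransitive S) (hZ : Subgroup.center S ≤ M)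
    (y : S) {g : ℕ} (hg : Nat.card M = Nat.card (Subgroup.center S) * g) :
    commDensity M y = 1 - 1 / g ∨
    ∃ y₂ ∈ (M : Set S) \ Subgroup.center S, commDensity M y + commDensity M y₂ = 1 - 1 / g ∨
    ∃ y₃ ∈ (M : Set S) \ Subgroup.center S,
      commDensity M y + commDensity M y₂ + commDensity M y₃ = 1 - 1 / g ∨
    ∃ y₄ ∈ (M : Set S) \ Subgroup.center S,
      commDensity M y + commDensity M y₂ + commDensity M y₃ + commDensity M y₄ ≤ 1 - 1 / g := by
  simp only [← ncard_div_card_eq hZ hg, commDensity, ← add_div, ← Nat.cast_add]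
  have exists_outside {T : Set S} (hT : T ⊆ (M : Set S) \ Subgroup.center S) :
      T = (M : Set S) \ Subgroup.center S ∨ ∃ x ∈ (M : Set S) \ Subgroup.center S, x ∉ T :=
    (hT.eq_or_ssubset).imp_right Set.exists_of_ssubset
  have sub₁ := commClass_subset (M := M) (y := y)
  rcases exists_outside sub₁ with h | ⟨y₂, hy₂, hn₂⟩
  · exact Or.inl (by rw [h])
  have disj₂ := disjoint_commClass hS hy₂.1 hy₂.2 hn₂
  have sub₂ := Set.union_subset sub₁ (commClass_subset (M := M) (y := y₂))
  refine Or.inr ⟨y₂, hy₂, ?_⟩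
  rw [← Set.ncard_union_eq disj₂]
  rcases exists_outside sub₂ with h | ⟨y₃, hy₃, hn₃⟩
  · exact Or.inl (by rw [h])
  rw [Set.mem_union, not_or] at hn₃
  have disj₃ := Set.disjoint_union_left.2 ⟨disjoint_commClass hS hy₃.1 hy₃.2 hn₃.1,
    disjoint_commClass hS hy₃.1 hy₃.2 hn₃.2⟩
  have sub₃ := Set.union_subset sub₂ (commClass_subset (M := M) (y := y₃))
  refine Or.inr ⟨y₃, hy₃, ?_⟩
  rw [← Set.ncard_union_eq disj₃]
  rcases exists_outside sub₃ with h | ⟨y₄, hy₄, hn₄⟩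
  · exact Or.inl (by rw [h])
  simp only [Set.mem_union, not_or] at hn₄
  have disj₄ := Set.disjoint_union_left.2 ⟨Set.disjoint_union_left.2
    ⟨disjoint_commClass hS hy₄.1 hy₄.2 hn₄.1.1, disjoint_commClass hS hy₄.1 hy₄.2 hn₄.1.2⟩,
    disjoint_commClass hS hy₄.1 hy₄.2 hn₄.2⟩
  refine Or.inr ⟨y₄, hy₄, ?_⟩
  rw [← Set.ncard_union_eq disj₄]
  gcongr
  · exact Set.toFinite _
  · exact Set.union_subset sub₃ commClass_subset

/-- The relation between the order `g` of a finite rotation group and the order `a` of the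
stabilizer of an axis: the group is cyclic or dihedral with main axis of order `a`, or `a = 2`, or
the group is one of the tetrahedral, octahedral and icosahedral groups. -/
def IsRotationGroupPair (a g : ℕ) : Prop :=
  g = 2 * a ∨ a = 2 ∨ a = 3 ∧ (g = 12 ∨ g = 24 ∨ g = 60) ∨ a = 4 ∧ g = 24 ∨ a = 5 ∧ g = 60

lemma isRotationGroupPair_of_half {a f g : ℕ} (ha : 3 ≤ a) (hf : 3 ≤ f) (hg : 0 < g)
    (h : (1 / a + 1 / f : ℚ) = 1 / 2 + 2 / g) : IsRotationGroupPair a g := by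
  have hg' : (0 : ℚ) < 2 / g := by positivity
  have g_eq (c : ℕ) (hc : (c * (2 / g) : ℚ) = 2) : g = c := by
    field_simp at hc
    exact_mod_cast hc.symm
  have ha3 := one_div_natCast_le three_pos ha
  have hf3 := one_div_natCast_le three_pos hf
  have hf4 : 4 ≤ a → f = 3 := fun ha4 => by
    by_contra hf4
    have := one_div_natCast_le four_pos ha4
    have := one_div_natCast_le (n := f) four_pos (by lia)
    push_cast at *
    linarith
  have ha6 : a < 6 := by
    by_contra! ha6
    have := one_div_natCast_le (by simp) ha6
    push_cast at *
    linarith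
  have hf6 : f < 6 := by
    by_contra! hf6
    have := one_div_natCast_le (by simp) hf6
    push_cast at *
    linarith
  have candidates : a = 3 ∧ (f = 3 ∨ f = 4 ∨ f = 5) ∨ a = 4 ∧ f = 3 ∨ a = 5 ∧ f = 3 := by lia
  rw [IsRotationGroupPair]
  rcases candidates with ⟨rfl, rfl | rfl | rfl⟩ | ⟨rfl, rfl⟩ | ⟨rfl, rfl⟩ <;> push_cast at h
  · simp [g_eq 12 (by push_cast; linarith)]
  · simp [g_eq 24 (by push_cast; linarith)]
  · simp [g_eq 60 (by push_cast; linarith)]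
  · simp [g_eq 24 (by push_cast; linarith)]
  · simp [g_eq 60 (by push_cast; linarith)]

lemma isRotationGroupPair_of_three_classes {a e f g : ℕ} (ha : 2 ≤ a) (he : 2 ≤ e) (hf : 2 ≤ f)
    (hg : 0 < g) (h : (1 / a + 1 / e + 1 / f : ℚ) = 1 + 2 / g) : IsRotationGroupPair a g := by
  wlog hef : e ≤ f generalizing e f
  · exact this hf he (by linear_combination h) (by lia)
  have hg' : (0 : ℚ) < 2 / g := by positivity
  obtain rfl | ha3 : a = 2 ∨ 3 ≤ a := by lia
  · exact Or.inr (Or.inl rfl)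
  obtain rfl | he3 : e = 2 ∨ 3 ≤ e := by lia
  swap
  · have := one_div_natCast_le three_pos ha3
    have := one_div_natCast_le three_pos he3
    have := one_div_natCast_le three_pos (he3.trans hef)
    linarith
  obtain rfl | hf3 : f = 2 ∨ 3 ≤ f := by lia
  · refine Or.inl ?_
    have : (2 / g : ℚ) = 1 / a := by push_cast at h; linarith
    field_simp at this
    exact_mod_cast this.symm
  · exact isRotationGroupPair_of_half ha3 hf3 hg (by push_cast at h; linear_combination h)

lemma isRotationGroupPair_of_two_classes {a e g : ℕ} (ha : 2 ≤ a) (he : 2 ≤ e) (hg : 0 < g)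
    (h : ((1 - 1 / a) / 2 + (1 - 1 / e) : ℚ) = 1 - 1 / g) : IsRotationGroupPair a g := by
  have hg' : (0 : ℚ) < 1 / g := by positivity
  obtain rfl | he3 : e = 2 ∨ 3 ≤ e := by lia
  · refine Or.inl ?_
    have : (1 / g : ℚ) = 1 / a / 2 := by
      push_cast at h
      linarith
    field_simp at this
    exact_mod_cast this.symm.trans (mul_comm _ _)
  · refine Or.inr (Or.inl ?_)
    by_contra ha2
    have := one_div_natCast_le (n := a) three_pos (by lia)
    have := one_div_natCast_le three_pos he3
    push_cast at *
    linarith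

lemma isRotationGroupPair_of_two_densities {a g : ℕ} {d : ℚ} (ha : 2 ≤ a) (hag : 2 * a ≤ g)
    (hd : IsClassDensity d) (h : (1 - 1 / a) / 2 + d = 1 - 1 / g) : IsRotationGroupPair a g := by
  obtain ⟨e, he, rfl | rfl⟩ := hd
  · exact isRotationGroupPair_of_two_classes ha he (by lia) h
  · have inv_g := one_div_natCast_le (by lia) hag
    have inv_two_a : (1 / (2 * a : ℕ) : ℚ) = 1 / a / 2 := by push_cast; field_simp
    have : (0 : ℚ) < 1 / e := by positivity
    have : (0 : ℚ) < 1 / a := by positivity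
    push_cast at *
    linarith

lemma isRotationGroupPair_of_three_densities {a g : ℕ} {d₂ d₃ : ℚ} (ha : 2 ≤ a) (hg : 0 < g)
    (hd₂ : IsClassDensity d₂) (hd₃ : IsClassDensity d₃)
    (h : (1 - 1 / a) / 2 + d₂ + d₃ = 1 - 1 / g) : IsRotationGroupPair a g := by
  have inv_a := one_div_natCast_le two_pos ha
  have inv_g : (0 : ℚ) < 1 / g := by positivity
  have := hd₂.quarter_le
  have := hd₃.quarter_le
  obtain ⟨e, he, rfl | rfl⟩ := hd₂ <;> obtain ⟨f, hf, rfl | rfl⟩ := hd₃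
  on_goal 4 =>
    exact isRotationGroupPair_of_three_classes ha he hf hg (by linear_combination -2 * h)
  all_goals
    have := one_div_natCast_le two_pos he
    have := one_div_natCast_le two_pos hf
    push_cast at *
    linarith

/-- The noncentral elements of `M` fall into disjoint commuting classes, each containing
`(1 - 1 / e) / s` of the elements of `M` with `e ≥ 2` and `s ≤ 2`. So there are at most three
classes, and counting elements gives the equation for the orders of rotation groups. -/
theorem isRotationGroupPair_of_inverted [Finite S] (hS : IsCommTransitive S)
    (hZ : Subgroup.center S ≤ M)
    (hinv : ∀ x ∈ M, x ∉ Subgroup.center S →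
      ∀ g ∈ M, Commute (g * x * g⁻¹) x → g * x * g⁻¹ = x ∨ g * x * g⁻¹ = x⁻¹)
    (hyM : y ∈ M) (hy : y ∉ Subgroup.center S) (hyy : y⁻¹ ≠ y) {n : S} (hn : n ∈ M)
    (hny : n * y * n⁻¹ = y⁻¹) {a g : ℕ}
    (ha : Nat.card (relCentralizer M y) = Nat.card (Subgroup.center S) * a)
    (hg : Nat.card M = Nat.card (Subgroup.center S) * g) : IsRotationGroupPair a g := by
  have density (x : S) (hx : x ∈ (M : Set S) \ Subgroup.center S) :=
    isClassDensity_commDensity hS hZ hx.1 hx.2 (hinv x hx.1 hx.2)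
  have card_conjugators := ncard_conjugators_of_inverted (hinv y hyM hy) hyy hn hny
  have density_y : commDensity M y = (1 - 1 / a) / 2 := by
    exact_mod_cast commDensity_eq_div hS hZ hy two_ne_zero ha card_conjugators
  obtain ⟨a', two_le_a, ha'⟩ := exists_card_relCentralizer_eq hZ hyM hy
  obtain rfl := Nat.eq_of_mul_eq_mul_left Nat.card_pos (ha.symm.trans ha')
  have two_a_le : 2 * a ≤ g := by
    have := two_mul_card_relCentralizer_le card_conjugators
    rw [ha, hg, mul_left_comm] at this
    exact Nat.le_of_mul_le_mul_left this Nat.card_pos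
  have inv_a := one_div_natCast_le two_pos two_le_a
  have g_pos : 0 < g := by lia
  have inv_g : (0 : ℚ) < 1 / g := by positivity
  rcases commDensity_partition hS hZ y hg with
    h | ⟨y₂, hy₂, h | ⟨y₃, hy₃, h | ⟨y₄, hy₄, h⟩⟩⟩
  · have := one_div_natCast_le (by lia) two_a_le
    have : (0 : ℚ) < 1 / a := by positivity
    have inv_two_a : (1 / (2 * a : ℕ) : ℚ) = 1 / a / 2 := by push_cast; field_simp
    push_cast at *
    linarith
  · exact isRotationGroupPair_of_two_densities two_le_a two_a_le (density y₂ hy₂) (density_y ▸ h)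
  · exact isRotationGroupPair_of_three_densities two_le_a g_pos (density y₂ hy₂) (density y₃ hy₃)
      (density_y ▸ h)
  · have := (density y₂ hy₂).quarter_le
    have := (density y₃ hy₃).quarter_le
    have := (density y₄ hy₄).quarter_le
    push_cast at *
    linarith

end Commuting

/-! ### The group `SL(2, F)` and its action on the projective line -/

open OnePoint

/-- The special linear group of degree two. -/
abbrev SL2 (F : Type*) [Field F] := Matrix.SpecialLinearGroup (Fin 2) F

section Matrices

variable {F : Type*} [Field F]

lemma det_eq (g : SL2 F) : g 0 0 * g 1 1 - g 0 1 * g 1 0 = 1 :=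
  (Matrix.det_fin_two _).symm.trans g.det_coe

/-- The matrix with rows `(a, b)` and `(c, d)`. -/
def mk (a b c d : F) (h : a * d - b * c = 1) : SL2 F :=
  ⟨!![a, b; c, d], by rw [Matrix.det_fin_two_of, h]⟩

@[simp] lemma mk_zero_zero (a b c d : F) (h) : (mk a b c d h) 0 0 = a := rfl
@[simp] lemma mk_zero_one (a b c d : F) (h) : (mk a b c d h) 0 1 = b := rfl
@[simp] lemma mk_one_zero (a b c d : F) (h) : (mk a b c d h) 1 0 = c := rfl
@[simp] lemma mk_one_one (a b c d : F) (h) : (mk a b c d h) 1 1 = d := rfl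

lemma ext_entries {g h : SL2 F} (h₀₀ : g 0 0 = h 0 0) (h₀₁ : g 0 1 = h 0 1)
    (h₁₀ : g 1 0 = h 1 0) (h₁₁ : g 1 1 = h 1 1) : g = h := by
  ext i j
  fin_cases i <;> fin_cases j <;> assumption

lemma mul_entry (g h : SL2 F) (i j : Fin 2) : (g * h) i j = g i 0 * h 0 j + g i 1 * h 1 j := by
  simp [Matrix.mul_apply, Fin.sum_univ_two]

lemma inv_zero_zero (g : SL2 F) : g⁻¹ 0 0 = g 1 1 := by
  rw [Matrix.SpecialLinearGroup.SL2_inv_expl]; rfl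
lemma inv_zero_one (g : SL2 F) : g⁻¹ 0 1 = -g 0 1 := by
  rw [Matrix.SpecialLinearGroup.SL2_inv_expl]; rfl
lemma inv_one_zero (g : SL2 F) : g⁻¹ 1 0 = -g 1 0 := by
  rw [Matrix.SpecialLinearGroup.SL2_inv_expl]; rfl
lemma inv_one_one (g : SL2 F) : g⁻¹ 1 1 = g 0 0 := by
  rw [Matrix.SpecialLinearGroup.SL2_inv_expl]; rfl

/-- The upper unitriangular matrix with the given entry. -/
def upper (x : F) : SL2 F := mk 1 x 0 1 (by ring)

/-- The lower unitriangular matrix with the given entry. -/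
def lower (x : F) : SL2 F := mk 1 0 x 1 (by ring)

/-- The diagonal matrix with entries `a` and `a⁻¹`. -/
def diag (a : Fˣ) : SL2 F := mk a 0 0 (a⁻¹ : Fˣ) (by simp)

/-- The Weyl element. -/
def weyl : SL2 F := mk 0 1 (-1) 0 (by ring)

lemma commute_iff (g h : SL2 F) : Commute g h ↔
    g 0 1 * h 1 0 = h 0 1 * g 1 0 ∧ g 0 1 * (h 0 0 - h 1 1) = h 0 1 * (g 0 0 - g 1 1) ∧
      g 1 0 * (h 0 0 - h 1 1) = h 1 0 * (g 0 0 - g 1 1) := by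
  constructor
  · intro hc
    have entry (i j : Fin 2) := congrArg (fun m : SL2 F => m i j) hc.eq
    simp only [mul_entry] at entry
    exact ⟨by linear_combination entry 0 0, by linear_combination -entry 0 1,
      by linear_combination entry 1 0⟩
  · rintro ⟨h1, h2, h3⟩
    apply ext_entries <;> simp only [mul_entry]
    · linear_combination h1
    · linear_combination -h2
    · linear_combination h3
    · linear_combination -h1

lemma mem_center {g : SL2 F} :
    g ∈ Subgroup.center (SL2 F) ↔ g 0 1 = 0 ∧ g 1 0 = 0 ∧ g 0 0 = g 1 1 := by
  rw [Subgroup.mem_center_iff]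
  constructor
  · intro h
    have h₁ := (commute_iff _ _).1 (show Commute (upper 1) g from h (upper 1))
    have h₂ := (commute_iff _ _).1 (show Commute (lower 1) g from h (lower 1))
    simp only [upper, lower, mk_zero_one, mk_one_zero, mk_zero_zero, mk_one_one, one_mul,
      zero_mul, sub_self, mul_zero, mul_one] at h₁ h₂
    exact ⟨h₂.1.symm, h₁.1, sub_eq_zero.1 h₁.2.1⟩
  · rintro ⟨h1, h2, h3⟩ k
    exact (commute_iff k g).2 ⟨by simp [h1, h2], by simp [h1, h3], by simp [h2, h3]⟩

lemma exists_eq_add_mul_of_commute {y z : SL2 F} (hy : y ∉ Subgroup.center (SL2 F))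
    (h : Commute z y) : ∃ α β : F, z 0 0 = α + β * y 0 0 ∧ z 0 1 = β * y 0 1 ∧
      z 1 0 = β * y 1 0 ∧ z 1 1 = α + β * y 1 1 := by
  obtain ⟨h1, h2, h3⟩ := (commute_iff _ _).1 h
  suffices ∃ β : F, z 0 1 = β * y 0 1 ∧ z 1 0 = β * y 1 0 ∧
      z 0 0 - z 1 1 = β * (y 0 0 - y 1 1) by
    obtain ⟨β, h01, h10, hd⟩ := this
    exact ⟨z 0 0 - β * y 0 0, β, by ring, h01, h10, by linear_combination -hd⟩
  rw [mem_center, ← sub_eq_zero (a := y 0 0)] at hy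
  by_cases h01 : y 0 1 = 0
  · by_cases h10 : y 1 0 = 0
    · have hd : y 0 0 - y 1 1 ≠ 0 := fun hd => hy ⟨h01, h10, hd⟩
      exact ⟨(z 0 0 - z 1 1) / (y 0 0 - y 1 1), by field_simp; linear_combination h2,
        by field_simp; linear_combination h3, by field_simp⟩
    · exact ⟨z 1 0 / y 1 0, by field_simp; linear_combination h1, by field_simp,
        by field_simp; linear_combination -h3⟩
  · exact ⟨z 0 1 / y 0 1, by field_simp, by field_simp; linear_combination -h1,
      by field_simp; linear_combination -h2⟩

lemma isCommTransitive : IsCommTransitive (SL2 F) := by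
  intro a b c hb hab hbc
  obtain ⟨α, β, ha⟩ := exists_eq_add_mul_of_commute hb hab
  obtain ⟨γ, δ, hc⟩ := exists_eq_add_mul_of_commute hb hbc.symm
  rw [commute_iff, ha.1, ha.2.1, ha.2.2.1, ha.2.2.2, hc.1, hc.2.1, hc.2.2.1, hc.2.2.2]
  refine ⟨by ring, by ring, by ring⟩

lemma trace_conj (g y : SL2 F) :
    (g * y * g⁻¹) 0 0 + (g * y * g⁻¹) 1 1 = y 0 0 + y 1 1 := by
  simp only [mul_entry, inv_zero_zero, inv_zero_one, inv_one_zero, inv_one_one]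
  linear_combination (y 0 0 + y 1 1) * det_eq g

lemma inv_ne_self_of_trace_sq_ne_four {y : SL2 F} (h : (y 0 0 + y 1 1) ^ 2 ≠ 4) : y⁻¹ ≠ y := by
  intro hy
  have entry (i j : Fin 2) := congrArg (fun m : SL2 F => m i j) hy
  have h00 := entry 0 0
  have h01 := entry 0 1
  simp only [inv_zero_zero, inv_zero_one] at h00 h01
  apply h
  linear_combination 4 * det_eq y - (y 0 0 - y 1 1) * h00 - 2 * y 1 0 * h01

/-- Write the conjugate as `α + β y`. Comparing traces and determinants gives
`(4 - T ^ 2) (β ^ 2 - 1) = 0`, where `T` is the trace of `y`. -/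
lemma conj_eq_or_eq_inv {y : SL2 F} (hy : (y 0 0 + y 1 1) ^ 2 ≠ 4)
    (g : SL2 F) (h : Commute (g * y * g⁻¹) y) : g * y * g⁻¹ = y ∨ g * y * g⁻¹ = y⁻¹ := by
  have trace_eq := trace_conj g y
  generalize g * y * g⁻¹ = z at *
  have hyc : y ∉ Subgroup.center (SL2 F) := fun hyc => by
    obtain ⟨h01, -, hd⟩ := mem_center.1 hyc
    apply hy
    linear_combination 4 * det_eq y + 4 * y 1 0 * h01 + (y 0 0 - y 1 1) * hd
  obtain ⟨α, β, h00, h01, h10, h11⟩ := exists_eq_add_mul_of_commute hyc h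
  have det_z := det_eq z
  have det_y := det_eq y
  rw [h00, h11] at trace_eq
  rw [h00, h01, h10, h11] at det_z
  set T := y 0 0 + y 1 1 with hT
  have e₁ : 2 * α + β * T = T := by linear_combination trace_eq
  have e₂ : α ^ 2 + α * β * T + β ^ 2 = 1 := by linear_combination det_z - β ^ 2 * det_y
  have key : (T ^ 2 - 4) * ((β - 1) * (β + 1)) = 0 := by
    linear_combination (2 * α + β * T + T) * e₁ - 4 * e₂
  have hβ : (β - 1) * (β + 1) = 0 := (mul_eq_zero.1 key).resolve_left (sub_ne_zero.2 hy)
  obtain ⟨rfl, rfl⟩ | ⟨rfl, rfl⟩ : α = 0 ∧ β = 1 ∨ α = T ∧ β = -1 := by grind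
  · left
    apply ext_entries <;> simp_all only [zero_add, one_mul]
  · right
    apply ext_entries <;> simp only [inv_zero_zero, inv_zero_one, inv_one_zero, inv_one_one, *] <;>
      ring

end Matrices

section Line

variable {F : Type*} [Field F]

open scoped Classical in
/-- The action of `SL(2, F)` on the projective line by fractional linear transformations. -/
noncomputable instance lineAction : MulAction (SL2 F) (OnePoint F) :=
  MulAction.compHom _ (Matrix.SpecialLinearGroup.toGL : SL2 F →* GL (Fin 2) F)

lemma smul_infty_eq_self_iff {g : SL2 F} : g • (∞ : OnePoint F) = ∞ ↔ g 1 0 = 0 := by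
  classical exact OnePoint.smul_infty_eq_self_iff

lemma smul_infty_of_ne {g : SL2 F} (h : g 1 0 ≠ 0) :
    g • (∞ : OnePoint F) = (g 0 0 / g 1 0 : F) := by
  classical exact (smul_infty_eq_ite _).trans (if_neg h)

lemma smul_coe_of_ne {g : SL2 F} {t : F} (h : g 1 0 * t + g 1 1 ≠ 0) :
    g • (t : OnePoint F) = ((g 0 0 * t + g 0 1) / (g 1 0 * t + g 1 1) : F) := by
  classical exact smul_some_eq_ite.trans (if_neg h)

lemma smul_coe_eq_self_iff {g : SL2 F} {t : F} :
    g • (t : OnePoint F) = t ↔ g 1 0 * t ^ 2 + (g 1 1 - g 0 0) * t - g 0 1 = 0 := by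
  classical
  have h := Matrix.GeneralLinearGroup.fixpointPolynomial_aeval_eq_zero_iff (c := t)
    (g := Matrix.SpecialLinearGroup.toGL g)
  refine h.symm.trans ?_
  simp [Matrix.GeneralLinearGroup.fixpointPolynomial]

lemma smul_eq_self_of_mem_center {g : SL2 F} (hg : g ∈ Subgroup.center (SL2 F))
    (o : OnePoint F) : g • o = o := by
  obtain ⟨h01, h10, hd⟩ := mem_center.1 hg
  induction o using OnePoint.rec with
  | infty => exact smul_infty_eq_self_iff.2 h10
  | coe t => rw [smul_coe_eq_self_iff, h01, h10, hd]; ring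

lemma smul_eq_self_of_commute {y z : SL2 F} (hy : y ∉ Subgroup.center (SL2 F))
    (h : Commute z y) {o : OnePoint F} (ho : y • o = o) : z • o = o := by
  obtain ⟨α, β, h00, h01, h10, h11⟩ := exists_eq_add_mul_of_commute hy h
  induction o using OnePoint.rec with
  | infty =>
    rw [smul_infty_eq_self_iff] at *
    rw [h10, ho, mul_zero]
  | coe t =>
    rw [smul_coe_eq_self_iff] at *
    rw [h00, h01, h10, h11]
    linear_combination β * ho

lemma upper_smul_infty (x : F) : upper x • (∞ : OnePoint F) = ∞ := smul_infty_eq_self_iff.2 rfl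

lemma upper_smul_coe (x t : F) : upper x • (t : OnePoint F) = (t + x : F) := by
  rw [smul_coe_of_ne (by simp [upper])]
  simp [upper]

lemma weyl_smul_infty : (weyl : SL2 F) • (∞ : OnePoint F) = (0 : F) := by
  rw [smul_infty_of_ne (by simp [weyl])]
  simp [weyl]

lemma diag_smul_infty (a : Fˣ) : diag a • (∞ : OnePoint F) = ∞ := smul_infty_eq_self_iff.2 rfl

lemma diag_smul_coe (a : Fˣ) (t : F) : diag a • (t : OnePoint F) = (a ^ 2 * t : F) := by
  rw [smul_coe_of_ne (by simp [diag])]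
  simp only [diag, mk_zero_zero, mk_zero_one, mk_one_zero, mk_one_one, Units.val_inv_eq_inv_val]
  congr 1
  field_simp
  simp only [mul_zero, add_zero, zero_add]
  ring

lemma exists_smul_infty_eq_and_smul_zero_eq {a b : OnePoint F} (hab : a ≠ b) :
    ∃ g : SL2 F, g • (∞ : OnePoint F) = a ∧ g • ((0 : F) : OnePoint F) = b := by
  have affine (g : SL2 F) {b : OnePoint F} (hb : b ≠ g • ∞) :
      ∃ h : SL2 F, h • (∞ : OnePoint F) = g • ∞ ∧ h • ((0 : F) : OnePoint F) = b := by
    obtain ⟨t, ht⟩ := OnePoint.ne_infty_iff_exists.1 (mt inv_smul_eq_iff.1 hb)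
    refine ⟨g * upper t, by rw [mul_smul, upper_smul_infty], ?_⟩
    rw [mul_smul, upper_smul_coe, zero_add, ht, smul_inv_smul]
  induction a using OnePoint.rec with
  | infty => simpa using affine 1 (b := b) (by simpa using hab.symm)
  | coe t =>
    have smul_eq : (upper t * weyl : SL2 F) • (∞ : OnePoint F) = t := by
      rw [mul_smul, weyl_smul_infty, upper_smul_coe, zero_add]
    rw [← smul_eq] at hab ⊢
    exact affine _ hab.symm

instance isMultiplyPretransitive : MulAction.IsMultiplyPretransitive (SL2 F) (OnePoint F) 2 := by
  rw [MulAction.is_two_pretransitive_iff]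
  intro a b c d hab hcd
  obtain ⟨g, rfl, rfl⟩ := exists_smul_infty_eq_and_smul_zero_eq hab
  obtain ⟨h, rfl, rfl⟩ := exists_smul_infty_eq_and_smul_zero_eq hcd
  exact ⟨h * g⁻¹, by simp [mul_smul], by simp [mul_smul]⟩

instance isPretransitive : MulAction.IsPretransitive (SL2 F) (OnePoint F) :=
  MulAction.isPretransitive_of_is_two_pretransitive

lemma exists_smul_eq_self_of_trace_sq_eq_four [Finite F] {g : SL2 F}
    (hT : (g 0 0 + g 1 1) ^ 2 = 4) : ∃ o : OnePoint F, g • o = o := by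
  by_cases h10 : g 1 0 = 0
  · exact ⟨∞, smul_infty_eq_self_iff.2 h10⟩
  by_cases h2 : (2 : F) = 0
  · have hchar : ringChar F = 2 := CharP.ringChar_of_prime_eq_zero Nat.prime_two h2
    obtain ⟨x, hx⟩ := FiniteField.isSquare_of_char_two hchar (g 0 1 / g 1 0)
    have trace_eq : g 0 0 + g 1 1 = 0 := by
      rw [show (4 : F) = 2 * 2 by norm_num, h2, mul_zero] at hT
      exact pow_eq_zero_iff two_ne_zero |>.1 hT
    refine ⟨(x : F), smul_coe_eq_self_iff.2 ?_⟩
    rw [div_eq_iff h10] at hx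
    linear_combination -hx + x * trace_eq - x * g 0 0 * h2
  · refine ⟨((g 0 0 - g 1 1) / (2 * g 1 0) : F), smul_coe_eq_self_iff.2 ?_⟩
    field_simp
    linear_combination -hT + 4 * det_eq g

/-- After conjugation a fixed point is `∞`; then the diagonal entries `a`, `a⁻¹` satisfy
`(a - a⁻¹) ^ 2 = (a + a⁻¹) ^ 2 - 4 = 0`. -/
lemma exists_eq_conj_upper_of_trace_sq_eq_four [Finite F] {g : SL2 F}
    (hg : g ∉ Subgroup.center (SL2 F)) (hT : (g 0 0 + g 1 1) ^ 2 = 4) :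
    ∃ c ∈ Subgroup.center (SL2 F), ∃ s : SL2 F, ∃ x : F, x ≠ 0 ∧
      g = c * (s * upper x * s⁻¹) := by
  obtain ⟨o, ho⟩ := exists_smul_eq_self_of_trace_sq_eq_four hT
  obtain ⟨s, rfl⟩ := MulAction.exists_smul_eq (SL2 F) (∞ : OnePoint F) o
  obtain ⟨h, rfl⟩ : ∃ h, g = s * h * s⁻¹ := ⟨s⁻¹ * g * s, by group⟩
  rw [trace_conj] at hT
  rw [conj_mem_center_iff] at hg
  have h10 : h 1 0 = 0 := by
    rwa [mul_smul, inv_smul_smul, mul_smul, smul_left_cancel_iff, smul_infty_eq_self_iff] at ho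
  have hd : h 0 0 = h 1 1 := by
    have : (h 0 0 - h 1 1) ^ 2 = 0 := by
      linear_combination hT - 4 * det_eq h - 4 * h 0 1 * h10
    exact sub_eq_zero.1 (pow_eq_zero_iff two_ne_zero |>.1 this)
  have det_h : h 1 1 * h 1 1 = 1 := by
    have := det_eq h
    rwa [h10, hd, mul_zero, sub_zero] at this
  let c : SL2 F := mk (h 1 1) 0 0 (h 1 1) (by rw [det_h]; ring)
  have hc : c ∈ Subgroup.center (SL2 F) := mem_center.2 ⟨rfl, rfl, rfl⟩
  refine ⟨c, hc, s, h 1 1 * h 0 1, fun h0 => hg ?_, ?_⟩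
  · have h01 : h 0 1 = 0 := by linear_combination h 1 1 * h0 - h 0 1 * det_h
    exact mem_center.2 ⟨h01, h10, hd⟩
  · have hh : h = c * upper (h 1 1 * h 0 1) := by
      apply ext_entries <;> simp only [mul_entry, c, upper, mk_zero_zero, mk_zero_one,
        mk_one_zero, mk_one_one]
      · rw [hd]; ring
      · linear_combination -h 0 1 * det_h
      · rw [h10]; ring
      · ring
    conv_lhs => rw [hh]
    rw [← mul_assoc, ← mul_assoc, ← mul_assoc, ← Subgroup.mem_center_iff.1 hc s]

lemma ncard_fixedBy_le_two {g : SL2 F} (hg : g ∉ Subgroup.center (SL2 F)) :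
    (MulAction.fixedBy (OnePoint F) g).ncard ≤ 2 := by
  obtain h | ⟨o, ho⟩ := (MulAction.fixedBy (OnePoint F) g).eq_empty_or_nonempty
  · rw [h, Set.ncard_empty]; exact zero_le
  obtain ⟨s, rfl⟩ := MulAction.exists_smul_eq (SL2 F) (∞ : OnePoint F) o
  obtain ⟨h, rfl⟩ : ∃ h, g = s * h * s⁻¹ := ⟨s⁻¹ * g * s, by group⟩
  rw [conj_mem_center_iff] at hg
  rw [← MulAction.smul_fixedBy, Set.ncard_smul_set]
  have h10 : h 1 0 = 0 := by
    rwa [MulAction.mem_fixedBy, mul_smul, inv_smul_smul, mul_smul, smul_left_cancel_iff,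
      smul_infty_eq_self_iff] at ho
  have finite_fixed (t : F) (ht : h • (t : OnePoint F) = t) :
      t = h 0 1 / (h 1 1 - h 0 0) := by
    rw [smul_coe_eq_self_iff, h10] at ht
    have hd : h 1 1 - h 0 0 ≠ 0 := fun hd =>
      hg (mem_center.2 ⟨by linear_combination t * hd - ht, h10, by linear_combination -hd⟩)
    field_simp
    linear_combination ht
  refine (Set.ncard_le_ncard (t := {∞, ((h 0 1 / (h 1 1 - h 0 0) : F) : OnePoint F)})
    fun o ho => ?_).trans ?_
  swap
  · exact (Set.ncard_insert_le _ _).trans (by rw [Set.ncard_singleton])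
  induction o using OnePoint.rec with
  | infty => exact Or.inl rfl
  | coe t => exact Or.inr (congrArg _ (finite_fixed t ho))

instance [Finite F] : Finite (OnePoint F) := inferInstanceAs (Finite (Option F))

omit [Field F] in
lemma card_line [Finite F] : Nat.card (OnePoint F) = Nat.card F + 1 :=
  Finite.card_option

/-- The Borel subgroup of `SL(2, F)`, as the stabilizer of the point `∞` of the line. -/
noncomputable abbrev borel (F : Type*) [Field F] : Subgroup (SL2 F) :=
  MulAction.stabilizer (SL2 F) (∞ : OnePoint F)

lemma mem_borel {g : SL2 F} : g ∈ borel F ↔ g 1 0 = 0 := smul_infty_eq_self_iff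

lemma upper_mem_borel (x : F) : upper x ∈ borel F := upper_smul_infty x

lemma isCoatom_borel : IsCoatom (borel F) :=
  have : Nontrivial (OnePoint F) := inferInstanceAs (Nontrivial (Option F))
  have : MulAction.IsPreprimitive (SL2 F) (OnePoint F) :=
    MulAction.isPreprimitive_of_is_two_pretransitive isMultiplyPretransitive
  MulAction.IsPreprimitive.isCoatom_stabilizer_of_isPreprimitive (SL2 F) ∞

lemma card_borel : Nat.card (borel F) = Nat.card F * (Nat.card F - 1) := by
  have e : borel F ≃ F × Fˣ :=
    { toFun := fun g => (g.1 0 1, ⟨g.1 0 0, g.1 1 1, by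
          linear_combination det_eq g.1 + g.1 0 1 * mem_borel.1 g.2, by
          linear_combination det_eq g.1 + g.1 0 1 * mem_borel.1 g.2⟩)
      invFun := fun p => ⟨mk p.2 p.1 0 (p.2⁻¹ : Fˣ) (by simp), mem_borel.2 rfl⟩
      left_inv := fun g => Subtype.ext (ext_entries rfl rfl (mem_borel.1 g.2).symm rfl)
      right_inv := fun p => by ext <;> rfl }
  rw [Nat.card_congr e, Nat.card_prod, Nat.card_units]

lemma card_SL2 [Finite F] :
    Nat.card (SL2 F) = (Nat.card F + 1) * (Nat.card F * (Nat.card F - 1)) := by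
  rw [← Subgroup.card_mul_index (borel F), MulAction.index_stabilizer_of_transitive, card_borel,
    card_line, mul_comm]

end Line

section Center

variable {F : Type*} [Field F]

lemma coe_center : (Subgroup.center (SL2 F) : Set (SL2 F)) = {1, -1} := by
  ext g
  refine mem_center.trans ⟨fun ⟨h01, h10, hd⟩ => ?_, ?_⟩
  · have : (g 1 1 - 1) * (g 1 1 + 1) = 0 := by
      linear_combination det_eq g + g 0 1 * h10 - g 1 1 * hd
    obtain h | h := mul_eq_zero.1 this
    · have h11 : g 1 1 = 1 := sub_eq_zero.1 h
      exact Or.inl (ext_entries (hd.trans h11) h01 h10 h11)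
    · have h11 : g 1 1 = -1 := eq_neg_of_add_eq_zero_left h
      exact Or.inr (ext_entries (by simp [hd, h11]) (by simp [h01]) (by simp [h10]) (by simp [h11]))
  · rintro (rfl | rfl) <;> simp

lemma card_center_of_two_eq_zero (h2 : (2 : F) = 0) :
    Nat.card (Subgroup.center (SL2 F)) = 1 := by
  have neg_one_eq : (-1 : F) = 1 := by linear_combination -h2
  have : (-1 : SL2 F) = 1 := by apply ext_entries <;> simp [neg_one_eq]
  rw [← SetLike.coe_sort_coe, coe_center, this, Set.pair_eq_singleton, Nat.card_unique]

lemma card_center_of_two_ne_zero (h2 : (2 : F) ≠ 0) :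
    Nat.card (Subgroup.center (SL2 F)) = 2 := by
  have : (1 : SL2 F) ≠ -1 := fun h => h2 <| by
    have h00 : (1 : F) = -1 := congrArg (fun m : SL2 F => m 0 0) h
    linear_combination h00
  rw [← SetLike.coe_sort_coe, coe_center, Nat.card_coe_set_eq, Set.ncard_pair this]

lemma two_eq_zero_iff_even_card [Finite F] : (2 : F) = 0 ↔ Even (Nat.card F) := by
  have := Fintype.ofFinite F
  rw [Nat.card_eq_fintype_card, Nat.even_iff, ← FiniteField.even_card_iff_char_two]
  refine ⟨CharP.ringChar_of_prime_eq_zero Nat.prime_two, fun h => ?_⟩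
  have := ringChar.Nat.cast_ringChar (R := F)
  rwa [h] at this

end Center

/-! ### Subgroups without transvections -/

section Unipotent

variable {F : Type*} [Field F] {M : Subgroup (SL2 F)}

lemma upper_mul_upper (x y : F) : upper x * upper y = upper (x + y) := by
  apply ext_entries <;> simp [mul_entry, upper, add_comm]

lemma upper_zero : upper (0 : F) = 1 := by
  apply ext_entries <;> simp [upper]

lemma upper_inv (x : F) : (upper x)⁻¹ = upper (-x) :=
  inv_eq_of_mul_eq_one_right (by rw [upper_mul_upper, add_neg_cancel, upper_zero])

lemma diag_conj_upper (a : Fˣ) (x : F) :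
    diag a * upper x * (diag a)⁻¹ = upper ((a : F) ^ 2 * x) := by
  rw [mul_inv_eq_iff_eq_mul]
  apply ext_entries <;> simp [mul_entry, upper, diag]
  field_simp

lemma trace_sq_ne_four_of_no_transvection [Finite F] (hZ : Subgroup.center (SL2 F) ≤ M)
    (hU : ∀ s x, s * upper x * s⁻¹ ∈ M → x = 0) {y : SL2 F} (hyM : y ∈ M)
    (hy : y ∉ Subgroup.center (SL2 F)) : (y 0 0 + y 1 1) ^ 2 ≠ 4 := fun hT => by
  obtain ⟨c, hc, s, x, hx, rfl⟩ := exists_eq_conj_upper_of_trace_sq_eq_four hy hT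
  exact hx (hU s x ((M.mul_mem_cancel_left (hZ hc)).1 hyM))

lemma isRotationGroupPair_of_no_transvection [Finite F] (hZ : Subgroup.center (SL2 F) ≤ M)
    (hU : ∀ s x, s * upper x * s⁻¹ ∈ M → x = 0) {y n : SL2 F} (hyM : y ∈ M)
    (hy : y ∉ Subgroup.center (SL2 F)) (hn : n ∈ M) (hny : n * y * n⁻¹ = y⁻¹) {a g : ℕ}
    (ha : Nat.card (relCentralizer M y) = Nat.card (Subgroup.center (SL2 F)) * a)
    (hg : Nat.card M = Nat.card (Subgroup.center (SL2 F)) * g) : IsRotationGroupPair a g :=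
  have trace_ne {x : SL2 F} (hxM : x ∈ M) (hx : x ∉ Subgroup.center (SL2 F)) :=
    trace_sq_ne_four_of_no_transvection hZ hU hxM hx
  isRotationGroupPair_of_inverted isCommTransitive hZ
    (fun _ hxM hx g _ hc => conj_eq_or_eq_inv (trace_ne hxM hx) g hc) hyM hy
    (inv_ne_self_of_trace_sq_ne_four (trace_ne hyM hy)) hn hny ha hg

end Unipotent

/-! ### Overgroups of the normalizer of a split torus -/

section Split

variable {F : Type*} [Field F] {M : Subgroup (SL2 F)}

/-- The squares generate a finite field additively. -/
lemma upper_mem_of_diag_mem [Finite F] (hT : ∀ a, diag a ∈ M) {x : F} (hx : x ≠ 0)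
    (hux : upper x ∈ M) (y : F) : upper y ∈ M := by
  have sq_mem (a : F) : upper (a ^ 2 * x) ∈ M := by
    obtain rfl | ha := eq_or_ne a 0
    · simp [upper_zero]
    · rw [← Units.val_mk0 ha, ← diag_conj_upper]
      exact M.mul_mem (M.mul_mem (hT _) hux) (M.inv_mem (hT _))
  by_cases h2 : (2 : F) = 0
  · have hchar : ringChar F = 2 := CharP.ringChar_of_prime_eq_zero Nat.prime_two h2
    obtain ⟨a, ha⟩ := FiniteField.isSquare_of_char_two hchar (y / x)
    have eq_sq : y = a ^ 2 * x := by rw [pow_two, ← ha, div_mul_cancel₀ y hx]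
    exact eq_sq ▸ sq_mem a
  · have eq_sub : y = ((y / x + 1) / 2) ^ 2 * x + -(((y / x - 1) / 2) ^ 2 * x) := by
      field_simp
      ring
    rw [eq_sub, ← upper_mul_upper, ← upper_inv]
    exact M.mul_mem (sq_mem _) (M.inv_mem (sq_mem _))

lemma exists_eq_upper_mul_diag {g : SL2 F} (hg : g ∈ borel F) :
    ∃ x a, g = upper x * diag a := by
  have h10 := mem_borel.1 hg
  have hd : g 0 0 * g 1 1 = 1 := by linear_combination det_eq g + g 0 1 * h10
  refine ⟨g 0 1 * g 0 0, ⟨g 0 0, g 1 1, hd, by rw [mul_comm, hd]⟩, ?_⟩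
  apply ext_entries <;> simp [mul_entry, upper, diag, h10, mul_assoc, hd]

lemma exists_conj_upper_eq {s k : SL2 F} (h : k • ∞ = s • (∞ : OnePoint F)) :
    ∃ a : Fˣ, ∀ x, k⁻¹ * (s * upper x * s⁻¹) * k = upper ((a : F) ^ 2 * x) := by
  obtain ⟨y, a, hy⟩ := exists_eq_upper_mul_diag (g := k⁻¹ * s)
    (by rw [MulAction.mem_stabilizer_iff, mul_smul, ← h, inv_smul_smul])
  refine ⟨a, fun x => ?_⟩
  calc k⁻¹ * (s * upper x * s⁻¹) * k
      = k⁻¹ * s * upper x * (k⁻¹ * s)⁻¹ := by group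
    _ = upper y * (diag a * upper x * (diag a)⁻¹) * (upper y)⁻¹ := by rw [hy]; group
    _ = upper ((a : F) ^ 2 * x) := by
      rw [diag_conj_upper, upper_inv, upper_mul_upper, upper_mul_upper]
      congr 1
      ring

lemma exists_conj_upper_mem_iff (htrans : MulAction.orbit M (∞ : OnePoint F) = Set.univ)
    (s : SL2 F) : ∃ a : Fˣ, ∀ x, s * upper x * s⁻¹ ∈ M ↔ upper ((a : F) ^ 2 * x) ∈ M := by
  obtain ⟨⟨k, hk⟩, hks⟩ : s • ∞ ∈ MulAction.orbit M (∞ : OnePoint F) := by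
    rw [htrans]; trivial
  obtain ⟨a, ha⟩ := exists_conj_upper_eq (s := s) (k := k) hks
  refine ⟨a, fun x => ?_⟩
  rw [← ha, M.mul_mem_cancel_right hk, M.mul_mem_cancel_left (M.inv_mem hk)]

lemma eq_zero_of_conj_upper_mem (htrans : MulAction.orbit M (∞ : OnePoint F) = Set.univ)
    (hU : ∀ x, upper x ∈ M → x = 0) {s : SL2 F} {x : F} (h : s * upper x * s⁻¹ ∈ M) : x = 0 := by
  obtain ⟨a, ha⟩ := exists_conj_upper_mem_iff htrans s
  simpa using hU _ ((ha x).1 h)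

lemma borel_le (hT : ∀ a, diag a ∈ M) (hU : ∀ x, upper x ∈ M) : borel F ≤ M := fun g hg => by
  obtain ⟨x, a, rfl⟩ := exists_eq_upper_mul_diag hg
  exact M.mul_mem (hU x) (hT a)

lemma center_le_of_diag_mem (hT : ∀ a, diag a ∈ M) : Subgroup.center (SL2 F) ≤ M := by
  have neg_one_eq : (-1 : SL2 F) = diag (-1) := by apply ext_entries <;> simp [diag]
  rw [← SetLike.coe_subset_coe, coe_center, Set.pair_subset_iff, neg_one_eq]
  exact ⟨M.one_mem, hT _⟩

lemma weyl_notMem_borel : (weyl : SL2 F) ∉ borel F := by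
  rw [mem_borel]
  simp [weyl]

lemma eq_zero_of_upper_mem [Finite F] (hT : ∀ a, diag a ∈ M) (hw : weyl ∈ M) (hM : M ≠ ⊤)
    {x : F} (hx : upper x ∈ M) : x = 0 := by
  by_contra hx0
  have hB := borel_le hT (upper_mem_of_diag_mem hT hx0 hx)
  rcases isCoatom_borel.le_iff.1 hB with h | h
  · exact hM h
  · exact weyl_notMem_borel (h ▸ hw)

lemma exists_eq_diag_of_mem (hT : ∀ a, diag a ∈ M) (hU : ∀ x, upper x ∈ M → x = 0) {g : SL2 F}
    (hg : g ∈ M) (hgB : g ∈ borel F) : ∃ a, g = diag a := by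
  obtain ⟨x, a, rfl⟩ := exists_eq_upper_mul_diag hgB
  obtain rfl := hU x ((M.mul_mem_cancel_right (hT a)).1 hg)
  exact ⟨a, by rw [upper_zero, one_mul]⟩

lemma diag_injective : Function.Injective (diag : Fˣ → SL2 F) := fun _ _ h =>
  Units.ext (congrArg (fun m : SL2 F => m 0 0) h)

lemma card_eq_ncard_orbit_mul (hT : ∀ a, diag a ∈ M) (hU : ∀ x, upper x ∈ M → x = 0) :
    Nat.card M = (MulAction.orbit M (∞ : OnePoint F)).ncard * (Nat.card F - 1) := by
  have card_stabilizer : Nat.card (MulAction.stabilizer M (∞ : OnePoint F)) = Nat.card F - 1 := by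
    rw [← Nat.card_units]
    refine (Nat.card_eq_of_bijective (fun a : Fˣ => (⟨⟨diag a, hT a⟩, diag_smul_infty a⟩ :
      MulAction.stabilizer M (∞ : OnePoint F))) ⟨fun a b hab => ?_, ?_⟩).symm
    · exact diag_injective (congrArg (fun m => m.1.1) hab)
    · rintro ⟨⟨g, hg⟩, hgB⟩
      obtain ⟨a, rfl⟩ := exists_eq_diag_of_mem hT hU hg hgB
      exact ⟨a, rfl⟩
  rw [← card_stabilizer, ← MulAction.index_stabilizer, mul_comm, Subgroup.card_mul_index]

lemma card_sub_one_le_two_mul_ncard [Finite F] {A : Set (OnePoint F)}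
    (hA : ∀ o ∈ A, ∀ a : Fˣ, diag a • o ∈ A) (hinf : ∞ ∉ A) (hzero : ((0 : F) : OnePoint F) ∉ A)
    (hne : A.Nonempty) : Nat.card F - 1 ≤ 2 * A.ncard := by
  classical
  have := Fintype.ofFinite F
  have : Fintype (OnePoint F) := Fintype.ofFinite _
  obtain ⟨o, ho⟩ := hne
  obtain ⟨t, rfl⟩ := OnePoint.ne_infty_iff_exists.1 (ne_of_mem_of_not_mem ho hinf)
  have ht : t ≠ 0 := by rintro rfl; exact hzero ho
  have card_fiber_le (b : OnePoint F) :
      (Finset.univ.filter fun a : Fˣ => diag a • (t : OnePoint F) = b).card ≤ 2 := by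
    obtain h | ⟨a, ha⟩ := (Finset.univ.filter
      fun a : Fˣ => diag a • (t : OnePoint F) = b).eq_empty_or_nonempty
    · rw [h, Finset.card_empty]; exact zero_le
    refine (Finset.card_le_card fun c hc => ?_).trans (Finset.card_le_two (a := a) (b := -a))
    simp only [Finset.mem_filter_univ, diag_smul_coe] at ha hc
    have sq_eq : (c : F) ^ 2 = (a : F) ^ 2 :=
      mul_right_cancel₀ ht (OnePoint.coe_injective (hc.trans ha.symm))
    simpa [Units.ext_iff] using sq_eq_sq_iff_eq_or_eq_neg.1 sq_eq
  have := Finset.card_le_mul_card_image_of_maps_to (s := Finset.univ) (t := A.toFinset)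
    (f := fun a : Fˣ => diag a • (t : OnePoint F)) (fun a _ => by simpa using hA _ ho a) 2
    fun b _ => card_fiber_le b
  rwa [Finset.card_univ, ← Nat.card_eq_fintype_card, Nat.card_units,
    ← Set.ncard_eq_toFinset_card'] at this

/-- Both `O \ {∞, 0}` and the complement of `O` are empty or of size at least `(q - 1) / 2`. -/
lemma ncard_eq_of_diag_smul_mem [Finite F] {O : Set (OnePoint F)}
    (hO : ∀ o ∈ O, ∀ a : Fˣ, diag a • o ∈ O) (hinf : ∞ ∈ O) (hzero : ((0 : F) : OnePoint F) ∈ O) :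
    O.ncard = 2 ∨ 2 * O.ncard = Nat.card F + 3 ∨ O = Set.univ := by
  have smul_mem_iff (o : OnePoint F) (a : Fˣ) : diag a • o ∈ O ↔ o ∈ O := by
    refine ⟨fun h => ?_, fun h => hO o h a⟩
    have inv_eq : (diag a)⁻¹ = diag a⁻¹ := by
      apply ext_entries <;>
        simp [diag, inv_zero_zero, inv_zero_one, inv_one_zero, inv_one_one]
    rw [← inv_smul_smul (diag a) o, inv_eq]
    exact hO _ h _
  have pair_stable (a : Fˣ) (o : OnePoint F) (ho : o ∉ ({∞, ((0 : F) : OnePoint F)} : Set _)) :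
      diag a • o ∉ ({∞, ((0 : F) : OnePoint F)} : Set (OnePoint F)) := by
    have smul_zero : diag a • ((0 : F) : OnePoint F) = (0 : F) := by
      rw [diag_smul_coe, mul_zero]
    rintro (h | h)
    · exact ho (Or.inl (smul_left_cancel _ (h.trans (diag_smul_infty a).symm)))
    · exact ho (Or.inr (smul_left_cancel _ (h.trans smul_zero.symm)))
  have card_pair : ({∞, ((0 : F) : OnePoint F)} : Set (OnePoint F)).ncard = 2 :=
    Set.ncard_pair (OnePoint.infty_ne_coe _)
  have card_sdiff := Set.ncard_sdiff_add_ncard_of_subset (s := {∞, ((0 : F) : OnePoint F)}) (t := O)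
    (Set.pair_subset hinf hzero)
  have card_compl := Set.ncard_add_ncard_compl O
  rw [card_line] at card_compl
  obtain h | h := (O \ {∞, ((0 : F) : OnePoint F)}).eq_empty_or_nonempty
  · left
    rw [← card_sdiff, h, Set.ncard_empty, card_pair]
  obtain h' | h' := Oᶜ.eq_empty_or_nonempty
  · exact Or.inr (Or.inr (Set.compl_empty_iff.1 h'))
  have le₁ := card_sub_one_le_two_mul_ncard (A := O \ {∞, ((0 : F) : OnePoint F)})
    (fun o ho a => ⟨hO o ho.1 a, pair_stable a o ho.2⟩) (by simp) (by simp) h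
  have le₂ := card_sub_one_le_two_mul_ncard (A := Oᶜ)
    (fun o ho a => mt (smul_mem_iff o a).1 ho) (not_not.2 hinf) (not_not.2 hzero) h'
  lia

lemma card_relCentralizer_diag (hT : ∀ a, diag a ∈ M) {a : Fˣ} (ha : a ^ 2 ≠ 1) :
    Nat.card (relCentralizer M (diag a)) = Nat.card F - 1 := by
  have hd : ((a : F) - (a⁻¹ : Fˣ)) ≠ 0 := fun h => ha <| by
    rw [pow_two, mul_eq_one_iff_eq_inv]
    exact Units.ext (sub_eq_zero.1 h)
  rw [← Nat.card_units]
  refine (Nat.card_eq_of_bijective (fun b : Fˣ => (⟨diag b, mem_relCentralizer.2 ⟨hT b, ?_⟩⟩ :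
    relCentralizer M (diag a))) ⟨fun b c h => ?_, ?_⟩).symm
  · simp [commute_iff, diag]
  · exact diag_injective (congrArg Subtype.val h)
  · rintro ⟨g, hg⟩
    obtain ⟨-, h01, h10⟩ := (commute_iff _ _).1 (mem_relCentralizer.1 hg).2
    simp only [diag, mk_zero_zero, mk_zero_one, mk_one_zero, mk_one_one, zero_mul, mul_eq_zero,
      hd, or_false] at h01 h10
    have hgd : g 0 0 * g 1 1 = 1 := by linear_combination det_eq g + g 0 1 * h10
    refine ⟨⟨g 0 0, g 1 1, hgd, by rw [mul_comm, hgd]⟩, Subtype.ext ?_⟩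
    apply ext_entries <;> simp [diag, h01, h10]

lemma weyl_conj_diag (a : Fˣ) : weyl * diag a * weyl⁻¹ = (diag a)⁻¹ := by
  rw [mul_inv_eq_iff_eq_mul]
  apply ext_entries <;>
    simp [mul_entry, weyl, diag, inv_zero_zero, inv_zero_one, inv_one_zero, inv_one_one]

lemma exists_sq_ne_one [Finite F] (hq : 4 ≤ Nat.card F) : ∃ a : Fˣ, a ^ 2 ≠ 1 := by
  classical
  have := Fintype.ofFinite F
  by_contra! h
  have le_two : (Finset.univ : Finset Fˣ).card ≤ 2 := by
    refine (Finset.card_le_card fun a _ => ?_).trans (Finset.card_le_two (a := 1) (b := -1))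
    have sq_eq : (a : F) ^ 2 = 1 := by rw [← Units.val_pow_eq_pow_val, h a, Units.val_one]
    rw [Finset.mem_insert, Finset.mem_singleton, Units.ext_iff, Units.ext_iff]
    simpa using sq_eq
  rw [Finset.card_univ, ← Nat.card_eq_fintype_card, Nat.card_units] at le_two
  lia

lemma diag_mem_center_iff {a : Fˣ} : diag a ∈ Subgroup.center (SL2 F) ↔ a ^ 2 = 1 := by
  rw [mem_center, pow_two, mul_eq_one_iff_eq_inv, Units.ext_iff]
  simp [diag]

lemma two_ne_zero_of_transitive_split [Finite F] (hq : 4 ≤ Nat.card F) (hw : weyl ∈ M)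
    (hcard : Nat.card M = (Nat.card F + 1) * (Nat.card F - 1)) : (2 : F) ≠ 0 := fun h2 => by
  obtain ⟨c, hc⟩ := two_eq_zero_iff_even_card.1 h2
  have order_weyl : orderOf (⟨weyl, hw⟩ : M) = 2 := by
    refine orderOf_eq_prime (Subtype.ext ?_) fun h => ?_
    · apply ext_entries <;> simp [pow_two, mul_entry, weyl] <;> linear_combination -h2
    · simpa [weyl] using congrArg (fun m : M => (m.1 : SL2 F) 0 0) h
  have := orderOf_dvd_natCard (⟨weyl, hw⟩ : M)
  rw [order_weyl, hcard, Nat.prime_two.dvd_mul] at this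
  lia

/-- Transitivity conjugates a transvection of `M` into the stabilizer of `∞`, which contains none,
so that `M` modulo the centre is a rotation group. -/
lemma card_of_transitive_split [Finite F] (hq : 4 ≤ Nat.card F) (hT : ∀ a, diag a ∈ M)
    (hw : weyl ∈ M) (hU : ∀ x, upper x ∈ M → x = 0)
    (htrans : MulAction.orbit M (∞ : OnePoint F) = Set.univ) :
    Nat.card F = 5 ∨ Nat.card F = 7 ∨ Nat.card F = 11 := by
  have hcard := card_eq_ncard_orbit_mul hT hU
  rw [htrans, Set.ncard_univ, card_line] at hcard
  have h2 := two_ne_zero_of_transitive_split hq hw hcard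
  obtain ⟨b, hb⟩ : Odd (Nat.card F) := by
    rwa [← Nat.not_even_iff_odd, ← two_eq_zero_iff_even_card]
  obtain ⟨a, ha⟩ := exists_sq_ne_one hq
  have hz := card_center_of_two_ne_zero h2
  have pair := isRotationGroupPair_of_no_transvection (a := b) (g := (Nat.card F + 1) * b)
    (center_le_of_diag_mem hT)
    (fun s x hs => eq_zero_of_conj_upper_mem htrans hU hs) (hT a) (mt diag_mem_center_iff.1 ha) hw
    (weyl_conj_diag a) (by rw [card_relCentralizer_diag hT ha, hz]; lia)
    (by rw [hcard, hz, mul_left_comm, show Nat.card F - 1 = 2 * b by lia])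
  rcases pair with h | h | ⟨h, -⟩ | ⟨rfl, h⟩ | ⟨h, -⟩
  · have := Nat.eq_of_mul_eq_mul_right (show 0 < b by lia) h
    lia
  all_goals lia

lemma card_of_intransitive_split [Finite F] (hq : 4 ≤ Nat.card F) (hT : ∀ a, diag a ∈ M)
    (hU : ∀ x, upper x ∈ M → x = 0)
    (horb : 2 * (MulAction.orbit M (∞ : OnePoint F)).ncard = Nat.card F + 3) :
    Nat.card F = 9 ∧ Nat.card M = 48 := by
  have hcard := card_eq_ncard_orbit_mul hT hU
  have card_dvd := Subgroup.card_subgroup_dvd_card M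
  rw [card_SL2, hcard, ← mul_assoc] at card_dvd
  generalize (MulAction.orbit M (∞ : OnePoint F)).ncard = ω at *
  generalize Nat.card F = q at *
  have orbit_dvd : q + 3 ∣ 2 * ((q + 1) * q) :=
    horb ▸ Nat.mul_dvd_mul_left 2 (Nat.dvd_of_mul_dvd_mul_right (by lia) card_dvd)
  have dvd_twelve : q + 3 ∣ 12 := by
    zify at orbit_dvd ⊢
    have : (12 : ℤ) = 2 * ((q + 1) * q) - (q + 3) * (2 * q - 4) := by ring
    rw [this]
    exact dvd_sub orbit_dvd (dvd_mul_right _ _)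
  have := Nat.le_of_dvd (by norm_num) dvd_twelve
  have : q ≤ 9 := by lia
  obtain rfl : q = 9 := by interval_cases q <;> lia
  obtain rfl : ω = 6 := by lia
  exact ⟨rfl, hcard⟩

lemma card_of_split [Finite F] (hq : 4 ≤ Nat.card F) (hT : ∀ a, diag a ∈ M)
    (hw : weyl ∈ M) (hM : M ≠ ⊤) :
    Nat.card M = 2 * (Nat.card F - 1) ∨ (Nat.card F = 9 ∧ Nat.card M = 48) ∨
      ((Nat.card F = 5 ∨ Nat.card F = 7 ∨ Nat.card F = 11) ∧
        Nat.card M = (Nat.card F - 1) * (Nat.card F + 1)) := by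
  have hU (x : F) (hx : upper x ∈ M) : x = 0 := eq_zero_of_upper_mem hT hw hM hx
  have hcard := card_eq_ncard_orbit_mul hT hU
  rcases ncard_eq_of_diag_smul_mem (O := MulAction.orbit M (∞ : OnePoint F))
    (fun o ho a => MulAction.mem_orbit_of_mem_orbit (⟨diag a, hT a⟩ : M) ho)
    (MulAction.mem_orbit_self _) ⟨⟨weyl, hw⟩, weyl_smul_infty⟩ with h | h | h
  · left
    rw [hcard, h]
  · exact Or.inr (Or.inl (card_of_intransitive_split hq hT hU h))
  · refine Or.inr (Or.inr ⟨card_of_transitive_split hq hT hw hU h, ?_⟩)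
    rw [hcard, h, Set.ncard_univ, card_line, mul_comm]

end Split

/-! ### Extended centralizers -/

section ExtendedCentralizer

variable {S : Type*} [Group S]

/-- The extended centralizer of `y`: the elements that fix or invert `y` by conjugation. -/
def extendedCentralizer (y : S) : Subgroup S where
  carrier := {g | g * y * g⁻¹ = y ∨ g * y * g⁻¹ = y⁻¹}
  one_mem' := by simp
  inv_mem' := by
    rintro g (h | h)
    · exact Or.inl (by nth_rewrite 1 [← h]; group)
    · have := congrArg (fun t => g⁻¹ * t⁻¹ * g) h.symm
      exact Or.inr (by simpa [mul_assoc] using this)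
  mul_mem' := by
    rintro g g' hg (h' | h') <;>
      simp only [Set.mem_ofPred_eq,
        show g * g' * y * (g * g')⁻¹ = g * (g' * y * g'⁻¹) * g⁻¹ by group,
        h', ← conj_inv, inv_eq_iff_eq_inv, inv_inv] at hg ⊢
    · exact hg
    · exact hg.symm

variable {M : Subgroup S} {y g : S}

lemma mem_extendedCentralizer :
    g ∈ extendedCentralizer y ↔ g * y * g⁻¹ = y ∨ g * y * g⁻¹ = y⁻¹ := Iff.rfl

lemma mem_extendedCentralizer_of_commute (h : Commute g y) : g ∈ extendedCentralizer y :=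
  Or.inl h.mul_inv_cancel

lemma center_le_extendedCentralizer : Subgroup.center S ≤ extendedCentralizer y :=
  fun _ hz => mem_extendedCentralizer_of_commute (Subgroup.mem_center_iff.1 hz y).symm

lemma relCentralizer_eq_of_extendedCentralizer_le (hM : extendedCentralizer y ≤ M) :
    relCentralizer M y = Subgroup.centralizer {y} :=
  inf_eq_right.2 fun _ hg => hM <| mem_extendedCentralizer_of_commute <|
    Subgroup.mem_centralizer_singleton_iff.1 hg

lemma conjugators_eq_of_extendedCentralizer_le
    (hinv : ∀ g, Commute (g * y * g⁻¹) y → g * y * g⁻¹ = y ∨ g * y * g⁻¹ = y⁻¹)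
    (hM : extendedCentralizer y ≤ M) : conjugators M y = extendedCentralizer y := by
  ext g
  refine ⟨fun h => hinv g h.2, fun h => ⟨hM h, ?_⟩⟩
  rcases h with h | h <;> rw [h]
  exact (Commute.refl y).inv_left

lemma card_extendedCentralizer [Finite S]
    (hinv : ∀ g, Commute (g * y * g⁻¹) y → g * y * g⁻¹ = y ∨ g * y * g⁻¹ = y⁻¹)
    (hy : y⁻¹ ≠ y) {n : S} (hny : n * y * n⁻¹ = y⁻¹) :
    Nat.card (extendedCentralizer y) = 2 * Nat.card (Subgroup.centralizer {y}) := by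
  rw [← relCentralizer_eq_of_extendedCentralizer_le le_rfl,
    ← ncard_conjugators_of_inverted (fun g _ => hinv g) hy (Or.inr hny) hny,
    conjugators_eq_of_extendedCentralizer_le hinv le_rfl, ← Nat.card_coe_set_eq,
    SetLike.coe_sort_coe]

end ExtendedCentralizer

/-! ### Nonsplit tori -/

section Nonsplit

variable {F : Type*} [Field F] {τ : F}

/-- `τ` is the trace of an element of `SL₂(F)` without eigenvalues in `F`. -/
def IsNonsplitTrace (τ : F) : Prop := ∀ x : F, x ^ 2 + τ * x + 1 ≠ 0

lemma exists_isNonsplitTrace [Finite F] : ∃ τ : F, IsNonsplitTrace τ := by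
  have not_surjective : ¬ Function.Surjective (fun a : Fˣ => -((a : F) + (a⁻¹ : Fˣ))) := by
    intro h
    have := Nat.card_le_card_of_surjective _ h
    rw [Nat.card_units] at this
    have := Nat.card_pos (α := F)
    lia
  simp only [Function.Surjective, not_forall, not_exists] at not_surjective
  obtain ⟨τ, hτ⟩ := not_surjective
  refine ⟨τ, fun x hx => ?_⟩
  have hx0 : x ≠ 0 := by rintro rfl; simp at hx
  apply hτ (Units.mk0 x hx0)
  simp only [Units.val_mk0, Units.val_inv_eq_inv_val]
  field_simp
  linear_combination -hx

/-- The companion matrix of `X² - τ X + 1`. -/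
def companion (τ : F) : SL2 F := mk 0 (-1) 1 τ (by ring)

lemma companion_notMem_center : companion τ ∉ Subgroup.center (SL2 F) := fun h =>
  one_ne_zero (mem_center.1 h).2.1

lemma companion_smul_ne (hτ : IsNonsplitTrace τ) (o : OnePoint F) : companion τ • o ≠ o := by
  induction o using OnePoint.rec with
  | infty => simp [smul_infty_eq_self_iff, companion]
  | coe t =>
    rw [Ne, smul_coe_eq_self_iff]
    simp only [companion, mk_zero_zero, mk_zero_one, mk_one_zero, mk_one_one]
    exact fun h => hτ t (by linear_combination h)

lemma trace_companion_sq_ne_four [Finite F] (hτ : IsNonsplitTrace τ) :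
    (companion τ 0 0 + companion τ 1 1) ^ 2 ≠ 4 := fun h => by
  obtain ⟨o, ho⟩ := exists_smul_eq_self_of_trace_sq_eq_four h
  exact companion_smul_ne hτ o ho

lemma commute_companion_iff {g : SL2 F} :
    Commute g (companion τ) ↔ g 0 1 = -g 1 0 ∧ g 1 1 = g 0 0 + τ * g 1 0 := by
  rw [commute_iff]
  simp only [companion, mk_zero_zero, mk_zero_one, mk_one_zero, mk_one_one]
  constructor
  · rintro ⟨h₁, -, h₃⟩
    exact ⟨by linear_combination h₁, by linear_combination h₃⟩
  · rintro ⟨h₁, h₂⟩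
    rw [h₁, h₂]
    refine ⟨?_, ?_, ?_⟩ <;> ring

/-- The norm of `a + c y`, where `y` is a root of `X² - τ X + 1`. -/
def normForm (τ a c : F) : F := a ^ 2 + τ * a * c + c ^ 2

lemma normForm_eq_zero_iff (hτ : IsNonsplitTrace τ) {a c : F} :
    normForm τ a c = 0 ↔ a = 0 ∧ c = 0 := by
  refine ⟨fun h => ?_, fun h => by simp [normForm, h]⟩
  rw [normForm] at h
  by_cases hc : c = 0
  · subst hc
    simpa using h
  · refine absurd ?_ (hτ (a / c))
    field_simp
    linear_combination h

open Polynomial in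
lemma exists_normForm_eq [Finite F] (hτ : IsNonsplitTrace τ) (d : F) :
    ∃ a c, normForm τ a c = d := by
  have := Fintype.ofFinite F
  by_cases h2 : (2 : F) = 0
  · obtain ⟨a, rfl⟩ := FiniteField.isSquare_of_char_two
      (CharP.ringChar_of_prime_eq_zero Nat.prime_two h2) d
    exact ⟨a, 0, by rw [normForm]; ring⟩
  obtain ⟨σ, rfl⟩ : ∃ σ, τ = 2 * σ := ⟨τ / 2, by field_simp⟩
  have discr_ne : 1 - σ ^ 2 ≠ 0 := fun h => hτ (-σ) (by linear_combination h)
  have card_odd : Fintype.card F % 2 = 1 := by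
    rwa [← Nat.odd_iff, ← Nat.not_even_iff_odd, ← Nat.card_eq_fintype_card,
      ← two_eq_zero_iff_even_card]
  obtain ⟨x, c, hxc⟩ := FiniteField.exists_root_sum_quadratic
    (f := C 1 * X ^ 2 + C 0 * X + C 0) (g := C (1 - σ ^ 2) * X ^ 2 + C 0 * X + C (-d))
    (degree_quadratic one_ne_zero) (degree_quadratic discr_ne) card_odd
  simp only [eval_add, eval_mul, eval_C, eval_pow, eval_X] at hxc
  refine ⟨x - σ * c, c, ?_⟩
  rw [normForm]
  linear_combination hxc

lemma normForm_mul {g : SL2 F} (hg : Commute g (companion τ)) (a c : F) :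
    normForm τ (g 0 0 * a + g 0 1 * c) (g 1 0 * a + g 1 1 * c) = normForm τ a c := by
  obtain ⟨h01, h11⟩ := commute_companion_iff.1 hg
  have hdet := det_eq g
  rw [h01, h11] at hdet ⊢
  simp only [normForm]
  linear_combination (a ^ 2 + τ * a * c + c ^ 2) * hdet

lemma existsUnique_commute_companion {a c u w : F} (hne : normForm τ a c ≠ 0)
    (h : normForm τ u w = normForm τ a c) :
    ∃! t : SL2 F, Commute t (companion τ) ∧
      t 0 0 * a + t 0 1 * c = u ∧ t 1 0 * a + t 1 1 * c = w := by
  generalize hN : normForm τ a c = N at hne h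
  rw [normForm] at hN h
  refine ⟨mk (((a + τ * c) * u + c * w) / N) (-((a * w - c * u) / N)) ((a * w - c * u) / N)
    (((a + τ * c) * u + c * w) / N + τ * ((a * w - c * u) / N)) ?_,
    ⟨commute_companion_iff.2 ⟨rfl, rfl⟩, ?_, ?_⟩, ?_⟩
  · field_simp
    linear_combination (u ^ 2 + τ * u * w + w ^ 2) * hN + N * h
  · simp only [mk_zero_zero, mk_zero_one]
    field_simp
    linear_combination u * hN
  · simp only [mk_one_zero, mk_one_one]
    field_simp
    linear_combination w * hN
  · rintro t ⟨ht, hu, hw⟩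
    obtain ⟨h01, h11⟩ := commute_companion_iff.1 ht
    rw [h01] at hu
    rw [h11] at hw
    have h00 : t 0 0 = ((a + τ * c) * u + c * w) / N := by
      rw [eq_div_iff hne]
      linear_combination (a + τ * c) * hu + c * hw - t 0 0 * hN
    have h10 : t 1 0 = (a * w - c * u) / N := by
      rw [eq_div_iff hne]
      linear_combination a * hw - c * hu - t 1 0 * hN
    apply ext_entries <;>
      simp only [mk_zero_zero, mk_zero_one, mk_one_zero, mk_one_one, h01, h11, h00, h10]

lemma card_centralizer_companion [Finite F] (hτ : IsNonsplitTrace τ) :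
    Nat.card (Subgroup.centralizer {companion τ}) = Nat.card F + 1 := by
  choose a c hac using exists_normForm_eq hτ
  have normForm_ne (v : {v : F × F // v ≠ 0}) : normForm τ v.1.1 v.1.2 ≠ 0 := fun h =>
    v.2 (Prod.ext_iff.2 ((normForm_eq_zero_iff hτ).1 h))
  have commute_of_mem (t : Subgroup.centralizer {companion τ}) : Commute t.1 (companion τ) :=
    Subgroup.mem_centralizer_singleton_iff.1 t.2
  let Φ : Subgroup.centralizer {companion τ} × Fˣ → {v : F × F // v ≠ 0} := fun t =>
    ⟨(t.1.1 0 0 * a t.2 + t.1.1 0 1 * c t.2, t.1.1 1 0 * a t.2 + t.1.1 1 1 * c t.2), fun h => by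
      have := normForm_mul (commute_of_mem t.1) (a t.2) (c t.2)
      rw [(normForm_eq_zero_iff hτ).2 (Prod.ext_iff.1 h), hac] at this
      exact t.2.ne_zero this.symm⟩
  have hΦ : Function.Bijective Φ := by
    rw [Function.bijective_iff_existsUnique]
    intro v
    obtain ⟨t, ⟨ht, hu, hw⟩, huniq⟩ :=
      existsUnique_commute_companion (by rw [hac]; exact normForm_ne v) (hac _).symm
    refine ⟨(⟨t, Subgroup.mem_centralizer_singleton_iff.2 ht⟩, Units.mk0 _ (normForm_ne v)),
      Subtype.ext (Prod.ext hu hw), ?_⟩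
    rintro ⟨t', d⟩ rfl
    have hd : normForm τ (Φ (t', d)).1.1 (Φ (t', d)).1.2 = d := by
      rw [normForm_mul (commute_of_mem t'), hac]
    exact Prod.ext (Subtype.ext (huniq _ ⟨commute_of_mem t', by simp [Φ, hd], by simp [Φ, hd]⟩))
      (Units.ext hd.symm)
  have hcard := Nat.card_congr (Equiv.ofBijective Φ hΦ)
  have hcompl := Set.ncard_compl ({0} : Set (F × F))
  rw [Set.ncard_singleton, Nat.card_prod, ← Nat.card_coe_set_eq] at hcompl
  rw [Nat.card_prod, Nat.card_units, show Nat.card {v : F × F // v ≠ 0} = _ from hcompl] at hcard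
  have hq := Finite.one_lt_card (α := F)
  obtain ⟨n, hn⟩ := Nat.exists_eq_add_of_lt hq
  rw [hn] at hcard ⊢
  refine Nat.eq_of_mul_eq_mul_right (show 0 < 1 + n + 1 - 1 by lia) (hcard.trans ?_)
  rw [Nat.sub_eq_iff_eq_add (Nat.mul_pos (by lia) (by lia)), show 1 + n + 1 - 1 = 1 + n by lia]
  ring

lemma exists_conj_companion_eq_inv [Finite F] (hτ : IsNonsplitTrace τ) :
    ∃ n, n * companion τ * n⁻¹ = (companion τ)⁻¹ := by
  obtain ⟨a, c, h⟩ := exists_normForm_eq hτ (-1)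
  rw [normForm] at h
  refine ⟨mk c (a + τ * c) a (-c) (by linear_combination -h), ?_⟩
  rw [mul_inv_eq_iff_eq_mul]
  apply ext_entries <;> simp [mul_entry, inv_zero_zero, inv_zero_one, inv_one_zero, inv_one_one,
    companion] <;> ring

lemma card_extendedCentralizer_companion [Finite F] (hτ : IsNonsplitTrace τ) :
    Nat.card (extendedCentralizer (companion τ)) = 2 * (Nat.card F + 1) := by
  have hT := trace_companion_sq_ne_four hτ
  obtain ⟨n, hn⟩ := exists_conj_companion_eq_inv hτ
  rw [card_extendedCentralizer (conj_eq_or_eq_inv hT) (inv_ne_self_of_trace_sq_ne_four hT) hn,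
    card_centralizer_companion hτ]

end Nonsplit

/-! ### Subgroups containing the normalizer of a nonsplit torus -/

lemma sum_indicator_eq_ncard {S : Type*} [Group S] {M : Subgroup S} [Fintype M] {A : Set S}
    (hA : A ⊆ M) (c : ℕ) : ∑ g : M, A.indicator (fun _ => c) g = A.ncard * c := by
  classical
  have card_filter : (Finset.univ.filter fun g : M => (g : S) ∈ A).card = A.ncard := by
    rw [← Fintype.card_subtype, ← Nat.card_eq_fintype_card]
    refine (Set.ncard_preimage_of_injective_subset_range (f := ((↑) : M → S))
      Subtype.val_injective ?_)
    rwa [Subtype.range_coe]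
  simp only [Set.indicator_apply, Finset.sum_ite, Finset.sum_const, card_filter, smul_eq_mul,
    mul_zero, add_zero]

section FixedPoints

variable {F : Type*} [Field F] {M : Subgroup (SL2 F)}

lemma card_orbits_mul_card_add_le [Finite F] (hZ : Subgroup.center (SL2 F) ≤ M)
    {A B : Set (SL2 F)} (hAM : A ⊆ M) (hBM : B ⊆ M)
    (hA : ∀ g ∈ A, (MulAction.fixedBy (OnePoint F) g).ncard = 0)
    (hB : ∀ g ∈ B, (MulAction.fixedBy (OnePoint F) g).ncard = 1) :
    Nat.card (MulAction.orbitRel.Quotient M (OnePoint F)) * Nat.card M + 2 * A.ncard + B.ncard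
      ≤ 2 * Nat.card M + Nat.card (Subgroup.center (SL2 F)) * (Nat.card F - 1) := by
  classical
  have := Fintype.ofFinite F
  have := Fintype.ofFinite (OnePoint F)
  have := Fintype.ofFinite M
  have := Fintype.ofFinite (MulAction.orbitRel.Quotient M (OnePoint F))
  have burnside : ∑ g : M, (MulAction.fixedBy (OnePoint F) (g : SL2 F)).ncard =
      Nat.card (MulAction.orbitRel.Quotient M (OnePoint F)) * Nat.card M := by
    simp only [Nat.card_eq_fintype_card,
      ← MulAction.sum_card_fixedBy_eq_card_orbits_mul_card_group M (OnePoint F),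
      ← Nat.card_coe_set_eq]
    rfl
  have pointwise (g : SL2 F) : (MulAction.fixedBy (OnePoint F) g).ncard +
      A.indicator (fun _ => 2) g + B.indicator (fun _ => 1) g ≤
      2 + (Subgroup.center (SL2 F) : Set (SL2 F)).indicator (fun _ => Nat.card F - 1) g := by
    by_cases hg : g ∈ Subgroup.center (SL2 F)
    · have hfix : (MulAction.fixedBy (OnePoint F) g).ncard = Nat.card F + 1 := by
        rw [← card_line, ← Set.ncard_univ]
        exact congrArg Set.ncard (Set.eq_univ_of_forall (smul_eq_self_of_mem_center hg))
      have := Nat.card_pos (α := F)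
      rw [Set.indicator_of_notMem fun h => by grind, Set.indicator_of_notMem fun h => by grind,
        Set.indicator_of_mem hg]
      lia
    · have := ncard_fixedBy_le_two hg
      by_cases hgA : g ∈ A
      · rw [Set.indicator_of_notMem (s := B) fun h => by grind, hA g hgA]
        simp [hgA]
      by_cases hgB : g ∈ B
      · simp [hB g hgB, hgA, hgB]
      · simpa [hgA, hgB] using this.trans (Nat.le_add_right _ _)
  have total := Finset.sum_le_sum fun (g : M) (_ : g ∈ Finset.univ) => pointwise g
  simp only [Finset.sum_add_distrib, sum_indicator_eq_ncard hAM, sum_indicator_eq_ncard hBM,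
    sum_indicator_eq_ncard hZ, burnside, Finset.sum_const, Finset.card_univ, smul_eq_mul,
    ← Nat.card_eq_fintype_card, mul_one] at total
  simpa only [mul_comm, ← Nat.card_coe_set_eq, SetLike.coe_sort_coe] using total

/-- The `x` such that the translation `t ↦ t + x` lies in `M`. -/
def translations (M : Subgroup (SL2 F)) : AddSubgroup F where
  carrier := {x | upper x ∈ M}
  zero_mem' := by simp [upper_zero]
  add_mem' hx hy := by
    simpa only [Set.mem_ofPred_eq, ← upper_mul_upper] using M.mul_mem hx hy
  neg_mem' hx := by simpa only [Set.mem_ofPred_eq, ← upper_inv] using M.inv_mem hx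

lemma mem_translations {x : F} : x ∈ translations M ↔ upper x ∈ M := Iff.rfl

lemma center_mul_upper_smul_eq_self_iff {z : SL2 F} (hz : z ∈ Subgroup.center (SL2 F)) {x : F}
    (hx : x ≠ 0) {o : OnePoint F} : (z * upper x) • o = o ↔ o = ∞ := by
  rw [mul_smul, smul_eq_self_of_mem_center hz]
  induction o using OnePoint.rec with
  | infty => simp [upper_smul_infty]
  | coe t => simp [upper_smul_coe, hx]

lemma center_mul_upper_injective {z z' : SL2 F} (hz : z ∈ Subgroup.center (SL2 F))
    (hz' : z' ∈ Subgroup.center (SL2 F)) {x x' : F} (h : z * upper x = z' * upper x') :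
    z = z' ∧ x = x' := by
  have h00 := congrArg (fun m : SL2 F => m 0 0) h
  have h01 := congrArg (fun m : SL2 F => m 0 1) h
  have hdet := det_eq z'
  obtain ⟨z01, z10, z11⟩ := mem_center.1 hz
  obtain ⟨z01', z10', z11'⟩ := mem_center.1 hz'
  simp only [mul_entry, upper, mk_zero_zero, mk_zero_one, mk_one_zero, mk_one_one, z01, z01',
    mul_one, mul_zero, add_zero] at h00 h01
  refine ⟨ext_entries h00 (z01.trans z01'.symm) (z10.trans z10'.symm)
    (by rw [← z11, ← z11', h00]), ?_⟩
  rw [h00] at h01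
  exact mul_left_cancel₀ (by rintro h0; simp [h0, z01'] at hdet) h01

lemma card_line_mul_le_ncard_fixedBy_eq_one [Finite F] (hZ : Subgroup.center (SL2 F) ≤ M)
    (htrans : MulAction.orbit M (∞ : OnePoint F) = Set.univ) :
    (Nat.card F + 1) * (Nat.card (Subgroup.center (SL2 F)) * (Nat.card (translations M) - 1)) ≤
      {g | g ∈ M ∧ (MulAction.fixedBy (OnePoint F) g).ncard = 1}.ncard := by
  choose k hk using (fun o => by rw [htrans]; trivial : ∀ o, o ∈ MulAction.orbit M (∞ : OnePoint F))
  have card_ne_zero : Nat.card {x : translations M // x ≠ 0} = Nat.card (translations M) - 1 := by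
    rw [← Set.ncard_singleton (0 : translations M), ← Set.ncard_compl, ← Nat.card_coe_set_eq]
    rfl
  rw [← card_ne_zero, ← card_line, ← Nat.card_prod, ← Nat.card_prod, ← Nat.card_coe_set_eq]
  have fixed_iff (o : OnePoint F) (z : Subgroup.center (SL2 F))
      (x : {x : translations M // x ≠ 0}) (o' : OnePoint F) :
      ((k o : SL2 F) * (z.1 * upper x.1.1) * (k o : SL2 F)⁻¹) • o' = o' ↔ o' = o := by
    rw [mul_smul, mul_smul, smul_eq_iff_eq_inv_smul,
      center_mul_upper_smul_eq_self_iff z.2 fun h => x.2 (Subtype.ext h), inv_smul_eq_iff]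
    exact Eq.congr_right (hk o)
  refine Nat.card_le_card_of_injective (fun t : OnePoint F × Subgroup.center (SL2 F) ×
    {x : translations M // x ≠ 0} => ⟨k t.1 * (t.2.1.1 * upper t.2.2.1.1) * (k t.1 : SL2 F)⁻¹,
      M.mul_mem (M.mul_mem (k t.1).2 (M.mul_mem (hZ t.2.1.2) t.2.2.1.2)) (M.inv_mem (k t.1).2),
      Set.ncard_eq_one.2 ⟨t.1, Set.ext fun o => fixed_iff t.1 t.2.1 t.2.2 o⟩⟩) ?_
  rintro ⟨o, z, x⟩ ⟨o', z', x'⟩ h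
  have h := congrArg Subtype.val h
  simp only at h
  obtain rfl : o = o' := by rw [← fixed_iff o' z' x', ← h, fixed_iff]
  obtain ⟨hz, hx⟩ := center_mul_upper_injective z.2 z'.2 (mul_left_cancel (mul_right_cancel h))
  rw [Subtype.ext hz, Subtype.ext (Subtype.ext hx : x.1 = x'.1)]

/-- The upper left entry, as a character of the Borel subgroup. -/
def borelCharacter : borel F →* Fˣ where
  toFun g := ⟨g.1 0 0, g.1 1 1, by
    have := det_eq g.1
    rw [mem_borel.1 g.2] at this
    linear_combination this, by
    have := det_eq g.1
    rw [mem_borel.1 g.2] at this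
    linear_combination this⟩
  map_one' := Units.ext (by simp)
  map_mul' g h := Units.ext (by simp [mul_entry, mem_borel.1 h.2])

lemma borelCharacter_upper_mul_diag {x : F} {a : Fˣ} (h : upper x * diag a ∈ borel F) :
    borelCharacter ⟨upper x * diag a, h⟩ = a :=
  Units.ext (by simp [borelCharacter, mul_entry, upper, diag])

-- A subgroup of the Borel subgroup acts on its nontrivial translations through the square of
-- `borelCharacter`.
lemma card_le_of_le_borel [Finite F] {H : Subgroup (SL2 F)} (hH : H ≤ borel F)
    (hZ : Subgroup.center (SL2 F) ≤ H) {x₀ : F} (hx₀ : x₀ ≠ 0) (hxH : upper x₀ ∈ H) :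
    Nat.card H ≤ (Nat.card (translations H) - 1) *
      (Nat.card (Subgroup.center (SL2 F)) * Nat.card (translations H)) := by
  let χ : H →* Fˣ := (powMonoidHom 2).comp (borelCharacter.comp (Subgroup.inclusion hH))
  have χ_eq {x : F} {a : Fˣ} (h : upper x * diag a ∈ H) : χ ⟨_, h⟩ = a ^ 2 :=
    congrArg (· ^ 2) (borelCharacter_upper_mul_diag (hH h))
  have mul_mem (g : H) : ((χ g : Fˣ) : F) * x₀ ∈ translations H := by
    obtain ⟨g, hg⟩ := g
    obtain ⟨x, a, rfl⟩ := exists_eq_upper_mul_diag (hH hg)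
    have hconj := H.mul_mem (H.mul_mem hg hxH) (H.inv_mem hg)
    rw [_root_.mul_inv_rev, ← mul_assoc, mul_assoc (upper x), mul_assoc (upper x),
      diag_conj_upper,
      upper_mul_upper, add_comm, ← upper_mul_upper, mul_inv_cancel_right] at hconj
    rw [χ_eq hg]
    exact_mod_cast hconj
  have card_range_le : Nat.card χ.range ≤ Nat.card (translations H) - 1 := by
    rw [← Set.ncard_singleton (0 : translations H), ← Set.ncard_compl, ← Nat.card_coe_set_eq]
    refine Nat.card_le_card_of_injective (β := ({0}ᶜ : Set (translations H)))
      (fun b => ⟨⟨(b.1 : F) * x₀, ?_⟩, ?_⟩) ?_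
    · obtain ⟨-, g, rfl⟩ := b
      exact mul_mem g
    · exact fun h => mul_ne_zero b.1.ne_zero hx₀ (congrArg Subtype.val h)
    · intro b b' h
      exact Subtype.ext (Units.ext (mul_right_cancel₀ hx₀ (congrArg (fun t => t.1.1) h)))
  have card_ker_le : Nat.card χ.ker ≤
      Nat.card (Subgroup.center (SL2 F)) * Nat.card (translations H) := by
    rw [← Nat.card_prod]
    have exists_eq (g : χ.ker) : ∃ t : Subgroup.center (SL2 F) × translations H,
        (g.1.1 : SL2 F) = upper t.2.1 * t.1.1 := by
      obtain ⟨⟨g, hg⟩, hχ⟩ := g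
      obtain ⟨x, a, rfl⟩ := exists_eq_upper_mul_diag (hH hg)
      have hz := diag_mem_center_iff.2 ((χ_eq hg).symm.trans hχ)
      exact ⟨(⟨_, hz⟩, ⟨x, (H.mul_mem_cancel_right (hZ hz)).1 hg⟩), rfl⟩
    choose t ht using exists_eq
    exact Nat.card_le_card_of_injective t fun g g' h =>
      Subtype.ext (Subtype.ext (by rw [ht, ht, h]))
  rw [← Subgroup.card_mul_index χ.ker, Subgroup.index_ker, mul_comm]
  exact Nat.mul_le_mul card_range_le card_ker_le

lemma card_inf_borel_mul [Finite F] (htrans : MulAction.orbit M (∞ : OnePoint F) = Set.univ) :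
    Nat.card (M ⊓ borel F : Subgroup (SL2 F)) * (Nat.card F + 1) = Nat.card M := by
  rw [← Subgroup.relIndex_bot_left, ← Subgroup.relIndex_bot_left M,
    ← Subgroup.relIndex_mul_relIndex ⊥ (M ⊓ borel F) M bot_le inf_le_left,
    Subgroup.inf_relIndex_left, ← card_line, ← Set.ncard_univ, ← htrans,
    ← MulAction.index_stabilizer]
  rfl

lemma eq_top_of_upper_mem (hU : ∀ x, upper x ∈ M)
    (htrans : MulAction.orbit M (∞ : OnePoint F) = Set.univ) : M = ⊤ := by
  have conj_upper_mem (s : SL2 F) (x : F) : s * upper x * s⁻¹ ∈ M := by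
    obtain ⟨a, ha⟩ := exists_conj_upper_mem_iff htrans s
    exact (ha x).2 (hU _)
  refine top_le_iff.1 fun g _ => Matrix.SL2.transvection_induction (· ∈ M) (fun i j hij c => ?_)
    (fun _ _ => M.mul_mem) g
  fin_cases i <;> fin_cases j
  · exact absurd rfl hij
  · convert hU c using 1
    apply ext_entries <;>
      simp [upper, Matrix.SpecialLinearGroup.transvection_coe]
  · convert conj_upper_mem weyl (-c) using 1
    apply ext_entries <;>
      simp [mul_entry, inv_zero_zero, inv_zero_one, inv_one_zero, inv_one_one, upper, weyl,
        Matrix.SpecialLinearGroup.transvection_coe]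
  · exact absurd rfl hij

end FixedPoints

/-! ### Overgroups of the extended centralizer of a nonsplit torus -/

section Nonsplit

lemma eq_one_or_of_translations_bounds {q ω m z : ℕ} (hq : q ≠ 0) (hz : z = 1 ∨ z = 2 ∧ Odd q)
    (hω : ω ∣ q) (hω₁ : 1 < ω) (hωq : ω ≠ q) (hm₀ : 0 < m) (hle : 2 * m ≤ (ω - 1) * (z * ω))
    (hge : (q + 1) * (ω - 1) ≤ 2 * m + q - 1) : m = 1 ∨ q = 9 ∧ m = 6 := by
  obtain ⟨t, rfl⟩ := hω
  obtain ⟨w, rfl⟩ := Nat.exists_eq_add_of_le' (show 2 ≤ ω from hω₁)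
  rw [show w + 2 - 1 = w + 1 from rfl] at hle hge
  have ht₀ : t ≠ 0 := right_ne_zero_of_mul hq
  have ht₁ : t ≠ 1 := by rintro rfl; simp at hωq
  have reduced : t * w + 1 ≤ z * (w + 1) := by
    have sum_le : ((w + 2) * t + 1) * (w + 1) + 1 ≤ (w + 1) * (z * (w + 2)) + (w + 2) * t := by
      lia
    have : (w + 2) * (t * w + 1) ≤ (w + 2) * (z * (w + 1)) := by linarith
    exact Nat.le_of_mul_le_mul_left this (by lia)
  rcases hz with rfl | ⟨rfl, hodd⟩
  · obtain rfl : w = 0 := by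
      by_contra hw
      have : 2 * w ≤ t * w := Nat.mul_le_mul_right _ (by lia)
      lia
    lia
  · obtain ⟨hω, ht'⟩ := Nat.odd_mul.1 hodd
    have ht₃ : 3 ≤ t := by grind
    have hw₁ : 1 ≤ w := by grind
    have : 3 * w ≤ t * w := Nat.mul_le_mul_right _ ht₃
    obtain rfl : w = 1 := by lia
    obtain rfl : t = 3 := by lia
    lia

lemma eq_one_of_isRotationGroupPair {q m : ℕ} (hq : 4 ≤ q)
    (hne : 2 * (q + 1) * m ≠ (q + 1) * (q * (q - 1)))
    (h : IsRotationGroupPair (q + 1) (2 * (q + 1) * m)) : m = 1 := by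
  rcases h with h | h | ⟨h, -⟩ | ⟨h, -⟩ | ⟨h, h'⟩
  · exact Nat.eq_of_mul_eq_mul_left (show 0 < 2 * (q + 1) by lia) (h.trans (mul_one _).symm)
  · lia
  · lia
  · lia
  · obtain rfl : q = 4 := by lia
    lia

lemma cases_of_isRotationGroupPair_half {b m : ℕ} (hb : 2 ≤ b)
    (hdvd : 2 * (2 * b + 1 + 1) * m ∣ (2 * b + 1 + 1) * ((2 * b + 1) * (2 * b + 1 - 1)))
    (hne : 2 * (2 * b + 1 + 1) * m ≠ (2 * b + 1 + 1) * ((2 * b + 1) * (2 * b + 1 - 1)))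
    (h : IsRotationGroupPair (b + 1) (2 * (b + 1) * m)) :
    m = 1 ∨ (b = 2 ∧ m = 2) ∨ (b = 3 ∧ m = 3) ∨ (b = 4 ∧ m = 6) := by
  rcases h with h | h | ⟨h, h'⟩ | ⟨h, h'⟩ | ⟨h, h'⟩
  · exact .inl (Nat.eq_of_mul_eq_mul_left (show 0 < 2 * (b + 1) by lia)
      (h.trans (mul_one _).symm))
  · lia
  · obtain rfl : b = 2 := by lia
    rcases h' with h' | h' | h'
    · lia
    · obtain rfl : m = 4 := by lia
      norm_num at hdvd
    · lia
  · lia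
  · lia

variable {F : Type*} [Field F] {τ : F} {M : Subgroup (SL2 F)} {m : ℕ}

lemma card_orbits_eq_one_iff : Nat.card (MulAction.orbitRel.Quotient M (OnePoint F)) = 1 ↔
    MulAction.orbit M (∞ : OnePoint F) = Set.univ := by
  rw [← MulAction.isPretransitive_iff_orbit_eq_univ,
    MulAction.pretransitive_iff_unique_quotient_of_nonempty, unique_iff_subsingleton_and_nonempty,
    Nat.card_eq_one_iff_unique]

variable [Finite F]

lemma card_center_eq : Nat.card (Subgroup.center (SL2 F)) = 1 ∧ Even (Nat.card F) ∨
    Nat.card (Subgroup.center (SL2 F)) = 2 ∧ Odd (Nat.card F) := by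
  rw [← Nat.not_even_iff_odd, ← two_eq_zero_iff_even_card]
  by_cases h : (2 : F) = 0
  · exact Or.inl ⟨card_center_of_two_eq_zero h, h⟩
  · exact Or.inr ⟨card_center_of_two_ne_zero h, h⟩

lemma ncard_fixedBy_of_mem_commClass_companion (hτ : IsNonsplitTrace τ) {g : SL2 F}
    (hg : g ∈ commClass M (companion τ)) : (MulAction.fixedBy (OnePoint F) g).ncard = 0 := by
  obtain ⟨-, hgZ, s, -, hs⟩ := hg
  refine (Set.ncard_eq_zero (Set.toFinite _)).2
    (Set.eq_empty_of_forall_notMem fun o (ho : g • o = o) => ?_)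
  refine companion_smul_ne hτ (s • o)
    (smul_eq_self_of_commute (mt conj_mem_center_iff.1 hgZ) hs.symm ?_)
  rw [← mul_smul, inv_mul_cancel_right, mul_smul, ho]

lemma ncard_commClass_companion_add (hτ : IsNonsplitTrace τ)
    (hN : extendedCentralizer (companion τ) ≤ M) (hm : Nat.card M = 2 * (Nat.card F + 1) * m) :
    (commClass M (companion τ)).ncard + Nat.card (Subgroup.center (SL2 F)) * m =
      (Nat.card F + 1) * m := by
  have count := ncard_commClass_mul_ncard_conjugators isCommTransitive
    (center_le_extendedCentralizer.trans hN) (companion_notMem_center (τ := τ))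
  rw [conjugators_eq_of_extendedCentralizer_le
    (conj_eq_or_eq_inv (trace_companion_sq_ne_four hτ)) hN,
    relCentralizer_eq_of_extendedCentralizer_le hN, card_centralizer_companion hτ,
    ← Nat.card_coe_set_eq (extendedCentralizer (companion τ) : Set (SL2 F)), SetLike.coe_sort_coe,
    card_extendedCentralizer_companion hτ, hm] at count
  refine Nat.eq_of_mul_eq_mul_left (show 0 < 2 * (Nat.card F + 1) by lia) ?_
  linear_combination count

lemma eq_one_of_card_orbits_ne_one (hq : 4 ≤ Nat.card F) (hτ : IsNonsplitTrace τ)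
    (hN : extendedCentralizer (companion τ) ≤ M) (hm : Nat.card M = 2 * (Nat.card F + 1) * m)
    (ho : Nat.card (MulAction.orbitRel.Quotient M (OnePoint F)) ≠ 1) : m = 1 := by
  have burnside := card_orbits_mul_card_add_le (center_le_extendedCentralizer.trans hN)
    (commClass_subset.trans Set.sdiff_subset) (Set.empty_subset (M : Set (SL2 F)))
    (fun g => ncard_fixedBy_of_mem_commClass_companion hτ) (by simp)
  rw [Set.ncard_empty, hm] at burnside
  have class_count := ncard_commClass_companion_add hτ hN hm
  have m_ne_zero : m ≠ 0 := by
    rintro rfl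
    exact Nat.card_pos.ne' hm
  have orbits_pos : 0 < Nat.card (MulAction.orbitRel.Quotient M (OnePoint F)) := Nat.card_pos
  have card_le := Nat.mul_le_mul_right (2 * (Nat.card F + 1) * m)
    (show 2 ≤ Nat.card (MulAction.orbitRel.Quotient M (OnePoint F)) by lia)
  by_contra hne
  obtain ⟨n, rfl⟩ := Nat.exists_eq_add_of_le' (show 2 ≤ m by lia)
  obtain ⟨h, -⟩ | ⟨h, -⟩ := card_center_eq (F := F) <;> rw [h] at burnside class_count <;>
    nlinarith [Nat.sub_add_cancel (show 1 ≤ Nat.card F by lia)]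

lemma card_of_transitive_nonsplit_of_no_translation (hq : 4 ≤ Nat.card F) (hτ : IsNonsplitTrace τ)
    (hN : extendedCentralizer (companion τ) ≤ M) (hM : M ≠ ⊤)
    (hm : Nat.card M = 2 * (Nat.card F + 1) * m) (hU : ∀ x, upper x ∈ M → x = 0)
    (htrans : MulAction.orbit M (∞ : OnePoint F) = Set.univ) :
    m = 1 ∨ (Nat.card F = 5 ∧ m = 2) ∨ (Nat.card F = 7 ∧ m = 3) ∨ (Nat.card F = 9 ∧ m = 6) := by
  have pair (a g : ℕ) (ha : Nat.card F + 1 = Nat.card (Subgroup.center (SL2 F)) * a)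
      (hg : Nat.card M = Nat.card (Subgroup.center (SL2 F)) * g) : IsRotationGroupPair a g := by
    obtain ⟨n, hn⟩ := exists_conj_companion_eq_inv hτ
    refine isRotationGroupPair_of_no_transvection (center_le_extendedCentralizer.trans hN)
      (fun s x hs => eq_zero_of_conj_upper_mem htrans hU hs)
      (hN (mem_extendedCentralizer_of_commute (.refl _))) companion_notMem_center
      (hN (mem_extendedCentralizer.2 (.inr hn))) hn ?_ hg
    rw [relCentralizer_eq_of_extendedCentralizer_le hN, card_centralizer_companion hτ, ha]
  have card_ne : Nat.card M ≠ Nat.card (SL2 F) := mt (Subgroup.eq_top_of_card_eq M) hM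
  have card_dvd := Subgroup.card_subgroup_dvd_card M
  rw [card_SL2, hm] at card_ne card_dvd
  rw [hm] at pair
  obtain ⟨hz, -⟩ | ⟨hz, b, hb⟩ := card_center_eq (F := F) <;> rw [hz] at pair
  · exact .inl (eq_one_of_isRotationGroupPair hq card_ne (pair _ _ (one_mul _).symm
      (one_mul _).symm))
  · have rotation := pair (b + 1) (2 * (b + 1) * m) (by lia) (by rw [hb]; ring)
    rw [hb] at card_dvd card_ne
    have := cases_of_isRotationGroupPair_half (by lia) card_dvd card_ne rotation
    lia

lemma card_translations_le_of_transitive_nonsplit (hτ : IsNonsplitTrace τ)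
    (hN : extendedCentralizer (companion τ) ≤ M) (hm : Nat.card M = 2 * (Nat.card F + 1) * m)
    (htrans : MulAction.orbit M (∞ : OnePoint F) = Set.univ) :
    (Nat.card F + 1) * (Nat.card (translations M) - 1) ≤ 2 * m + Nat.card F - 1 := by
  have hZ := center_le_extendedCentralizer.trans hN
  have burnside := card_orbits_mul_card_add_le hZ
    (commClass_subset.trans Set.sdiff_subset)
    (fun g hg => hg.1 : {g | g ∈ M ∧ (MulAction.fixedBy (OnePoint F) g).ncard = 1} ⊆ M)
    (fun g => ncard_fixedBy_of_mem_commClass_companion hτ) (fun g hg => hg.2)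
  have class_count := ncard_commClass_companion_add hτ hN hm
  have le_fixed := card_line_mul_le_ncard_fixedBy_eq_one hZ htrans
  rw [card_orbits_eq_one_iff.2 htrans, hm] at burnside
  have card_pos : 1 ≤ Nat.card F := Nat.card_pos
  rw [Nat.add_sub_assoc card_pos]
  obtain ⟨h, -⟩ | ⟨h, -⟩ := card_center_eq (F := F) <;>
    rw [h] at burnside le_fixed class_count <;> linarith

lemma eq_one_or_of_transitive_nonsplit_of_translation (hτ : IsNonsplitTrace τ)
    (hN : extendedCentralizer (companion τ) ≤ M) (hM : M ≠ ⊤)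
    (hm : Nat.card M = 2 * (Nat.card F + 1) * m) {x₀ : F} (hx₀ : x₀ ≠ 0) (hx₀M : upper x₀ ∈ M)
    (htrans : MulAction.orbit M (∞ : OnePoint F) = Set.univ) :
    m = 1 ∨ (Nat.card F = 9 ∧ m = 6) := by
  have hZ := center_le_extendedCentralizer.trans hN
  have m_pos : 0 < m := by
    refine Nat.pos_of_ne_zero ?_
    rintro rfl
    exact Nat.card_pos.ne' hm
  have card_borel : Nat.card (M ⊓ borel F : Subgroup (SL2 F)) = 2 * m := by
    refine Nat.eq_of_mul_eq_mul_right (show 0 < Nat.card F + 1 by lia) ?_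
    rw [card_inf_borel_mul htrans, hm]
    ring
  have card_le := card_le_of_le_borel (inf_le_right : M ⊓ borel F ≤ borel F)
    (le_inf hZ fun z hz => smul_eq_self_of_mem_center hz ∞) hx₀ ⟨hx₀M, upper_mem_borel x₀⟩
  have translations_inf : translations (M ⊓ borel F) = translations M := by
    ext x
    exact and_iff_left (upper_mem_borel x)
  rw [card_borel, translations_inf] at card_le
  have card_ne : Nat.card (translations M) ≠ Nat.card F := fun h => by
    have := AddSubgroup.eq_top_of_card_eq _ h
    exact hM (eq_top_of_upper_mem (fun x => mem_translations.1 (this ▸ AddSubgroup.mem_top x))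
      htrans)
  have one_lt : 1 < Nat.card (translations M) :=
    (AddSubgroup.one_lt_card_iff_ne_bot _).2 fun h =>
      hx₀ ((AddSubgroup.mem_bot).1 (h ▸ (mem_translations.2 hx₀M)))
  refine eq_one_or_of_translations_bounds Nat.card_pos.ne' (card_center_eq.imp And.left id)
    (AddSubgroup.card_addSubgroup_dvd_card _) one_lt card_ne m_pos card_le
    (card_translations_le_of_transitive_nonsplit hτ hN hm htrans)

lemma card_of_nonsplit (hq : 4 ≤ Nat.card F) (hτ : IsNonsplitTrace τ)
    (hN : extendedCentralizer (companion τ) ≤ M) (hM : M ≠ ⊤) :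
    Nat.card M = 2 * (Nat.card F + 1) ∨ (Nat.card F = 5 ∧ Nat.card M = 24) ∨
      (Nat.card F = 7 ∧ Nat.card M = 48) ∨ (Nat.card F = 9 ∧ Nat.card M = 120) := by
  obtain ⟨m, hm⟩ := Subgroup.card_dvd_of_le hN
  rw [card_extendedCentralizer_companion hτ] at hm
  suffices m = 1 ∨ (Nat.card F = 5 ∧ m = 2) ∨ (Nat.card F = 7 ∧ m = 3) ∨
      (Nat.card F = 9 ∧ m = 6) by
    rw [hm]
    generalize Nat.card F = q at *
    rcases this with rfl | ⟨rfl, rfl⟩ | ⟨rfl, rfl⟩ | ⟨rfl, rfl⟩ <;> simp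
  by_cases ho : Nat.card (MulAction.orbitRel.Quotient M (OnePoint F)) = 1
  · have htrans : MulAction.orbit M (∞ : OnePoint F) = Set.univ :=
      card_orbits_eq_one_iff.1 ho
    by_cases hU : ∀ x, upper x ∈ M → x = 0
    · exact card_of_transitive_nonsplit_of_no_translation hq hτ hN hM hm hU htrans
    · push Not at hU
      obtain ⟨x₀, hx₀M, hx₀⟩ := hU
      have := eq_one_or_of_transitive_nonsplit_of_translation hτ hN hM hm hx₀ hx₀M htrans
      tauto
  · exact Or.inl (eq_one_of_card_orbits_ne_one hq hτ hN hm ho)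

end Nonsplit

end SLTwo

/-! ### Counting in designs -/

theorem linearIndependent_of_dotProduct_eq {ι κ : Type*} [Finite ι] [Fintype κ]
    [DecidableEq ι] {N : ι → κ → ℚ} {a b : ℚ} (ha : 0 < a) (hb : 0 ≤ b)
    (hN : ∀ i j, N i ⬝ᵥ N j = (if i = j then a else 0) + b) : LinearIndependent ℚ N := by
  have := Fintype.ofFinite ι
  rw [Fintype.linearIndependent_iff]
  intro c hc i
  have hquad : (∑ i, c i • N i) ⬝ᵥ (∑ j, c j • N j) = a * ∑ i, c i ^ 2 + b * (∑ i, c i) ^ 2 := by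
    rw [sq, Finset.sum_mul_sum, Finset.mul_sum, Finset.mul_sum, ← Finset.sum_add_distrib,
      sum_dotProduct]
    refine Finset.sum_congr rfl fun i _ => ?_
    simp only [dotProduct_sum, smul_dotProduct, dotProduct_smul, smul_eq_mul, hN,
      mul_add, Finset.sum_add_distrib, mul_ite, mul_zero, Finset.sum_ite_eq, Finset.mem_univ,
      if_true]
    congr 1
    · ring
    · rw [Finset.mul_sum]
      exact Finset.sum_congr rfl fun j _ => by ring
  rw [hc, zero_dotProduct] at hquad
  have hnonneg : 0 ≤ ∑ i, c i ^ 2 := Finset.sum_nonneg fun _ _ => sq_nonneg _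
  have hzero : ∑ i, c i ^ 2 = 0 := by nlinarith [mul_nonneg hb (sq_nonneg (∑ i, c i))]
  exact pow_eq_zero_iff two_ne_zero |>.1 <|
    (Finset.sum_eq_zero_iff_of_nonneg fun _ _ => sq_nonneg _).1 hzero i (Finset.mem_univ i)

namespace FT

section Design

variable {Pt : Type*} {𝓑 : Set (Set Pt)} {k lam r : ℕ} {G : Type*} [Group G] [MulAction G Pt]

theorem repNum_eq_ncard_orbit (hacts : ActsOn G 𝓑) (hflag : FlagTransitive G 𝓑) {α : Pt}
    {B : Set Pt} (hB : B ∈ 𝓑) (hα : α ∈ B) :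
    repNum 𝓑 α = (MulAction.orbit (MulAction.stabilizer G α) B).ncard := by
  rw [repNum, Nat.card_coe_set_eq]
  congr 1
  ext C
  constructor
  · rintro ⟨hC, hαC⟩
    obtain ⟨g, hBC, hgα⟩ := hflag B hB C hC α hα α hαC
    exact ⟨⟨g, hgα⟩, hBC⟩
  · rintro ⟨⟨g, hgα⟩, rfl⟩
    have hmem := Set.smul_mem_smul_set (a := g) hα
    rw [MulAction.mem_stabilizer_iff.1 hgα] at hmem
    exact ⟨hacts g B hB, hmem⟩

theorem repNum_dvd_card_stabilizer (hacts : ActsOn G 𝓑) (hflag : FlagTransitive G 𝓑) (α : Pt)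
    (hα : ∃ B ∈ 𝓑, α ∈ B) : repNum 𝓑 α ∣ Nat.card (MulAction.stabilizer G α) := by
  obtain ⟨B, hB, hαB⟩ := hα
  rw [repNum_eq_ncard_orbit hacts hflag hB hαB, ← MulAction.index_stabilizer]
  exact Subgroup.index_dvd_card _

theorem ncard_inter_orbit_eq (hflag : FlagTransitive G 𝓑) {α : Pt} (β : Pt) {B C : Set Pt}
    (hB : B ∈ 𝓑) (hαB : α ∈ B) (hC : C ∈ 𝓑) (hαC : α ∈ C) :
    (MulAction.orbit (MulAction.stabilizer G α) β ∩ C).ncard =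
      (MulAction.orbit (MulAction.stabilizer G α) β ∩ B).ncard := by
  obtain ⟨g, hBC, hgα⟩ := hflag B hB C hC α hαB α hαC
  have horbit : g • MulAction.orbit (MulAction.stabilizer G α) β =
      MulAction.orbit (MulAction.stabilizer G α) β :=
    MulAction.smul_orbit (⟨g, hgα⟩ : MulAction.stabilizer G α) β
  rw [← hBC]
  nth_rw 1 [← horbit]
  rw [← Set.smul_set_inter, Set.ncard_smul_set]

open Classical in
theorem IsDesign.card_filter_mem [Fintype Pt] (hD : IsDesign 𝓑 k lam) {B : Set Pt} (hB : B ∈ 𝓑) :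
    (Finset.univ.filter (· ∈ B)).card = k := by
  rw [← hD.block_card B hB, Nat.card_eq_fintype_card, Fintype.card_subtype]

variable [Finite Pt]

/-- The finite set of blocks of `𝓑` through the point `x`. -/
noncomputable def blocksAt (𝓑 : Set (Set Pt)) (x : Pt) : Finset (Set Pt) :=
  (Set.toFinite {B | B ∈ 𝓑 ∧ x ∈ B}).toFinset

theorem mem_blocksAt {x : Pt} {B : Set Pt} : B ∈ blocksAt 𝓑 x ↔ B ∈ 𝓑 ∧ x ∈ B := by
  rw [blocksAt, Set.Finite.mem_toFinset, Set.mem_ofPred_eq]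

theorem card_blocksAt (x : Pt) : (blocksAt 𝓑 x).card = repNum 𝓑 x := by
  rw [repNum, Nat.card_coe_set_eq, Set.ncard_eq_toFinset_card _ (Set.toFinite _), blocksAt]

open Classical in
theorem IsDesign.card_filter_blocksAt (hD : IsDesign 𝓑 k lam) {x y : Pt} (hxy : x ≠ y) :
    ((blocksAt 𝓑 x).filter (y ∈ ·)).card = lam := by
  rw [← hD.pair_count x y hxy, Nat.card_coe_set_eq, ← Set.ncard_coe_finset]
  congr 1
  ext B
  simp only [Finset.coe_filter, mem_blocksAt, Set.mem_ofPred_eq, and_assoc]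

open Classical in
theorem IsDesign.sum_card_filter_mem (hD : IsDesign 𝓑 k lam) {α : Pt} {O : Finset Pt}
    (hO : α ∉ O) : ∑ B ∈ blocksAt 𝓑 α, (O.filter (· ∈ B)).card = lam * O.card := by
  refine (Finset.sum_card_bipartiteAbove_eq_sum_card_bipartiteBelow fun B β => β ∈ B).trans ?_
  rw [mul_comm, ← smul_eq_mul, ← Finset.sum_const]
  exact Finset.sum_congr rfl fun β hβ => hD.card_filter_blocksAt (ne_of_mem_of_not_mem hβ hO).symm

theorem IsDesign.repNum_mul (hD : IsDesign 𝓑 k lam) (α : Pt) :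
    repNum 𝓑 α * (k - 1) = lam * (Nat.card Pt - 1) := by
  classical
  have := Fintype.ofFinite Pt
  have hcount := hD.sum_card_filter_mem (Finset.notMem_erase α Finset.univ)
  rw [Finset.card_erase_of_mem (Finset.mem_univ _), Finset.card_univ,
    ← Nat.card_eq_fintype_card] at hcount
  rw [← hcount, ← card_blocksAt, ← smul_eq_mul, ← Finset.sum_const]
  refine Finset.sum_congr rfl fun B hB => ?_
  obtain ⟨hB, hα⟩ := mem_blocksAt.1 hB
  rw [Finset.filter_erase, Finset.card_erase_of_mem (by simpa using hα), hD.card_filter_mem hB]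

theorem IsDesign.card_blocks_mul (hD : IsDesign 𝓑 k lam) (hr : ∀ x, repNum 𝓑 x = r) :
    Nat.card 𝓑 * k = Nat.card Pt * r := by
  classical
  have := Fintype.ofFinite Pt
  have hcount := Finset.sum_card_bipartiteAbove_eq_sum_card_bipartiteBelow
    (s := (Finset.univ : Finset Pt)) (t := 𝓑.toFinset) (fun x B => x ∈ B)
  have hpoint (x : Pt) : (𝓑.toFinset.bipartiteAbove (fun x B => x ∈ B) x).card = r := by
    rw [← hr x, ← card_blocksAt]
    congr 1
    ext B
    simp only [Finset.mem_bipartiteAbove, Set.mem_toFinset, mem_blocksAt]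
  have hblock : ∀ B ∈ 𝓑.toFinset,
      ((Finset.univ : Finset Pt).bipartiteBelow (fun x B => x ∈ B) B).card = k :=
    fun B hB => hD.card_filter_mem (Set.mem_toFinset.1 hB)
  rw [Finset.sum_congr rfl fun x _ => hpoint x, Finset.sum_congr rfl hblock, Finset.sum_const,
    Finset.sum_const, smul_eq_mul, smul_eq_mul, Finset.card_univ, ← Nat.card_eq_fintype_card,
    ← Nat.card_eq_card_toFinset] at hcount
  exact hcount.symm

open Classical in
/-- The row of the point-block incidence matrix of `𝓑` indexed by the point `x`. -/
noncomputable def incidenceVector (𝓑 : Set (Set Pt)) (x : Pt) : 𝓑 → ℚ :=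
  fun B => if x ∈ B.1 then 1 else 0

open Classical in
theorem incidenceVector_dotProduct [Fintype 𝓑] (x y : Pt) :
    incidenceVector 𝓑 x ⬝ᵥ incidenceVector 𝓑 y = ((blocksAt 𝓑 x).filter (y ∈ ·)).card := by
  have hfilter : (blocksAt 𝓑 x).filter (y ∈ ·) =
      𝓑.toFinset.filter fun B => x ∈ B ∧ y ∈ B := by
    ext B
    simp only [Finset.mem_filter, mem_blocksAt, Set.mem_toFinset, and_assoc]
  rw [hfilter, Finset.card_filter, Nat.cast_sum,
    Finset.sum_subtype 𝓑.toFinset (p := (· ∈ 𝓑)) fun B => Set.mem_toFinset, dotProduct]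
  exact Finset.sum_congr rfl fun B _ => by simp [incidenceVector, ← ite_and, and_comm]

/-- Fisher's inequality. -/
theorem IsDesign.card_le_card_blocks (hD : IsDesign 𝓑 k lam) (hr : ∀ x, repNum 𝓑 x = r)
    (hlt : lam < r) : Nat.card Pt ≤ Nat.card 𝓑 := by
  classical
  have := Fintype.ofFinite Pt
  have : Fintype 𝓑 := Fintype.ofFinite _
  have hindep : LinearIndependent ℚ (incidenceVector 𝓑) := by
    refine linearIndependent_of_dotProduct_eq (a := (r : ℚ) - lam) (b := lam)
      (sub_pos.2 (by exact_mod_cast hlt)) (Nat.cast_nonneg _) fun x y => ?_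
    rw [incidenceVector_dotProduct]
    split_ifs with hxy
    · subst hxy
      rw [Finset.filter_true_of_mem fun B hB => (mem_blocksAt.1 hB).2, card_blocksAt, hr]
      ring
    · rw [hD.card_filter_blocksAt hxy, zero_add]
  have hrank := hindep.fintype_card_le_finrank
  rwa [Module.finrank_fintype_fun_eq_card, ← Nat.card_eq_fintype_card,
    ← Nat.card_eq_fintype_card] at hrank

theorem repNum_dvd_mul_ncard_orbit (hD : IsDesign 𝓑 k lam) (hflag : FlagTransitive G 𝓑)
    {α β : Pt} (hαβ : β ≠ α) :
    repNum 𝓑 α ∣ lam * (MulAction.orbit (MulAction.stabilizer G α) β).ncard := by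
  classical
  have := Fintype.ofFinite Pt
  set O := MulAction.orbit (MulAction.stabilizer G α) β
  have hαO : α ∉ O.toFinset := by
    rw [Set.mem_toFinset]
    rintro ⟨⟨g, hgα⟩, h⟩
    exact hαβ (smul_left_cancel g (h.trans (MulAction.mem_stabilizer_iff.1 hgα).symm))
  have hinter (B : Set Pt) : (O.toFinset.filter (· ∈ B)).card = (O ∩ B).ncard := by
    rw [← Set.ncard_coe_finset]
    congr 1
    ext x
    simp
  rw [Set.ncard_eq_toFinset_card', ← hD.sum_card_filter_mem hαO, ← card_blocksAt]
  rcases (blocksAt 𝓑 α).eq_empty_or_nonempty with hempty | ⟨B, hB⟩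
  · simp [hempty]
  · obtain ⟨hB, hαB⟩ := mem_blocksAt.1 hB
    rw [Finset.sum_congr rfl fun C hC => (hinter C).trans
      (ncard_inter_orbit_eq hflag β hB hαB (mem_blocksAt.1 hC).1 (mem_blocksAt.1 hC).2),
      Finset.sum_const, smul_eq_mul]
    exact Nat.dvd_mul_right _ _

end Design

end FT

namespace SLTwo

open OnePoint

/-! ### Automorphisms normalizing two opposite root subgroups -/

section FiniteField

variable {F : Type*} [Field F] [Finite F]

lemma isSquare_of_two_eq_zero (h2 : (2 : F) = 0) (x : F) : IsSquare x :=
  have := CharTwo.of_one_ne_zero_of_two_eq_zero (one_ne_zero (α := F)) h2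
  isSquare_of_charTwo' x

lemma exists_eq_sq_sub_sq (y : F) : ∃ a b : F, y = a ^ 2 - b ^ 2 := by
  by_cases h2 : (2 : F) = 0
  · obtain ⟨a, ha⟩ := isSquare_of_two_eq_zero h2 y
    exact ⟨a, 0, by rw [ha]; ring⟩
  · exact ⟨(y + 1) / 2, (y - 1) / 2, by field_simp; ring⟩

variable {σ : F →+ F}

lemma map_mul_of_map_sq_mul (h1 : σ 1 ≠ 0)
    (hsq : ∀ a ≠ 0, ∀ x, σ (a ^ 2 * x) * σ 1 ^ 2 = σ a ^ 2 * σ x) (y x : F) :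
    σ (y * x) * σ 1 = σ y * σ x := by
  have map_sq (a x : F) : σ (a ^ 2 * x) * σ 1 = σ (a ^ 2) * σ x := by
    rcases eq_or_ne a 0 with rfl | ha
    · simp
    · have h := hsq a ha 1
      rw [mul_one] at h
      refine mul_right_cancel₀ (pow_ne_zero 2 h1) ?_
      linear_combination σ 1 * hsq a ha x - σ x * h
  obtain ⟨a, b, rfl⟩ := exists_eq_sq_sub_sq y
  rw [sub_mul, map_sub, map_sub, sub_mul, sub_mul, map_sq, map_sq]

lemma exists_ringEquiv_of_map_sq_mul (h1 : σ 1 ≠ 0)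
    (hsq : ∀ a ≠ 0, ∀ x, σ (a ^ 2 * x) * σ 1 ^ 2 = σ a ^ 2 * σ x) :
    ∃ τ : F ≃+* F, ∀ x, σ x = σ 1 * τ x := by
  let τ : F →+* F :=
    { toFun := fun x => (σ 1)⁻¹ * σ x
      map_one' := inv_mul_cancel₀ h1
      map_mul' := fun x y => by
        have := map_mul_of_map_sq_mul h1 hsq x y
        field_simp
        rw [mul_comm, this]
      map_zero' := by rw [map_zero, mul_zero]
      map_add' := fun x y => by rw [map_add, mul_add] }
  exact ⟨.ofBijective τ (Finite.injective_iff_bijective.1 τ.injective),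
    fun x => (mul_inv_cancel_left₀ h1 (σ x)).symm⟩

lemma exists_card_eq_prime_pow (F : Type*) [Field F] [Finite F] :
    ∃ p, p.Prime ∧ Nat.card F = p ^ Nat.card (F ≃+* F) := by
  obtain ⟨p, hp⟩ := CharP.exists F
  have hprime : p.Prime := CharP.char_is_prime F p
  have : Fact p.Prime := ⟨hprime⟩
  let := ZMod.algebra F p
  have card_aut : Nat.card (F ≃+* F) = Nat.card (F ≃ₐ[ZMod p] F) :=
    Nat.card_congr
      { toFun := fun e => .ofRingEquiv (f := e) fun r => RingHom.congr_fun
          (Subsingleton.elim ((e : F →+* F).comp (algebraMap (ZMod p) F)) (algebraMap _ F)) r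
        invFun := fun e => e.toRingEquiv
        left_inv := fun _ => rfl
        right_inv := fun _ => rfl }
  exact ⟨p, hprime, by rw [card_aut, IsGalois.card_aut_eq_finrank,
    Module.natCard_eq_pow_finrank (K := ZMod p), Nat.card_zmod]⟩

lemma card_ringEquiv_eq_of_card_eq_pow {p n : ℕ} (hp : p.Prime) (h : Nat.card F = p ^ n) :
    Nat.card (F ≃+* F) = n := by
  obtain ⟨ℓ, hℓ, hF⟩ := exists_card_eq_prime_pow F
  have hq : 1 < Nat.card F := Finite.one_lt_card
  obtain ⟨m, rfl⟩ := Nat.exists_eq_succ_of_ne_zero (fun hn : n = 0 => by simp [h, hn] at hq)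
  obtain ⟨k, hk⟩ := Nat.exists_eq_succ_of_ne_zero
    (fun hf : Nat.card (F ≃+* F) = 0 => by simp [hF, hf] at hq)
  rw [h, hk] at hF
  rw [hk, (hp.pow_inj hℓ hF).2]

end FiniteField

section Matrices

variable {F : Type*} [Field F]

lemma upper_mul_lower_mul_upper (x : Fˣ) :
    upper (x : F) * lower (-(x : F)⁻¹) * upper (x : F) = diag x * weyl := by
  apply ext_entries <;> simp [mul_entry, upper, lower, diag, weyl]

lemma diag_weyl_conj_upper (x : Fˣ) (y : F) :
    (diag x * weyl) * upper y * (diag x * weyl)⁻¹ = lower (-(x : F)⁻¹ ^ 2 * y) := by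
  apply ext_entries <;>
    simp [mul_entry, inv_zero_zero, inv_zero_one, inv_one_zero, inv_one_one, upper, lower, diag,
      weyl]
  ring

lemma weyl_conj_upper (x : F) : weyl * upper x * weyl⁻¹ = lower (-x) := by
  apply ext_entries <;>
    simp [mul_entry, inv_zero_zero, inv_zero_one, inv_one_zero, inv_one_one, upper, lower, weyl]

lemma weyl_conj_lower (x : F) : weyl * lower x * weyl⁻¹ = upper (-x) := by
  apply ext_entries <;>
    simp [mul_entry, inv_zero_zero, inv_zero_one, inv_one_zero, inv_one_one, upper, lower, weyl]

lemma diag_conj_lower (a : Fˣ) (x : F) :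
    diag a * lower x * (diag a)⁻¹ = lower ((a : F)⁻¹ ^ 2 * x) := by
  apply ext_entries <;>
    simp [mul_entry, inv_zero_zero, inv_zero_one, inv_one_zero, inv_one_one, lower, diag]
  ring

lemma exists_eq_upper_mul_weyl_mul {s : SL2 F} (hs : s ∉ borel F) :
    ∃ x, ∃ b ∈ borel F, s = upper x * weyl * b := by
  rw [mem_borel] at hs
  refine ⟨s 0 0 / s 1 0, weyl⁻¹ * ((upper (s 0 0 / s 1 0))⁻¹ * s), ?_, by group⟩
  rw [mem_borel]
  simp only [mul_entry, inv_zero_zero, inv_zero_one, inv_one_zero, inv_one_one, upper, weyl,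
    mk_zero_zero, mk_zero_one, mk_one_zero, mk_one_one]
  field_simp
  ring

lemma eq_top_of_upper_mem_of_lower_mem {M : Subgroup (SL2 F)} (hU : ∀ x, upper x ∈ M)
    (hL : ∀ x, lower x ∈ M) : M = ⊤ := by
  have hw : weyl ∈ M := by
    have hdiag : (diag 1 : SL2 F) = 1 := by apply ext_entries <;> simp [diag]
    rw [← one_mul weyl, ← hdiag, ← upper_mul_lower_mul_upper]
    exact mul_mem (mul_mem (hU _) (hL _)) (hU _)
  refine eq_top_of_upper_mem hU (Set.eq_univ_of_forall fun o => ?_)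
  induction o using OnePoint.rec with
  | infty => exact MulAction.mem_orbit_self _
  | coe t =>
    refine ⟨⟨upper t * weyl, mul_mem (hU t) hw⟩, ?_⟩
    change (upper t * weyl) • (∞ : OnePoint F) = t
    rw [mul_smul, weyl_smul_infty, upper_smul_coe, zero_add]

end Matrices

section Semilinear

variable {F : Type*} [Field F] {G : Type*} [Group G]

/-- Conjugation by `g` carries the images under `φ` of the two root subgroups of `SL(2,F)` to
themselves, acting on the root parameters through `σ` and `ρ`. -/
structure ActsOnRoots (φ : SL2 F →* G) (g : G) (σ ρ : F → F) : Prop where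
  conj_upper : ∀ x, MulAut.conj g (φ (upper x)) = φ (upper (σ x))
  conj_lower : ∀ x, MulAut.conj g (φ (lower x)) = φ (lower (ρ x))

/-- Conjugation by `g` induces on the image of `SL(2,F)` the field automorphism `τ` followed by
conjugation by `diag(c,1)`. This is recorded on the two root subgroups, which generate. -/
abbrev IsSemilinear (φ : SL2 F →* G) (g : G) (c : Fˣ) (τ : F ≃+* F) : Prop :=
  ActsOnRoots φ g (fun x => c * τ x) (fun x => ↑c⁻¹ * τ x)

variable {φ : SL2 F →* G}

section Kernel

lemma entries_of_map_eq (hker : φ.ker = Subgroup.center (SL2 F)) {s t : SL2 F} (h : φ s = φ t) :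
    s 0 0 * t 0 1 = s 0 1 * t 0 0 ∧ s 1 0 * t 1 1 = s 1 1 * t 1 0 := by
  have hmem : s * t⁻¹ ∈ Subgroup.center (SL2 F) := by
    rw [← hker, MonoidHom.mem_ker, map_mul, map_inv, h, mul_inv_cancel]
  obtain ⟨h01, h10, -⟩ := mem_center.1 hmem
  simp only [mul_entry, inv_zero_zero, inv_zero_one, inv_one_zero, inv_one_one] at h01 h10
  exact ⟨by linear_combination -h01, by linear_combination h10⟩

lemma map_upper_injective (hker : φ.ker = Subgroup.center (SL2 F)) :
    Function.Injective fun x => φ (upper x) := fun x y h => by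
  simpa [upper] using (entries_of_map_eq hker h).1.symm

end Kernel

namespace ActsOnRoots

variable {g : G} {σ ρ : F → F} (h : ActsOnRoots φ g σ ρ)
  (hker : φ.ker = Subgroup.center (SL2 F))
include h hker

lemma map_add (x y : F) : σ (x + y) = σ x + σ y := by
  apply map_upper_injective hker
  change φ (upper (σ (x + y))) = φ (upper (σ x + σ y))
  rw [← h.conj_upper, ← upper_mul_upper, ← upper_mul_upper, _root_.map_mul, _root_.map_mul,
    _root_.map_mul, h.conj_upper, h.conj_upper]

lemma ne_zero (x : Fˣ) : σ x ≠ 0 := fun h0 => x.ne_zero <| by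
  have hσ0 : σ 0 = 0 := by simpa using h.map_add hker 0 0
  refine map_upper_injective hker ((MulAut.conj g).injective ?_)
  rw [h.conj_upper, h.conj_upper, h0, hσ0]

-- `diag x * weyl` carries the upper root subgroup to the lower one, hence so does its conjugate
-- by `g`; that conjugate is `upper (σ x) * lower (ρ (-x⁻¹)) * upper (σ x)`.
lemma lower_param (x : Fˣ) : ρ (-(x : F)⁻¹) = -(σ x)⁻¹ := by
  set a := σ x
  set b := ρ (-(x : F)⁻¹)
  have conj_weyl : MulAut.conj g (φ (diag x * weyl)) = φ (upper a * lower b * upper a) := by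
    simp only [← upper_mul_lower_mul_upper, _root_.map_mul, h.conj_upper, h.conj_lower, a, b]
  have hlower : φ ((upper a * lower b * upper a) * upper (σ 1) * (upper a * lower b * upper a)⁻¹) =
      φ (lower (ρ (-(x : F)⁻¹ ^ 2))) := by
    rw [_root_.map_mul, _root_.map_mul, map_inv, ← conj_weyl, ← h.conj_upper, ← map_inv,
      ← _root_.map_mul, ← _root_.map_mul, ← map_inv, ← _root_.map_mul, ← _root_.map_mul,
      diag_weyl_conj_upper, mul_one, h.conj_lower]
  have hentry := (entries_of_map_eq hker hlower).1
  simp only [mul_entry, inv_zero_zero, inv_zero_one, inv_one_zero, inv_one_one, upper, lower,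
    mk_zero_zero, mk_zero_one, mk_one_zero, mk_one_one] at hentry
  have hσ1 : σ 1 ≠ 0 := h.ne_zero hker 1
  have hsq : (1 + a * b) ^ 2 = 0 := mul_right_cancel₀ hσ1 (by linear_combination -hentry)
  have ha : a ≠ 0 := h.ne_zero hker x
  rw [← one_div, ← neg_div, eq_div_iff ha]
  linear_combination pow_eq_zero_iff two_ne_zero |>.1 hsq

lemma conj_diag_mul_weyl (x : Fˣ) : MulAut.conj g (φ (diag x * weyl)) =
    φ (diag (Units.mk0 (σ x) (h.ne_zero hker x)) * weyl) := by
  simp only [← upper_mul_lower_mul_upper, _root_.map_mul, h.conj_upper, h.conj_lower,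
    h.lower_param hker, Units.val_mk0]

lemma conj_diag (x : Fˣ) : MulAut.conj g (φ (diag x)) =
    φ (diag (Units.mk0 (σ x) (h.ne_zero hker x) * (Units.mk0 (σ 1) (h.ne_zero hker 1))⁻¹)) := by
  have diag_mul_inv (s t : Fˣ) : diag s * weyl * (diag t * weyl)⁻¹ = diag (s * t⁻¹) := by
    apply ext_entries <;>
      simp [mul_entry, inv_zero_zero, inv_zero_one, inv_one_zero, inv_one_one, diag, weyl, mul_comm]
  have hx : diag x = diag x * weyl * (diag 1 * weyl)⁻¹ := by rw [diag_mul_inv, inv_one, mul_one]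
  conv_lhs => rw [hx]
  rw [_root_.map_mul, map_inv, _root_.map_mul, map_inv, h.conj_diag_mul_weyl hker,
    h.conj_diag_mul_weyl hker, ← map_inv, ← _root_.map_mul, diag_mul_inv]
  simp only [Units.val_one]

lemma map_sq_mul {a : F} (ha : a ≠ 0) (x : F) : σ (a ^ 2 * x) * σ 1 ^ 2 = σ a ^ 2 * σ x := by
  have hσ1 : σ 1 ≠ 0 := h.ne_zero hker 1
  have hconj := h.conj_upper (((Units.mk0 a ha : Fˣ) : F) ^ 2 * x)
  rw [← diag_conj_upper, _root_.map_mul, _root_.map_mul, map_inv, _root_.map_mul, _root_.map_mul,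
    map_inv, h.conj_diag hker, h.conj_upper, ← map_inv, ← _root_.map_mul, ← _root_.map_mul,
    diag_conj_upper] at hconj
  have heq := map_upper_injective hker hconj
  simp only [Units.val_mul, Units.val_mk0, Units.val_inv_eq_inv_val] at heq
  rw [← heq]
  field_simp

lemma exists_isSemilinear [Finite F] : ∃ c τ, IsSemilinear φ g c τ := by
  have hσ1 : σ 1 ≠ 0 := h.ne_zero hker 1
  obtain ⟨τ, hτ⟩ := exists_ringEquiv_of_map_sq_mul (σ := .mk' σ (h.map_add hker)) hσ1
    fun a ha => h.map_sq_mul hker ha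
  replace hτ : ∀ x, σ x = σ 1 * τ x := hτ
  refine ⟨Units.mk0 (σ 1) hσ1, τ, fun x => ?_, fun x => ?_⟩
  · rw [h.conj_upper, hτ, Units.val_mk0]
  · rcases eq_or_ne x 0 with rfl | hx
    · have hlower : lower (0 : F) = 1 := by apply ext_entries <;> simp [lower]
      simp [hlower]
    · have hρ := h.lower_param hker (-(Units.mk0 x hx)⁻¹)
      simp only [Units.val_neg, Units.val_inv_eq_inv_val, Units.val_mk0, inv_neg, inv_inv,
        neg_neg] at hρ
      rw [h.conj_lower, hρ, hτ, Units.val_inv_eq_inv_val, Units.val_mk0, _root_.map_neg, map_inv₀,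
        mul_neg, inv_neg, neg_neg, mul_inv, inv_inv]

end ActsOnRoots

namespace IsSemilinear

variable {g g' : G} {c c' : Fˣ} {τ τ' : F ≃+* F}

lemma one : IsSemilinear φ 1 1 (RingEquiv.refl F) := by
  constructor <;> intro x <;> simp

lemma mul (h : IsSemilinear φ g c τ) (h' : IsSemilinear φ g' c' τ') :
    IsSemilinear φ (g * g') (c * Units.map τ c') (τ'.trans τ) := by
  constructor <;> intro x
  · rw [_root_.map_mul, MulAut.mul_apply, h'.conj_upper, h.conj_upper]
    simp [mul_assoc]
  · rw [_root_.map_mul, MulAut.mul_apply, h'.conj_lower, h.conj_lower]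
    simp [mul_left_comm, mul_comm]

lemma inv (h : IsSemilinear φ g c τ) : IsSemilinear φ g⁻¹ (Units.map τ.symm c⁻¹) τ.symm := by
  constructor <;> intro x <;> apply (MulAut.conj g).injective <;>
    rw [← MulAut.mul_apply, ← _root_.map_mul, mul_inv_cancel, _root_.map_one, MulAut.one_apply]
  · rw [h.conj_upper]; simp
  · rw [h.conj_lower]; simp

lemma unique (hker : φ.ker = Subgroup.center (SL2 F)) (h : IsSemilinear φ g c τ)
    (h' : IsSemilinear φ g c' τ') : c = c' ∧ τ = τ' := by
  have heq (x : F) : (c : F) * τ x = c' * τ' x :=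
    map_upper_injective hker ((h.conj_upper x).symm.trans (h'.conj_upper x))
  obtain rfl : c = c' := Units.ext (by simpa using heq 1)
  exact ⟨rfl, RingEquiv.ext fun x => mul_left_cancel₀ c.ne_zero (heq x)⟩

variable (hcent : Subgroup.centralizer (φ.range : Set G) = ⊥)
include hcent

lemma eq_one (h : IsSemilinear φ g 1 (RingEquiv.refl F)) : g = 1 := by
  have hcomm : (Subgroup.centralizer ({g} : Set G)).comap φ = ⊤ := by
    have hupper (x : F) : upper x ∈ (Subgroup.centralizer ({g} : Set G)).comap φ := by
      have := h.conj_upper x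
      simp only [Units.val_one, one_mul, RingEquiv.refl_apply, MulAut.conj_apply] at this
      exact Subgroup.mem_centralizer_singleton_iff.2 (mul_inv_eq_iff_eq_mul.1 this).symm
    have hlower (x : F) : lower x ∈ (Subgroup.centralizer ({g} : Set G)).comap φ := by
      have := h.conj_lower x
      simp only [inv_one, Units.val_one, one_mul, RingEquiv.refl_apply, MulAut.conj_apply] at this
      exact Subgroup.mem_centralizer_singleton_iff.2 (mul_inv_eq_iff_eq_mul.1 this).symm
    exact eq_top_of_upper_mem_of_lower_mem hupper hlower
  rw [← Subgroup.mem_bot, ← hcent, Subgroup.mem_centralizer_iff]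
  rintro _ ⟨s, rfl⟩
  exact Subgroup.mem_centralizer_singleton_iff.1
    (show s ∈ (Subgroup.centralizer ({g} : Set G)).comap φ from hcomm ▸ Subgroup.mem_top s)

lemma ext (h : IsSemilinear φ g c τ) (h' : IsSemilinear φ g' c τ) : g = g' := by
  have hquot := h.mul h'.inv
  have htau : τ.symm.trans τ = RingEquiv.refl F := RingEquiv.symm_trans_self τ
  have hc : c * Units.map (τ : F →* F) (Units.map (τ.symm : F →* F) c⁻¹) = 1 := by ext; simp
  rw [htau, hc] at hquot
  exact mul_inv_eq_one.1 (eq_one hcent hquot)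

end IsSemilinear

end Semilinear

/-! ### The order of a group with socle `PSL(2,q)` -/

section General

variable {G S : Type*} [Group G] [Group S]

lemma le_normalizer_of_conj_mem {H P : Subgroup G} (h : ∀ g ∈ H, ∀ x ∈ P, g * x * g⁻¹ ∈ P) :
    H ≤ Subgroup.normalizer (P : Set G) := fun g hg =>
  Subgroup.mem_normalizer_iff.2 fun x =>
    ⟨h g hg x, fun hx => by simpa [mul_assoc] using h g⁻¹ (inv_mem hg) _ hx⟩

lemma index_comap_of_forall_exists (ψ : S →* G) (N : Subgroup G)
    (h : ∀ g, ∃ s, (ψ s)⁻¹ * g ∈ N) : (N.comap ψ).index = N.index := by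
  refine Nat.card_congr (Equiv.ofBijective
    (Quotient.map' ψ fun s t hst => ?_) ⟨fun x y => ?_, fun y => ?_⟩)
  · rw [QuotientGroup.leftRel_apply] at hst ⊢
    rwa [← map_inv, ← map_mul]
  · induction x using QuotientGroup.induction_on with | H s =>
    induction y using QuotientGroup.induction_on with | H t =>
    intro hst
    refine QuotientGroup.eq.2 (Subgroup.mem_comap.2 ?_)
    rw [map_mul, map_inv]
    exact QuotientGroup.eq.1 hst
  · induction y using QuotientGroup.induction_on with | H g =>
    obtain ⟨s, hs⟩ := h g
    exact ⟨(s : S ⧸ N.comap ψ), QuotientGroup.eq.2 hs⟩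

end General

section RootGroup

variable {F : Type*} [Field F] {G : Type*} [Group G]

lemma mem_borel_of_conj_upper_one_mem {s : SL2 F} (h : s * upper 1 * s⁻¹ ∈ borel F) :
    s ∈ borel F := by
  have hentry := mem_borel.1 h
  simp only [mul_entry, inv_zero_zero, inv_one_zero, upper, mk_zero_zero, mk_zero_one,
    mk_one_zero, mk_one_one] at hentry
  refine mem_borel.2 (pow_eq_zero_iff two_ne_zero |>.1 ?_)
  linear_combination -hentry

lemma upper_mul_diag_conj_upper (y : F) (a : Fˣ) (x : F) :
    upper y * diag a * upper x * (upper y * diag a)⁻¹ = upper ((a : F) ^ 2 * x) :=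
  calc
    _ = upper y * (diag a * upper x * (diag a)⁻¹) * (upper y)⁻¹ := by group
    _ = upper ((a : F) ^ 2 * x) := by
      rw [diag_conj_upper, upper_inv, upper_mul_upper, upper_mul_upper]
      ring_nf

/-- The image in `G` of the upper unipotent subgroup of `SL(2,F)`; it is a Sylow subgroup of the
image of `SL(2,F)`. -/
def rootGroup (φ : SL2 F →* G) : Subgroup G where
  carrier := Set.range fun x => φ (upper x)
  one_mem' := ⟨0, by simp only [upper_zero, map_one]⟩
  mul_mem' := by
    rintro _ _ ⟨x, rfl⟩ ⟨y, rfl⟩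
    exact ⟨x + y, by simp only [← upper_mul_upper, map_mul]⟩
  inv_mem' := by
    rintro _ ⟨x, rfl⟩
    exact ⟨-x, by simp only [← upper_inv, map_inv]⟩

variable {φ : SL2 F →* G}

lemma map_upper_mem_rootGroup (x : F) : φ (upper x) ∈ rootGroup φ := ⟨x, rfl⟩

lemma rootGroup_le_range : rootGroup φ ≤ φ.range := by
  rintro _ ⟨x, rfl⟩
  exact ⟨_, rfl⟩

lemma card_rootGroup (hker : φ.ker = Subgroup.center (SL2 F)) :
    Nat.card (rootGroup φ) = Nat.card F :=
  Nat.card_range_of_injective (map_upper_injective hker)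

lemma comap_normalizer_rootGroup (hker : φ.ker = Subgroup.center (SL2 F)) :
    (Subgroup.normalizer (rootGroup φ : Set G)).comap φ = borel F := by
  refine le_antisymm (fun s hs => ?_) ?_
  · obtain ⟨y, hy⟩ := (Subgroup.mem_normalizer_iff.1 hs _).1 (map_upper_mem_rootGroup 1)
    rw [← map_inv, ← map_mul, ← map_mul] at hy
    refine mem_borel_of_conj_upper_one_mem (mem_borel.2 ?_)
    simpa [upper] using (entries_of_map_eq hker hy).2.symm
  · rw [← Subgroup.map_le_iff_le_comap]
    refine le_normalizer_of_conj_mem ?_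
    rintro _ ⟨s, hs, rfl⟩ _ ⟨x, rfl⟩
    obtain ⟨y, a, rfl⟩ := exists_eq_upper_mul_diag hs
    refine ⟨(a : F) ^ 2 * x, ?_⟩
    change φ (upper _) = φ _ * φ _ * (φ _)⁻¹
    rw [← map_inv, ← map_mul, ← map_mul, upper_mul_diag_conj_upper]

lemma map_mem_normalizer_rootGroup_iff (hker : φ.ker = Subgroup.center (SL2 F)) {s : SL2 F} :
    φ s ∈ Subgroup.normalizer (rootGroup φ : Set G) ↔ s ∈ borel F := by
  rw [← Subgroup.mem_comap, comap_normalizer_rootGroup hker]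

variable [Finite F] (hker : φ.ker = Subgroup.center (SL2 F))
include hker

lemma coprime_card_rootGroup_index :
    (Nat.card F).Coprime ((rootGroup φ).subgroupOf φ.range).index := by
  have hq : 2 ≤ Nat.card F := Finite.one_lt_card
  have hcard := Subgroup.card_mul_index ((rootGroup φ).subgroupOf φ.range)
  rw [Nat.card_congr (Subgroup.subgroupOfEquivOfLe rootGroup_le_range).toEquiv,
    card_rootGroup hker] at hcard
  have hdvd : ((rootGroup φ).subgroupOf φ.range).index ∣ Nat.card F ^ 2 - 1 := by
    refine Nat.dvd_of_mul_dvd_mul_left (by omega : 0 < Nat.card F) ?_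
    have hsq : Nat.card F ^ 2 - 1 = (Nat.card F + 1) * (Nat.card F - 1) := Nat.sq_sub_sq _ 1
    rw [hcard, hsq, mul_left_comm, ← card_SL2]
    exact Subgroup.card_range_dvd φ
  refine Nat.Coprime.coprime_dvd_right hdvd ?_
  rw [← Nat.coprime_pow_left_iff two_pos,
    Nat.coprime_self_sub_right (Nat.one_le_pow _ _ (by omega))]
  exact Nat.coprime_one_right _

lemma exists_inv_map_mul_mem_normalizer_rootGroup [Finite G] (hnorm : φ.range.Normal) (g : G) :
    ∃ s, (φ s)⁻¹ * g ∈ Subgroup.normalizer (rootGroup φ : Set G) := by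
  obtain ⟨p, hp, hq⟩ := exists_card_eq_prime_pow F
  have : Fact p.Prime := ⟨hp⟩
  have hpgroup : IsPGroup p ((rootGroup φ).subgroupOf φ.range) := .of_card <| by
    rw [Nat.card_congr (Subgroup.subgroupOfEquivOfLe rootGroup_le_range).toEquiv,
      card_rootGroup hker, hq]
  have hp_dvd : p ∣ Nat.card F := by
    refine hq ▸ dvd_pow_self p fun h0 => Finite.one_lt_card (α := F).ne' ?_
    rw [hq, h0, pow_zero]
  have hindex : ¬ p ∣ ((rootGroup φ).subgroupOf φ.range).index := fun hdvd =>
    hp.one_lt.ne' <| Nat.dvd_one.1 <| coprime_card_rootGroup_index hker ▸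
      Nat.dvd_gcd hp_dvd hdvd
  have hmap : ((hpgroup.toSylow hindex : Subgroup φ.range).map φ.range.subtype) = rootGroup φ := by
    rw [IsPGroup.toSylow_coe, Subgroup.map_subgroupOf_eq_of_le rootGroup_le_range]
  have hfrattini := Sylow.normalizer_sup_eq_top (hpgroup.toSylow hindex)
  rw [hmap] at hfrattini
  obtain ⟨n, hn, _, ⟨s, rfl⟩, hns⟩ :=
    Subgroup.mem_sup_of_normal_right.1 (hfrattini ▸ Subgroup.mem_top g⁻¹)
  refine ⟨s⁻¹, ?_⟩
  rw [map_inv, inv_inv, ← inv_inv g, ← hns, _root_.mul_inv_rev, mul_inv_cancel_left]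
  exact inv_mem hn

end RootGroup

section Levi

variable {F : Type*} [Field F] {G : Type*} [Group G]

/-- The common normalizer in `G` of the two opposite root subgroups. -/
def levi (φ : SL2 F →* G) : Subgroup G :=
  Subgroup.normalizer (rootGroup φ : Set G) ⊓
    (Subgroup.normalizer (rootGroup φ : Set G)).comap (MulAut.conj (φ weyl)⁻¹).toMonoidHom

/-- The elements of `G` inducing on the image of `SL(2,F)` conjugation by a diagonal matrix
`diag(c,1)`. -/
def diagGroup (φ : SL2 F →* G) : Subgroup G where
  carrier := {g | ∃ c, IsSemilinear φ g c (RingEquiv.refl F)}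
  one_mem' := ⟨1, .one⟩
  mul_mem' := by
    rintro g g' ⟨c, h⟩ ⟨c', h'⟩
    exact ⟨_, h.mul h'⟩
  inv_mem' := by
    rintro g ⟨c, h⟩
    exact ⟨_, h.inv⟩

variable {φ : SL2 F →* G}

lemma mem_levi {g : G} : g ∈ levi φ ↔ g ∈ Subgroup.normalizer (rootGroup φ : Set G) ∧
    (φ weyl)⁻¹ * g * φ weyl ∈ Subgroup.normalizer (rootGroup φ : Set G) := by
  simp [levi, Subgroup.mem_inf, Subgroup.mem_comap]

lemma exists_isSemilinear_of_mem_levi [Finite F] (hker : φ.ker = Subgroup.center (SL2 F)) {g : G}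
    (hg : g ∈ levi φ) : ∃ c τ, IsSemilinear φ g c τ := by
  obtain ⟨hg, hgw⟩ := mem_levi.1 hg
  have hupper (x : F) : ∃ y, MulAut.conj g (φ (upper x)) = φ (upper y) := by
    obtain ⟨y, hy⟩ := (Subgroup.mem_normalizer_iff.1 hg _).1 (map_upper_mem_rootGroup x)
    exact ⟨y, hy.symm⟩
  have hlower (x : F) : ∃ y, MulAut.conj g (φ (lower x)) = φ (lower y) := by
    obtain ⟨y, hy⟩ := (Subgroup.mem_normalizer_iff.1 hgw _).1 (map_upper_mem_rootGroup (-x))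
    refine ⟨-y, ?_⟩
    replace hy : φ (upper y) = _ := hy
    rw [show lower x = weyl * upper (-x) * weyl⁻¹ by rw [weyl_conj_upper, neg_neg],
      ← weyl_conj_upper]
    simp only [map_mul, map_inv, hy, MulAut.conj_apply]
    group
  choose σ hσ using hupper
  choose ρ hρ using hlower
  exact ActsOnRoots.exists_isSemilinear ⟨hσ, hρ⟩ hker

lemma map_diag_mem_diagGroup (a : Fˣ) : φ (diag a) ∈ diagGroup φ := by
  refine ⟨a ^ 2, fun x => ?_, fun x => ?_⟩
  · simp [← map_inv, ← map_mul, diag_conj_upper]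
  · simp [← map_inv, ← map_mul, diag_conj_lower]

lemma isSemilinear_conj_weyl {g : G} {c : Fˣ} (h : IsSemilinear φ g c (RingEquiv.refl F)) :
    IsSemilinear φ (φ weyl * g * (φ weyl)⁻¹) c⁻¹ (RingEquiv.refl F) := by
  have hupper (x : F) : (φ weyl)⁻¹ * φ (upper x) * φ weyl = φ (lower (-x)) := by
    rw [show upper x = weyl * lower (-x) * weyl⁻¹ by rw [weyl_conj_lower, neg_neg]]
    simp only [map_mul, map_inv]
    group
  have hlower (x : F) : (φ weyl)⁻¹ * φ (lower x) * φ weyl = φ (upper (-x)) := by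
    rw [show lower x = weyl * upper (-x) * weyl⁻¹ by rw [weyl_conj_upper, neg_neg]]
    simp only [map_mul, map_inv]
    group
  have hconj (y : SL2 F) : MulAut.conj (φ weyl * g * (φ weyl)⁻¹) (φ y) =
      φ weyl * MulAut.conj g ((φ weyl)⁻¹ * φ y * φ weyl) * (φ weyl)⁻¹ := by
    simp only [MulAut.conj_apply]
    group
  constructor <;> intro x <;> rw [hconj]
  · rw [hupper, h.conj_lower, ← map_inv, ← map_mul, ← map_mul, weyl_conj_lower]
    simp
  · rw [hlower, h.conj_upper, ← map_inv, ← map_mul, ← map_mul, weyl_conj_upper]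
    simp

lemma exists_inv_map_mul_mem_levi [Finite F] [Finite G] (hker : φ.ker = Subgroup.center (SL2 F))
    (hnorm : φ.range.Normal) (g : G) : ∃ s, (φ s)⁻¹ * g ∈ levi φ := by
  obtain ⟨s, hs⟩ := exists_inv_map_mul_mem_normalizer_rootGroup hker hnorm g
  obtain ⟨t, ht⟩ := exists_inv_map_mul_mem_normalizer_rootGroup hker hnorm
    ((φ s)⁻¹ * g * φ weyl)
  have ht_borel : t ∉ borel F := fun hb => weyl_notMem_borel (F := F) <| by
    rw [← map_mem_normalizer_rootGroup_iff hker] at hb ⊢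
    simpa [mul_assoc] using mul_mem (inv_mem hs) (mul_mem hb ht)
  obtain ⟨x, b, hb, rfl⟩ := exists_eq_upper_mul_weyl_mul ht_borel
  refine ⟨s * upper x, mem_levi.2 ⟨?_, ?_⟩⟩
  · have hx := (map_mem_normalizer_rootGroup_iff hker).2 (upper_mem_borel x)
    simpa [mul_assoc] using mul_mem (inv_mem hx) hs
  · have hmem := mul_mem ((map_mem_normalizer_rootGroup_iff hker).2 hb) ht
    simp only [map_mul] at hmem ⊢
    convert hmem using 1
    group

lemma index_levi_dvd [Finite F] [Finite G] (hker : φ.ker = Subgroup.center (SL2 F))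
    (hnorm : φ.range.Normal) : (levi φ).index ∣ (Nat.card F + 1) * Nat.card F := by
  rw [← index_comap_of_forall_exists φ _ (exists_inv_map_mul_mem_levi hker hnorm)]
  have hdiag (a : Fˣ) : diag a ∈ (levi φ).comap φ := by
    have diag_mem (b : Fˣ) : φ (diag b) ∈ Subgroup.normalizer (rootGroup φ : Set G) :=
      (map_mem_normalizer_rootGroup_iff hker).2 (mem_borel.2 rfl)
    refine Subgroup.mem_comap.2 (mem_levi.2 ⟨diag_mem a, ?_⟩)
    have hconj : weyl⁻¹ * diag a * weyl = diag a⁻¹ := by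
      apply ext_entries <;>
        simp [mul_entry, weyl, diag, inv_zero_zero, inv_zero_one, inv_one_zero, inv_one_one]
    rw [← map_inv, ← map_mul, ← map_mul, hconj]
    exact diag_mem a⁻¹
  let diagHom : Fˣ →* (levi φ).comap φ :=
    .mk' (fun a => ⟨diag a, hdiag a⟩) fun a b => Subtype.ext <| by
      apply ext_entries <;> simp [mul_entry, diag, mul_comm]
  have hcard : Nat.card F - 1 ∣ Nat.card ((levi φ).comap φ) := by
    rw [← Nat.card_units F]
    exact Subgroup.card_dvd_of_injective diagHom fun a b h =>
      diag_injective (congrArg Subtype.val h)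
  have hq : 0 < Nat.card F - 1 := Nat.sub_pos_of_lt Finite.one_lt_card
  refine Nat.dvd_of_mul_dvd_mul_left hq ?_
  calc (Nat.card F - 1) * ((levi φ).comap φ).index
      ∣ Nat.card ((levi φ).comap φ) * ((levi φ).comap φ).index := mul_dvd_mul_right hcard _
    _ = (Nat.card F - 1) * ((Nat.card F + 1) * Nat.card F) := by
        rw [Subgroup.card_mul_index, card_SL2]
        ring

lemma card_levi_dvd [Finite F] (hker : φ.ker = Subgroup.center (SL2 F)) :
    Nat.card (levi φ) ∣ Nat.card (diagGroup φ) * Nat.card (F ≃+* F) := by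
  choose c τ hτ using fun g : levi φ => exists_isSemilinear_of_mem_levi hker g.2
  let fieldAut : levi φ →* RingAut F :=
    .mk' τ fun g h => ((hτ (g * h)).unique hker ((hτ g).mul (hτ h))).2
  have hkernel : fieldAut.ker.map (levi φ).subtype ≤ diagGroup φ := by
    rintro _ ⟨g, hg, rfl⟩
    exact ⟨c g, (show τ g = RingEquiv.refl F from hg) ▸ hτ g⟩
  rw [← Subgroup.card_mul_index fieldAut.ker, Subgroup.index_ker]
  refine mul_dvd_mul ?_ (Subgroup.card_subgroup_dvd_card fieldAut.range)
  rw [← Subgroup.card_map_of_injective (levi φ).subtype_injective]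
  exact Subgroup.card_dvd_of_le hkernel

section Centralizer

variable (hcent : Subgroup.centralizer (φ.range : Set G) = ⊥)
include hcent

lemma weyl_conj_of_mem_diagGroup {g : G} (hg : g ∈ diagGroup φ) :
    φ weyl * g * (φ weyl)⁻¹ = g⁻¹ := by
  obtain ⟨c, hc⟩ := hg
  exact (isSemilinear_conj_weyl hc).ext hcent hc.inv

lemma commute_of_mem_diagGroup {g h : G} (hg : g ∈ diagGroup φ) (hh : h ∈ diagGroup φ) :
    Commute g h := by
  obtain ⟨c, hc⟩ := hg
  obtain ⟨d, hd⟩ := hh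
  refine (hc.mul hd).ext hcent ?_
  convert hd.mul hc using 1
  exact mul_comm c d

lemma card_diagGroup_dvd (hker : φ.ker = Subgroup.center (SL2 F)) :
    Nat.card (diagGroup φ) ∣ Nat.card F - 1 := by
  choose c hc using fun g : diagGroup φ => g.2
  let scalar : diagGroup φ →* Fˣ :=
    .mk' c fun g h => ((hc (g * h)).unique hker ((hc g).mul (hc h))).1
  have hinj : Function.Injective scalar := fun g h hgh =>
    Subtype.ext ((hc g).ext hcent ((show c g = c h from hgh) ▸ hc h))
  rw [← Nat.card_units F]
  exact Subgroup.card_dvd_of_injective scalar hinj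

end Centralizer

lemma card_dvd_card_diagGroup_mul [Finite F] [Finite G] (hker : φ.ker = Subgroup.center (SL2 F))
    (hnorm : φ.range.Normal) :
    Nat.card G ∣ (Nat.card F + 1) * Nat.card F * (Nat.card (diagGroup φ) * Nat.card (F ≃+* F)) := by
  rw [← Subgroup.index_mul_card (levi φ)]
  exact mul_dvd_mul (index_levi_dvd hker hnorm) (card_levi_dvd hker)

end Levi

/-! ### Subgroups fixing a unique point -/

section UniqueFixedPoint

open MulAction

variable {G : Type*} [Group G] {Pt : Type*} [MulAction G Pt]

lemma normalizer_le_stabilizer {K : Subgroup G} {α : Pt} (hα : K ≤ stabilizer G α)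
    (huniq : ∀ β, K ≤ stabilizer G β → β = α) :
    Subgroup.normalizer (K : Set G) ≤ stabilizer G α := by
  refine fun g hg => huniq _ fun t ht => ?_
  have hconj : g⁻¹ * t * g ∈ K := (Subgroup.mem_normalizer_iff''.1 hg t).1 ht
  have hfix : (g⁻¹ * t * g) • α = α := hα hconj
  rw [mem_stabilizer_iff]
  rwa [mul_smul, mul_smul, inv_smul_eq_iff] at hfix

lemma card_mul_ncard_orbit_dvd {K : Subgroup G} {α β : Pt} (hα : K ≤ stabilizer G α)
    (hβ : K ≤ stabilizer G β) :
    Nat.card K * (orbit (stabilizer G α) β).ncard ∣ Nat.card G := by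
  have hK : Nat.card K ∣ Nat.card (stabilizer (stabilizer G α) β) := by
    rw [← Nat.card_congr (Subgroup.subgroupOfEquivOfLe hα).toEquiv]
    exact Subgroup.card_dvd_of_le fun g hg => hβ hg
  calc Nat.card K * (orbit (stabilizer G α) β).ncard
      ∣ Nat.card (stabilizer (stabilizer G α) β) * (stabilizer (stabilizer G α) β).index := by
        rw [index_stabilizer]
        exact Nat.mul_dvd_mul_right hK _
    _ = Nat.card (stabilizer G α) := Subgroup.card_mul_index _
    _ ∣ Nat.card G := Subgroup.card_subgroup_dvd_card _

lemma mem_normalizer_of_conj_eq_or_eq_inv [Finite G] {K : Subgroup G} {g : G}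
    (h : ∀ t ∈ K, g * t * g⁻¹ = t ∨ g * t * g⁻¹ = t⁻¹) : g ∈ Subgroup.normalizer (K : Set G) :=
  Subgroup.mem_normalizer_fintype fun t ht =>
    (h t ht).elim (fun e => e.symm ▸ ht) (fun e => e.symm ▸ inv_mem ht)

variable [Finite G] {R : ℕ}

/- A Sylow `ℓ`-subgroup `Q` of `T` fixes a point, since `ℓ` does not divide the degree. If the point
is unique it is fixed by the normalizer of `Q`, which contains `A`. If it is not, a two-point
stabilizer contains `Q`, so `|Q| R` divides `|G|`. -/
lemma prime_pow_dvd_index_of_forall_exists_smul_ne {T : Subgroup G} {A : Set G}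
    (hA : ∀ n ∈ A, ∀ t ∈ T, n * t * n⁻¹ = t ∨ n * t * n⁻¹ = t⁻¹)
    (hfix : ∀ α : Pt, ∃ g ∈ A, g • α ≠ α)
    (horbit : ∀ α β : Pt, β ≠ α → R ∣ (orbit (stabilizer G α) β).ncard)
    {ℓ b : ℕ} (hℓ : ℓ.Prime) (hℓPt : ¬ ℓ ∣ Nat.card Pt) (hb : ℓ ^ b ∣ R) : ℓ ^ b ∣ T.index := by
  have : Fact ℓ.Prime := ⟨hℓ⟩
  let Q : Sylow ℓ T := default
  let K : Subgroup G := (Q : Subgroup T).map T.subtype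
  have hKT : K ≤ T := Subgroup.map_subtype_le _
  have hK : Nat.card K = Nat.card Q := Subgroup.card_map_of_injective T.subtype_injective
  obtain ⟨α, hα⟩ := (Q.isPGroup'.map T.subtype).nonempty_fixed_point_of_prime_not_dvd_card Pt hℓPt
  replace hα : K ≤ stabilizer G α := fun g hg => hα ⟨g, hg⟩
  obtain ⟨β, hβ, hne⟩ : ∃ β, K ≤ stabilizer G β ∧ β ≠ α := by
    by_contra! huniq
    obtain ⟨g, hg, hgα⟩ := hfix α
    exact hgα (normalizer_le_stabilizer hα huniq
      (mem_normalizer_of_conj_eq_or_eq_inv fun t ht => hA g hg t (hKT ht)))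
  have hdvd : Nat.card Q * ℓ ^ b ∣ Nat.card Q * ((Q : Subgroup T).index * T.index) := by
    rw [← mul_assoc, Subgroup.card_mul_index, Subgroup.card_mul_index, ← hK]
    exact (Nat.mul_dvd_mul_left _ (hb.trans (horbit α β hne))).trans
      (card_mul_ncard_orbit_dvd hα hβ)
  have hcop : (ℓ ^ b).Coprime (Q : Subgroup T).index :=
    ((Nat.Prime.coprime_iff_not_dvd hℓ).2 Q.not_dvd_index).pow_left b
  exact hcop.dvd_of_dvd_mul_left (Nat.dvd_of_mul_dvd_mul_left Nat.card_pos hdvd)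

lemma exists_forall_smul_eq_or_dvd_index {T : Subgroup G} {A : Set G}
    (hA : ∀ n ∈ A, ∀ t ∈ T, n * t * n⁻¹ = t ∨ n * t * n⁻¹ = t⁻¹) (hR : R.Coprime (Nat.card Pt))
    (horbit : ∀ α β : Pt, β ≠ α → R ∣ (orbit (stabilizer G α) β).ncard) :
    (∃ α : Pt, ∀ g ∈ A, g • α = α) ∨ R ∣ T.index := by
  refine or_iff_not_imp_left.2 fun hfix => (Nat.dvd_iff_prime_pow_dvd_dvd _ _).2 fun ℓ b hℓ hb => ?_
  push Not at hfix
  rcases eq_or_ne b 0 with rfl | hb0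
  · simp
  · refine prime_pow_dvd_index_of_forall_exists_smul_ne hA hfix horbit hℓ ?_ hb
    exact (Nat.Prime.coprime_iff_not_dvd hℓ).1
      (hR.coprime_dvd_left ((dvd_pow_self ℓ hb0).trans hb))

end UniqueFixedPoint

/-! ### Point stabilizers in `SL(2,q)` -/

section PointStabilizer

variable {F : Type*} [Field F] {G : Type*} [Group G] {Pt : Type*} [MulAction G Pt]

/-- The preimage in `SL(2,F)` of the stabilizer of a point. -/
abbrev pointStabilizer (φ : SL2 F →* G) (α : Pt) : Subgroup (SL2 F) :=
  (MulAction.stabilizer G α).comap φ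

variable {φ : SL2 F →* G}

section Transitive

variable [MulAction.IsPretransitive φ.range Pt] (α : Pt)

lemma index_pointStabilizer : (pointStabilizer φ α).index = Nat.card Pt := by
  have : MulAction.IsPretransitive G Pt := .of_smul_eq (M := φ.range) Subtype.val rfl
  rw [index_comap_of_forall_exists, MulAction.index_stabilizer_of_transitive]
  intro g
  obtain ⟨⟨_, s, rfl⟩, hs⟩ := MulAction.exists_smul_eq φ.range α (g • α)
  refine ⟨s, ?_⟩
  rw [MulAction.mem_stabilizer_iff, mul_smul, inv_smul_eq_iff]
  exact hs.symm

lemma card_pointStabilizer_mul :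
    Nat.card (pointStabilizer φ α) * Nat.card Pt = Nat.card (SL2 F) := by
  rw [← index_pointStabilizer (φ := φ) α, Subgroup.card_mul_index]

lemma pointStabilizer_ne_top [Finite Pt] [Nontrivial Pt] : pointStabilizer φ α ≠ ⊤ := by
  intro htop
  have hindex := index_pointStabilizer (φ := φ) α
  rw [htop, Subgroup.index_top] at hindex
  exact Finite.one_lt_card.ne hindex

end Transitive

lemma le_borel_of_upper_mem {M : Subgroup (SL2 F)} (hU : ∀ x, upper x ∈ M) (hM : M ≠ ⊤) :
    M ≤ borel F := by
  intro s hs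
  by_contra hsB
  obtain ⟨x, b, hb, rfl⟩ := exists_eq_upper_mul_weyl_mul hsB
  obtain ⟨y, a, rfl⟩ := exists_eq_upper_mul_diag hb
  have hwb : weyl * (upper y * diag a) ∈ M := by
    rw [mul_assoc] at hs
    exact (mul_mem_cancel_left (hU x)).1 hs
  have hL : ∀ z, lower z ∈ M := by
    intro z
    have hz : lower z = weyl * (upper y * diag a) * upper (-z / (a : F) ^ 2) *
        (weyl * (upper y * diag a))⁻¹ :=
      calc lower z = weyl * upper (-z) * weyl⁻¹ := by rw [weyl_conj_upper, neg_neg]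
        _ = weyl * (upper y * diag a * upper (-z / (a : F) ^ 2) * (upper y * diag a)⁻¹) *
            weyl⁻¹ := by
          rw [upper_mul_diag_conj_upper, mul_div_cancel₀ _ (pow_ne_zero 2 a.ne_zero)]
        _ = _ := by group
    rw [hz]
    exact mul_mem (mul_mem hwb (hU _)) (inv_mem hwb)
  exact hM (eq_top_of_upper_mem_of_lower_mem hU hL)

variable [Finite F] [Finite G] [Finite Pt] [Nontrivial Pt] [MulAction.IsPretransitive φ.range Pt]
  (hker : φ.ker = Subgroup.center (SL2 F)) (hnorm : φ.range.Normal)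
include hker hnorm

lemma stabilizer_le_normalizer_rootGroup {α : Pt} (hU : ∀ x, upper x ∈ pointStabilizer φ α) :
    MulAction.stabilizer G α ≤ Subgroup.normalizer (rootGroup φ : Set G) := by
  intro g hg
  obtain ⟨s, hs⟩ := exists_inv_map_mul_mem_normalizer_rootGroup hker hnorm g
  obtain ⟨x, hx⟩ := (Subgroup.mem_normalizer_iff.1 (inv_mem hs) _).1 (map_upper_mem_rootGroup 1)
  have hconj : s * upper 1 * s⁻¹ ∈ pointStabilizer φ α := by
    have heq : φ (s * upper 1 * s⁻¹) = g * φ (upper x) * g⁻¹ := by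
      rw [map_mul, map_mul, map_inv]
      change _ = g * (fun x => φ (upper x)) x * g⁻¹
      rw [hx]
      group
    rw [Subgroup.mem_comap, heq]
    exact mul_mem (mul_mem hg (hU x)) (inv_mem hg)
  have hsB : s ∈ borel F := mem_borel_of_conj_upper_one_mem
    (le_borel_of_upper_mem hU (pointStabilizer_ne_top α) hconj)
  exact (mul_mem_cancel_left (inv_mem ((map_mem_normalizer_rootGroup_iff hker).2 hsB))).1 hs

/- If the characteristic does not divide the degree, a root group fixes a point, whose stabilizer is
then the normalizer of the root group. -/
lemma exists_isCoatom_pointStabilizer_of_coprime [MulAction.IsPreprimitive G Pt]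
    (hq : (Nat.card F).Coprime (Nat.card Pt)) : ∃ α : Pt, IsCoatom (pointStabilizer φ α) := by
  obtain ⟨p, hp, hpq⟩ := exists_card_eq_prime_pow F
  have : Fact p.Prime := ⟨hp⟩
  have : Finite (F ≃+* F) := DFunLike.finite _
  have hpPt : ¬ p ∣ Nat.card Pt := (Nat.Prime.coprime_iff_not_dvd hp).1
    (hq.coprime_dvd_left (hpq ▸ dvd_pow_self p Nat.card_pos.ne'))
  obtain ⟨α, hα⟩ := (IsPGroup.of_card ((card_rootGroup hker).trans hpq)
    ).nonempty_fixed_point_of_prime_not_dvd_card Pt hpPt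
  have hle := stabilizer_le_normalizer_rootGroup hker hnorm
    fun x => hα ⟨_, map_upper_mem_rootGroup (φ := φ) x⟩
  have hne : Subgroup.normalizer (rootGroup φ : Set G) ≠ ⊤ := fun h =>
    weyl_notMem_borel ((map_mem_normalizer_rootGroup_iff hker).1 (h ▸ Subgroup.mem_top _))
  have hmax : IsCoatom (MulAction.stabilizer G α) :=
    (MulAction.isCoatom_stabilizer_iff_preprimitive G α).2 inferInstance
  refine ⟨α, ?_⟩
  rw [pointStabilizer, ← (hmax.le_iff_eq hne).1 hle, comap_normalizer_rootGroup hker]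
  exact isCoatom_borel

end PointStabilizer

/-! ### Tori fixing a point -/

section Tori

variable {F : Type*} [Field F]

/- Both `t` and `t⁻¹` are combinations of the identity with `y`, respectively `y⁻¹`, with the same
coefficients. -/
lemma conj_eq_or_eq_inv_of_mem_extendedCentralizer {y n t : SL2 F}
    (hy : y ∉ Subgroup.center (SL2 F)) (hn : n ∈ extendedCentralizer y) (ht : Commute t y) :
    n * t * n⁻¹ = t ∨ n * t * n⁻¹ = t⁻¹ := by
  simp only [mem_extendedCentralizer, mul_inv_eq_iff_eq_mul] at hn ⊢
  refine hn.imp (fun h => isCommTransitive n y t hy h ht.symm) fun h => ?_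
  obtain ⟨α, β, h00, h01, h10, h11⟩ := exists_eq_add_mul_of_commute hy ht
  have entry (i j : Fin 2) := congrArg (fun m : SL2 F => m i j) h
  simp only [Fin.forall_fin_two, mul_entry, inv_zero_zero, inv_zero_one, inv_one_zero,
    inv_one_one] at entry
  obtain ⟨⟨e00, e01⟩, e10, e11⟩ := entry
  apply ext_entries <;>
    simp only [mul_entry, inv_zero_zero, inv_zero_one, inv_one_zero, inv_one_one, h00, h01, h10,
      h11]
  · linear_combination β * e00
  · linear_combination β * e01
  · linear_combination β * e10
  · linear_combination β * e11

variable [Finite F] {G : Type*} [Group G] {φ : SL2 F →* G}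

lemma card_dvd_two_mul_card_map (hker : φ.ker = Subgroup.center (SL2 F)) {K : Subgroup (SL2 F)}
    (hK : Subgroup.center (SL2 F) ≤ K) : Nat.card K ∣ 2 * Nat.card (K.map φ) := by
  have hZ : Nat.card (Subgroup.center (SL2 F)) ∣ 2 := by
    rcases card_center_eq (F := F) with ⟨h, -⟩ | ⟨h, -⟩ <;> simp [h]
  rw [← Subgroup.relIndex_ker, hker, ← Subgroup.card_mul_index ((Subgroup.center _).subgroupOf K),
    Nat.card_congr (Subgroup.subgroupOfEquivOfLe hK).toEquiv]
  exact Nat.mul_dvd_mul_right hZ _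

variable [Finite G] (hker : φ.ker = Subgroup.center (SL2 F)) (hnorm : φ.range.Normal)
include hker hnorm

lemma index_diagGroup_dvd :
    (diagGroup φ).index ∣ (Nat.card F + 1) * Nat.card F * Nat.card (F ≃+* F) := by
  have hdvd := card_dvd_card_diagGroup_mul hker hnorm
  rw [← Subgroup.card_mul_index (diagGroup φ), mul_left_comm] at hdvd
  exact Nat.dvd_of_mul_dvd_mul_left Nat.card_pos hdvd

variable (hcent : Subgroup.centralizer (φ.range : Set G) = ⊥)
include hcent

lemma card_dvd_card_SL2_mul : Nat.card G ∣ Nat.card (SL2 F) * Nat.card (F ≃+* F) :=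
  calc Nat.card G ∣ (Nat.card F + 1) * Nat.card F * ((Nat.card F - 1) * Nat.card (F ≃+* F)) :=
        (card_dvd_card_diagGroup_mul hker hnorm).trans
          (Nat.mul_dvd_mul_left _ (Nat.mul_dvd_mul_right (card_diagGroup_dvd hcent hker) _))
    _ = Nat.card (SL2 F) * Nat.card (F ≃+* F) := by rw [card_SL2]; ring

lemma index_map_centralizer_companion_dvd {τ : F} (hτ : IsNonsplitTrace τ) :
    ((Subgroup.centralizer {companion τ}).map φ).index ∣
      2 * (Nat.card F - 1) * Nat.card (F ≃+* F) * Nat.card F := by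
  set T := (Subgroup.centralizer {companion τ}).map φ
  have hT : Nat.card F + 1 ∣ 2 * Nat.card T := by
    rw [← card_centralizer_companion hτ]
    exact card_dvd_two_mul_card_map hker (Subgroup.center_le_centralizer _)
  refine Nat.dvd_of_mul_dvd_mul_left (by lia : 0 < Nat.card F + 1) ?_
  calc (Nat.card F + 1) * T.index ∣ 2 * Nat.card T * T.index := Nat.mul_dvd_mul_right hT _
    _ = 2 * Nat.card G := by rw [mul_assoc, Subgroup.card_mul_index]
    _ ∣ 2 * (Nat.card (SL2 F) * Nat.card (F ≃+* F)) :=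
        Nat.mul_dvd_mul_left 2 (card_dvd_card_SL2_mul hker hnorm hcent)
    _ = _ := by rw [card_SL2]; ring

variable {Pt : Type*} [MulAction G Pt] {R : ℕ} (hRF : R.Coprime (Nat.card F))
  (hRPt : R.Coprime (Nat.card Pt)) (horbit : ∀ α β : Pt, β ≠ α →
    R ∣ (MulAction.orbit (MulAction.stabilizer G α) β).ncard)
include hRF hRPt horbit

lemma exists_diag_mem_or_dvd :
    (∃ α : Pt, (∀ a, diag a ∈ pointStabilizer φ α) ∧ weyl ∈ pointStabilizer φ α) ∨
      R ∣ (Nat.card F + 1) * Nat.card (F ≃+* F) := by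
  have hA : ∀ n ∈ insert (φ weyl) (Set.range fun a => φ (diag a)), ∀ t ∈ diagGroup φ,
      n * t * n⁻¹ = t ∨ n * t * n⁻¹ = t⁻¹ := by
    rintro _ (rfl | ⟨a, rfl⟩) t ht
    · exact .inr (weyl_conj_of_mem_diagGroup hcent ht)
    · exact .inl (mul_inv_eq_iff_eq_mul.2
        (commute_of_mem_diagGroup hcent (map_diag_mem_diagGroup a) ht))
  refine (exists_forall_smul_eq_or_dvd_index hA hRPt horbit).imp
    (fun ⟨α, hα⟩ => ⟨α, fun a => hα _ (.inr ⟨a, rfl⟩), hα _ (.inl rfl)⟩) fun hdvd => ?_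
  refine hRF.dvd_of_dvd_mul_right ?_
  rw [mul_right_comm]
  exact hdvd.trans (index_diagGroup_dvd hker hnorm)

lemma exists_extendedCentralizer_le_or_dvd {τ : F} (hτ : IsNonsplitTrace τ) :
    (∃ α : Pt, extendedCentralizer (companion τ) ≤ pointStabilizer φ α) ∨
      R ∣ 2 * (Nat.card F - 1) * Nat.card (F ≃+* F) := by
  have hA : ∀ n ∈ φ '' extendedCentralizer (companion τ),
      ∀ t ∈ (Subgroup.centralizer {companion τ}).map φ, n * t * n⁻¹ = t ∨ n * t * n⁻¹ = t⁻¹ := by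
    rintro _ ⟨n, hn, rfl⟩ _ ⟨t, ht, rfl⟩
    simp only [← map_inv, ← map_mul]
    exact (conj_eq_or_eq_inv_of_mem_extendedCentralizer companion_notMem_center hn
      (Subgroup.mem_centralizer_singleton_iff.1 ht)).imp (congrArg φ) (congrArg φ)
  refine (exists_forall_smul_eq_or_dvd_index hA hRPt horbit).imp
    (fun ⟨α, hα⟩ => ⟨α, fun n hn => hα _ ⟨n, hn, rfl⟩⟩) fun hdvd => ?_
  exact hRF.dvd_of_dvd_mul_right
    (hdvd.trans (index_map_centralizer_companion_dvd hker hnorm hcent hτ))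

end Tori

lemma coprime_of_dvd_sub_one {m n : ℕ} (hn : 0 < n) (h : m ∣ n - 1) : m.Coprime n :=
  Nat.Coprime.coprime_dvd_left h ((Nat.coprime_self_sub_left hn).2 (Nat.coprime_one_left n))

section Maximality

section Subgroups

variable {F : Type*} [Field F] [Finite F] {H M : Subgroup (SL2 F)}

lemma card_eq_of_split_of_lt (hq : 4 ≤ Nat.card F) (hT : ∀ a, diag a ∈ H) (hw : weyl ∈ H)
    (hHM : H < M) (hM : M ≠ ⊤) : Nat.card H = 2 * (Nat.card F - 1) ∧
      (Nat.card F = 5 ∨ Nat.card F = 7 ∨ Nat.card F = 9 ∨ Nat.card F = 11) := by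
  have hlt : Nat.card H < Nat.card M := Set.Finite.card_lt_card (Set.toFinite _) hHM
  have hcardH := card_of_split hq hT hw (hHM.le.trans_lt hM.lt_top).ne
  have hcardM := card_of_split hq (fun a => hHM.le (hT a)) (hHM.le hw) hM
  have hle : 2 * (Nat.card F - 1) ≤ (Nat.card F - 1) * (Nat.card F + 1) := by
    rw [mul_comm]
    exact Nat.mul_le_mul_left _ (by lia)
  generalize (Nat.card F - 1) * (Nat.card F + 1) = n at *
  lia

lemma card_eq_of_nonsplit_of_lt (hq : 4 ≤ Nat.card F) {τ : F} (hτ : IsNonsplitTrace τ)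
    (hN : extendedCentralizer (companion τ) ≤ H) (hHM : H < M) (hM : M ≠ ⊤) :
    Nat.card H = 2 * (Nat.card F + 1) ∧
      (Nat.card F = 5 ∨ Nat.card F = 7 ∨ Nat.card F = 9) := by
  have hlt : Nat.card H < Nat.card M := Set.Finite.card_lt_card (Set.toFinite _) hHM
  have hcardH := card_of_nonsplit hq hτ hN (hHM.le.trans_lt hM.lt_top).ne
  have hcardM := card_of_nonsplit hq hτ (hN.trans hHM.le) hM
  lia

end Subgroups

variable {F : Type*} [Field F] [Finite F] {G : Type*} [Group G] [Finite G] {φ : SL2 F →* G}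
  {Pt : Type*} [MulAction G Pt] [Finite Pt] [Nontrivial Pt] [MulAction.IsPretransitive φ.range Pt]
  (hker : φ.ker = Subgroup.center (SL2 F)) (hnorm : φ.range.Normal)
  (hcent : Subgroup.centralizer (φ.range : Set G) = ⊥)
include hker hnorm hcent

lemma card_stabilizer_dvd (α : Pt) : Nat.card (MulAction.stabilizer G α) ∣
    Nat.card (pointStabilizer φ α) * Nat.card (F ≃+* F) := by
  have : MulAction.IsPretransitive G Pt := .of_smul_eq (M := φ.range) Subtype.val rfl
  have hdvd := card_dvd_card_SL2_mul hker hnorm hcent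
  rw [← Subgroup.card_mul_index (MulAction.stabilizer G α),
    MulAction.index_stabilizer_of_transitive, ← card_pointStabilizer_mul (φ := φ) α,
    mul_right_comm] at hdvd
  exact Nat.dvd_of_mul_dvd_mul_right Nat.card_pos hdvd

variable (hq : 4 ≤ Nat.card F) {R : ℕ} (hR : R ≠ 1) (hRPt : R ∣ Nat.card Pt - 1)
include hq hR hRPt

section FixedTorus

variable {α : Pt} (hRα : 3 * R ∣ Nat.card (MulAction.stabilizer G α))
include hRα

lemma isCoatom_pointStabilizer_of_diag_mem (hT : ∀ a, diag a ∈ pointStabilizer φ α)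
    (hw : weyl ∈ pointStabilizer φ α) : IsCoatom (pointStabilizer φ α) := by
  refine ⟨pointStabilizer_ne_top α, fun M hlt => ?_⟩
  by_contra hM
  obtain ⟨hcard, hF⟩ := card_eq_of_split_of_lt hq hT hw hlt hM
  have hdvd := hRα.trans (card_stabilizer_dvd hker hnorm hcent α)
  have hmul := card_pointStabilizer_mul (φ := φ) α
  rw [card_SL2, hcard] at hmul
  rw [hcard] at hdvd
  have h3 := (Dvd.intro _ rfl).trans hdvd
  rcases hF with hF | hF | hF | hF
  · rw [card_ringEquiv_eq_of_card_eq_pow (n := 1) Nat.prime_five hF, hF] at h3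
    lia
  · rw [card_ringEquiv_eq_of_card_eq_pow (n := 1) Nat.prime_seven hF, hF] at hdvd
    rw [hF] at hmul
    have hPt : Nat.card Pt = 28 := by lia
    rw [hPt] at hRPt
    exact hR (Nat.eq_one_of_dvd_coprimes (by norm_num : Nat.Coprime 4 27)
      (Nat.dvd_of_mul_dvd_mul_left three_pos hdvd) hRPt)
  · rw [card_ringEquiv_eq_of_card_eq_pow (n := 2) Nat.prime_three hF, hF] at h3
    lia
  · rw [card_ringEquiv_eq_of_card_eq_pow (n := 1) Nat.prime_eleven hF, hF] at h3
    lia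

lemma isCoatom_pointStabilizer_of_extendedCentralizer_le {τ : F} (hτ : IsNonsplitTrace τ)
    (hN : extendedCentralizer (companion τ) ≤ pointStabilizer φ α) :
    IsCoatom (pointStabilizer φ α) := by
  refine ⟨pointStabilizer_ne_top α, fun M hlt => ?_⟩
  by_contra hM
  obtain ⟨hcard, hF⟩ := card_eq_of_nonsplit_of_lt hq hτ hN hlt hM
  have hdvd := hRα.trans (card_stabilizer_dvd hker hnorm hcent α)
  have hmul := card_pointStabilizer_mul (φ := φ) α
  rw [card_SL2, hcard] at hmul
  rw [hcard] at hdvd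
  have h3 := (Dvd.intro _ rfl).trans hdvd
  rcases hF with hF | hF | hF
  · rw [card_ringEquiv_eq_of_card_eq_pow (n := 1) Nat.prime_five hF, hF] at hdvd
    rw [hF] at hmul
    have hPt : Nat.card Pt = 10 := by lia
    rw [hPt] at hRPt
    exact hR (Nat.eq_one_of_dvd_coprimes (by norm_num : Nat.Coprime 4 9)
      (Nat.dvd_of_mul_dvd_mul_left three_pos hdvd) hRPt)
  · rw [card_ringEquiv_eq_of_card_eq_pow (n := 1) Nat.prime_seven hF, hF] at h3
    lia
  · rw [card_ringEquiv_eq_of_card_eq_pow (n := 2) Nat.prime_three hF, hF] at h3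
    lia

end FixedTorus

theorem exists_isCoatom_pointStabilizer_or_dvd
    (hFPt : ¬ (Nat.card F).Coprime (Nat.card Pt))
    (hRα : ∀ α : Pt, 3 * R ∣ Nat.card (MulAction.stabilizer G α))
    (horbit : ∀ α β : Pt, β ≠ α → R ∣ (MulAction.orbit (MulAction.stabilizer G α) β).ncard) :
    (∃ α : Pt, IsCoatom (pointStabilizer φ α)) ∨
      R ∣ (Nat.card F + 1).gcd 4 * Nat.card (F ≃+* F) := by
  have hRPt' : R.Coprime (Nat.card Pt) := coprime_of_dvd_sub_one Nat.card_pos hRPt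
  have hRF : R.Coprime (Nat.card F) := by
    obtain ⟨p, hp, hpq⟩ := exists_card_eq_prime_pow F
    rw [hpq] at hFPt ⊢
    have hpPt : p ∣ Nat.card Pt := by
      by_contra h
      exact hFPt (((Nat.Prime.coprime_iff_not_dvd hp).2 h).pow_left _)
    exact (hRPt'.coprime_dvd_right hpPt).pow_right _
  rcases exists_diag_mem_or_dvd hker hnorm hcent hRF hRPt' horbit with ⟨α, hT, hw⟩ | hsplit
  · exact .inl ⟨α, isCoatom_pointStabilizer_of_diag_mem hker hnorm hcent hq hR hRPt (hRα α) hT hw⟩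
  obtain ⟨τ, hτ⟩ := exists_isNonsplitTrace (F := F)
  rcases exists_extendedCentralizer_le_or_dvd hker hnorm hcent hRF hRPt' horbit hτ with
    ⟨α, hN⟩ | hnonsplit
  · exact .inl ⟨α, isCoatom_pointStabilizer_of_extendedCentralizer_le hker hnorm hcent hq hR hRPt
      (hRα α) hτ hN⟩
  have hgcd : (Nat.card F + 1).gcd (2 * (Nat.card F - 1)) ∣ (Nat.card F + 1).gcd 4 := by
    refine Nat.dvd_gcd (Nat.gcd_dvd_left ..) ?_
    rw [show 4 = 2 * (Nat.card F + 1) - 2 * (Nat.card F - 1) by lia]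
    exact Nat.dvd_sub ((Nat.gcd_dvd_left ..).mul_left 2) (Nat.gcd_dvd_right ..)
  refine .inr ((Nat.dvd_gcd hsplit hnonsplit).trans ?_)
  rw [Nat.gcd_mul_right]
  exact Nat.mul_dvd_mul_right hgcd _

end Maximality

/-! ### Counting points by root group orbits -/

section SquareClasses

variable {F : Type*} [Field F]

section

variable {f : F → ℕ} (hf : ∀ a ≠ 0, ∀ x, f (a ^ 2 * x) = f x) {ν : F} (hν : ν ≠ 0)
  (hsq : ∀ x, IsSquare x ∨ IsSquare (ν * x))
include hf hν hsq

lemma add_mul_eq_of_forall_isSquare_or {x : F} (hx : x ≠ 0) : f x + f (ν * x) = f 1 + f ν := by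
  rcases hsq x with ⟨a, ha⟩ | ⟨a, ha⟩
  · have ha0 : a ≠ 0 := left_ne_zero_of_mul (ha ▸ hx)
    rw [ha, ← sq, ← hf a ha0 1, ← hf a ha0 ν, mul_one, mul_comm ν]
  · have ha0 : a ≠ 0 := left_ne_zero_of_mul (ha ▸ mul_ne_zero hν hx)
    have hx : x = (a / ν) ^ 2 * ν := by
      field_simp
      rw [mul_comm, ha, sq]
    rw [ha, ← sq, ← hf a ha0 1, ← hf (a / ν) (div_ne_zero ha0 hν) ν, mul_one, ← hx, add_comm]

lemma two_mul_sum_eq_of_forall_isSquare_or [Fintype F] :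
    2 * ∑ x, f x = 2 * f 0 + (Nat.card F - 1) * (f 1 + f ν) := by
  classical
  calc 2 * ∑ x, f x = ∑ x, (f x + f (ν * x)) := by
        rw [Finset.sum_add_distrib, two_mul, ← Equiv.sum_comp (Equiv.mulLeft₀ ν hν) f]
        simp only [Equiv.mulLeft₀_apply]
    _ = 2 * f 0 + ∑ x ∈ Finset.univ.erase 0, (f x + f (ν * x)) := by
        rw [← Finset.add_sum_erase _ _ (Finset.mem_univ 0), mul_zero, two_mul]
    _ = 2 * f 0 + (Nat.card F - 1) * (f 1 + f ν) := by
        rw [Finset.sum_congr rfl fun x hx => add_mul_eq_of_forall_isSquare_or hf hν hsq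
          (Finset.ne_of_mem_erase hx), Finset.sum_const, smul_eq_mul,
          Finset.card_erase_of_mem (Finset.mem_univ _), Finset.card_univ, Nat.card_eq_fintype_card]

end

variable [Finite F]

lemma isSquare_or_isSquare_mul {ν : F} (hν : ¬ IsSquare ν) (x : F) :
    IsSquare x ∨ IsSquare (ν * x) := by
  classical
  have := Fintype.ofFinite F
  rcases eq_or_ne x 0 with rfl | hx
  · simp
  refine or_iff_not_imp_left.2 fun hsq => ?_
  have hν0 : ν ≠ 0 := by
    rintro rfl
    exact hν (.zero)
  rw [← quadraticChar_one_iff_isSquare (mul_ne_zero hν0 hx), map_mul,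
    quadraticChar_neg_one_iff_not_isSquare.2 hν, quadraticChar_neg_one_iff_not_isSquare.2 hsq]
  norm_num

lemma isSquare_or_isSquare_neg (hF : Nat.card F % 4 ≠ 1) (x : F) :
    IsSquare x ∨ IsSquare (-x) := by
  have := Fintype.ofFinite F
  by_cases hneg : IsSquare (-1 : F)
  · rw [FiniteField.isSquare_neg_one_iff, ← Nat.card_eq_fintype_card] at hneg
    exact .inl (isSquare_of_two_eq_zero
      (two_eq_zero_iff_even_card.2 (Nat.even_iff.2 (by lia))) x)
  · rw [← neg_one_mul]
    exact isSquare_or_isSquare_mul hneg x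

lemma exists_forall_isSquare_or_isSquare_mul (F : Type*) [Field F] [Finite F] :
    ∃ ν : F, ν ≠ 0 ∧ ∀ x : F, IsSquare x ∨ IsSquare (ν * x) := by
  by_cases! hsq : ∀ x : F, IsSquare x
  · exact ⟨1, one_ne_zero, fun x => .inl (hsq x)⟩
  · obtain ⟨ν, hν⟩ := hsq
    exact ⟨ν, by rintro rfl; exact hν .zero, isSquare_or_isSquare_mul hν⟩

end SquareClasses

lemma le_of_dvd_add_sub_one_mul {q v c : ℕ} (hc : c < v) (h : q ∣ v + (q - 1) * c) : q ≤ v := by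
  rcases q.eq_zero_or_pos with rfl | hq
  · exact v.zero_le
  have heq : v + (q - 1) * c = v - c + q * c := by
    rw [tsub_mul, one_mul]
    have := Nat.le_mul_of_pos_left c hq
    lia
  rw [heq, Nat.dvd_add_left (dvd_mul_right q c)] at h
  exact (Nat.le_of_dvd (Nat.sub_pos_of_lt hc) h).trans (v.sub_le c)

section FixedPoints

variable {F : Type*} [Field F] {G : Type*} [Group G] (φ : SL2 F →* G) (Pt : Type*) [MulAction G Pt]

/-- The number of points fixed by the image of `upper x`. -/
noncomputable def numFixedPoints (x : F) : ℕ :=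
  Nat.card (MulAction.fixedBy Pt (φ (upper x)))

variable {φ Pt}

lemma numFixedPoints_sq_mul {a : F} (ha : a ≠ 0) (x : F) :
    numFixedPoints φ Pt (a ^ 2 * x) = numFixedPoints φ Pt x := by
  have hconj := diag_conj_upper (Units.mk0 a ha) x
  rw [Units.val_mk0] at hconj
  rw [numFixedPoints, ← hconj, map_mul, map_mul, map_inv, ← MulAction.smul_fixedBy,
    Nat.card_coe_set_eq, Set.ncard_smul_set, ← Nat.card_coe_set_eq, numFixedPoints]

lemma numFixedPoints_neg (x : F) : numFixedPoints φ Pt (-x) = numFixedPoints φ Pt x := by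
  rw [numFixedPoints, ← upper_inv, map_inv, MulAction.fixedBy_inv, numFixedPoints]

lemma numFixedPoints_zero : numFixedPoints φ Pt (0 : F) = Nat.card Pt := by
  rw [numFixedPoints, upper_zero, map_one, MulAction.fixedBy_one_eq_univ, Nat.card_univ]

variable [Finite Pt] (hker : φ.ker = Subgroup.center (SL2 F))
include hker

lemma numFixedPoints_lt [FaithfulSMul G Pt] {x : F} (hx : x ≠ 0) :
    numFixedPoints φ Pt x < Nat.card Pt := by
  rw [numFixedPoints, Nat.card_coe_set_eq, ← Set.ncard_univ]
  refine Set.ncard_lt_ncard ((Set.ssubset_univ_iff).2 fun huniv => hx ?_)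
  refine map_upper_injective hker ?_
  simp only [upper_zero, map_one]
  exact MulAction.fixedBy_eq_univ_iff_eq_one.1 huniv

lemma card_dvd_sum_numFixedPoints [Fintype F] : Nat.card F ∣ ∑ x : F, numFixedPoints φ Pt x := by
  have : Finite (rootGroup φ) := (Set.finite_range fun x : F => φ (upper x)).to_subtype
  have := Fintype.ofFinite (rootGroup φ)
  have : ∀ g : rootGroup φ, Fintype (MulAction.fixedBy Pt g) := fun g => .ofFinite _
  have := Fintype.ofFinite (Quotient (MulAction.orbitRel (rootGroup φ) Pt))
  have hburnside :=
    MulAction.sum_card_fixedBy_eq_card_orbits_mul_card_group (rootGroup φ) Pt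
  simp only [← Nat.card_eq_fintype_card, card_rootGroup hker] at hburnside
  let e : F ≃ rootGroup φ := .ofInjective _ (map_upper_injective hker)
  refine Dvd.intro_left _ (hburnside.symm.trans (Eq.symm ?_))
  exact Fintype.sum_equiv e _ _ fun x => rfl

variable [Finite F] [FaithfulSMul G Pt]

lemma card_le_two_mul_card : Nat.card F ≤ 2 * Nat.card Pt := by
  have := Fintype.ofFinite F
  obtain ⟨ν, hν, hsq⟩ := exists_forall_isSquare_or_isSquare_mul F
  have hdvd := (card_dvd_sum_numFixedPoints (Pt := Pt) hker).mul_left 2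
  rw [two_mul_sum_eq_of_forall_isSquare_or (fun a ha => numFixedPoints_sq_mul ha) hν hsq,
    numFixedPoints_zero] at hdvd
  refine le_of_dvd_add_sub_one_mul ?_ hdvd
  have h1 := numFixedPoints_lt (Pt := Pt) hker one_ne_zero
  have hlt := numFixedPoints_lt (Pt := Pt) hker hν
  lia

/- For `q ≢ 1 (mod 4)` every nonzero `x` or its negative is a square, so all nontrivial elements of
a root group have the same number of fixed points. -/
lemma card_le_card (hF : Nat.card F % 4 ≠ 1) : Nat.card F ≤ Nat.card Pt := by
  have := Fintype.ofFinite F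
  have hdvd := card_dvd_sum_numFixedPoints (Pt := Pt) hker
  have hsum := two_mul_sum_eq_of_forall_isSquare_or (f := numFixedPoints φ Pt)
    (fun a ha => numFixedPoints_sq_mul ha) (neg_ne_zero.2 one_ne_zero)
    (by simpa only [neg_one_mul] using isSquare_or_isSquare_neg hF)
  rw [numFixedPoints_neg, numFixedPoints_zero, ← two_mul, mul_left_comm, ← mul_add] at hsum
  rw [Nat.eq_of_mul_eq_mul_left two_pos hsum] at hdvd
  exact le_of_dvd_add_sub_one_mul (numFixedPoints_lt hker one_ne_zero) hdvd

end FixedPoints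

/-! ### Arithmetic of the exceptional parameters -/

lemma mul_sq_lt_two_pow {f : ℕ} (hf : 13 ≤ f) : 48 * f ^ 2 < 2 ^ f := by
  induction f, hf using Nat.le_induction with
  | base => norm_num
  | succ m hm ih =>
    nlinarith [pow_succ 2 m]

lemma gcd_le_two_of_mod_four_eq_one {q : ℕ} (hq : q % 4 = 1) : (q + 1).gcd 4 ≤ 2 := by
  rw [Nat.gcd_comm, Nat.gcd_rec, show (q + 1) % 4 = 2 by lia]
  norm_num

lemma mul_sub_one_add_one_le {R k m : ℕ} (hk : 3 ≤ k) (hkR : k < 3 * R) (hR : R ≤ m) :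
    R * (k - 1) + 1 ≤ 3 * m ^ 2 :=
  calc R * (k - 1) + 1 ≤ R * k := by
        obtain ⟨n, rfl⟩ : ∃ n, k = n + 1 := ⟨k - 1, by lia⟩
        rw [Nat.add_sub_cancel, mul_add]
        lia
    _ ≤ m * (3 * m) := Nat.mul_le_mul hR (by lia)
    _ = 3 * m ^ 2 := by ring

/- The only solution is `p = 5`, `f = 1`, `R = 2`, `k = 3`. -/
lemma eq_five_of_mem_range : ∀ f ∈ Finset.range 13, ∀ p ∈ Finset.range 49,
    4 ≤ p ^ f ∧ p ^ f ≤ 48 * f ^ 2 →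
    ∀ R ∈ Finset.range (4 * f + 1), 2 ≤ R ∧ R ∣ (p ^ f + 1).gcd 4 * f →
    ∀ k ∈ Finset.range (3 * R), 3 ≤ k ∧ k ∣ 3 * R * (R - 1) ∧
      p ^ f ≤ 2 * (R * (k - 1) + 1) ∧ (p ^ f % 4 ≠ 1 → p ^ f ≤ R * (k - 1) + 1) ∧
      ¬ (p ^ f).Coprime (R * (k - 1) + 1) ∧
      3 * R * (R * (k - 1) + 1) ∣ (p ^ f + 1) * (p ^ f * (p ^ f - 1)) * f →
    R * (k - 1) + 1 = 5 := by
  decide +kernel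

/- Here `v = R (k - 1) + 1` is at most `3 R ^ 2`, hence at most `48 f ^ 2`, which is too small
compared with `q = p ^ f` unless `f` and `p` are small. -/
lemma mul_sub_one_add_one_eq_five {p f R k : ℕ} (hp : 2 ≤ p) (hq : 4 ≤ p ^ f) (hR : 2 ≤ R)
    (hRf : R ∣ (p ^ f + 1).gcd 4 * f) (hk : 3 ≤ k) (hkR : k < 3 * R) (hkdvd : k ∣ 3 * R * (R - 1))
    (hle : p ^ f ≤ 2 * (R * (k - 1) + 1)) (hle' : p ^ f % 4 ≠ 1 → p ^ f ≤ R * (k - 1) + 1)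
    (hcop : ¬ (p ^ f).Coprime (R * (k - 1) + 1))
    (hord : 3 * R * (R * (k - 1) + 1) ∣ (p ^ f + 1) * (p ^ f * (p ^ f - 1)) * f) :
    R * (k - 1) + 1 = 5 := by
  have hf : 0 < f := f.pos_of_ne_zero (by rintro rfl; simp at hq)
  have hRle := Nat.le_of_dvd (Nat.mul_pos (Nat.gcd_pos_of_pos_right _ four_pos) hf) hRf
  have hR4 : R ≤ 4 * f :=
    hRle.trans (Nat.mul_le_mul_right _ (Nat.le_of_dvd four_pos (Nat.gcd_dvd_right ..)))
  have hpow : p ^ f ≤ 48 * f ^ 2 := by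
    by_cases hmod : p ^ f % 4 = 1
    · have hv := mul_sub_one_add_one_le hk hkR
        (hRle.trans (Nat.mul_le_mul_right _ (gcd_le_two_of_mod_four_eq_one hmod)))
      rw [mul_pow] at hv
      lia
    · have hv := mul_sub_one_add_one_le hk hkR hR4
      rw [mul_pow] at hv
      have := hle' hmod
      lia
  have hf13 : f < 13 := by
    by_contra! h
    exact ((mul_sq_lt_two_pow h).trans_le (Nat.pow_le_pow_left hp f)).not_ge hpow
  have hp49 : p < 49 := by
    by_contra! h
    have hpow49 := (Nat.pow_le_pow_left h f).trans hpow
    clear * - hf hf13 hpow49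
    interval_cases f <;> norm_num at hpow49
  exact eq_five_of_mem_range f (Finset.mem_range.2 hf13) p (Finset.mem_range.2 hp49) ⟨hq, hpow⟩ R
    (Finset.mem_range.2 (by lia)) ⟨hR, hRf⟩ k (Finset.mem_range.2 hkR)
    ⟨hk, hkdvd, hle, hle', hcop, hord⟩

end SLTwo

namespace FT.IsDesign

variable {Pt : Type*} [Finite Pt] {𝓑 : Set (Set Pt)} {k lam R : ℕ} (hD : IsDesign 𝓑 k lam)
  (hlam : 0 < lam) (hkv : k < Nat.card Pt - 1) (hr : ∀ x : Pt, repNum 𝓑 x = lam * R)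
include hD hlam hkv hr

lemma card_points_eq : Nat.card Pt = R * (k - 1) + 1 := by
  obtain ⟨α⟩ : Nonempty Pt := (Nat.card_pos_iff.1 (by lia : 0 < Nat.card Pt)).1
  have hmul := hD.repNum_mul α
  rw [hr, mul_assoc] at hmul
  have := Nat.eq_of_mul_eq_mul_left hlam hmul
  lia

lemma two_le_of_repNum_eq_mul : 2 ≤ R := by
  have hv := hD.card_points_eq hlam hkv hr
  by_contra! h
  interval_cases R <;> lia

lemma lt_repNum (hnonsym : Nat.card 𝓑 ≠ Nat.card Pt) : k < lam * R := by
  have hR := hD.two_le_of_repNum_eq_mul hlam hkv hr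
  have hlt : Nat.card Pt < Nat.card 𝓑 :=
    lt_of_le_of_ne (hD.card_le_card_blocks hr (by nlinarith)) hnonsym.symm
  refine lt_of_mul_lt_mul_left (a := Nat.card Pt) ?_ (Nat.zero_le _)
  rw [← hD.card_blocks_mul hr]
  have hk : 0 < k := by
    have hv := hD.card_points_eq hlam hkv hr
    rcases k.eq_zero_or_pos with rfl | hk <;> lia
  exact Nat.mul_lt_mul_of_pos_right hlt hk

lemma dvd_repNum_mul_sub_one : k ∣ lam * R * (R - 1) := by
  have hv := hD.card_points_eq hlam hkv hr
  have hR := hD.two_le_of_repNum_eq_mul hlam hkv hr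
  have hadd : Nat.card Pt + (R - 1) = R * k := by
    obtain ⟨n, rfl⟩ : ∃ n, k = n + 1 := ⟨k - 1, by rcases k.eq_zero_or_pos with rfl | hk <;> lia⟩
    rw [Nat.add_sub_cancel] at hv
    rw [mul_add]
    lia
  refine (Nat.dvd_add_right (Dvd.intro_left _ (hD.card_blocks_mul hr))).1 ?_
  rw [mul_comm (Nat.card Pt), ← mul_add, hadd]
  exact (dvd_mul_left k R).mul_left _

end FT.IsDesign

/-! ### Primitivity of the socle -/

lemma FT.pointPrimitive_iff_isPreprimitive {G Pt : Type*} [Group G] [MulAction G Pt] :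
    PointPrimitive G Pt ↔ MulAction.IsPreprimitive G Pt :=
  ⟨fun h => { toIsPretransitive := h.1, isTrivialBlock_of_isBlock := fun hB => h.2 _ hB },
    fun h => ⟨h.toIsPretransitive, fun _ hB => h.isTrivialBlock_of_isBlock hB⟩⟩

namespace SLTwo

lemma isCoatom_of_isCoatom_comap {S X : Type*} [Group S] [Group X] {ψ : S →* X}
    (hψ : Function.Surjective ψ) {H : Subgroup X} (h : IsCoatom (H.comap ψ)) : IsCoatom H := by
  refine ⟨fun htop => h.1 (by rw [htop, Subgroup.comap_top]), fun K hK => ?_⟩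
  refine Subgroup.comap_injective hψ ?_
  rw [h.2 _ ((Subgroup.comap_lt_comap_of_surjective hψ).2 hK), Subgroup.comap_top]

/- A normal subgroup that is not transitive fixes every point, so it is trivial and its centralizer
is the whole group. -/
lemma isPretransitive_of_centralizer_eq_bot {G Pt : Type*} [Group G] [MulAction G Pt]
    [FaithfulSMul G Pt] [Nontrivial Pt] [MulAction.IsQuasiPreprimitive G Pt] {N : Subgroup G}
    (hN : N.Normal) (hcent : Subgroup.centralizer (N : Set G) = ⊥) :
    MulAction.IsPretransitive N Pt := by
  refine MulAction.IsQuasiPreprimitive.isPretransitive_of_normal (G := G) fun hfix => ?_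
  have hbot : N = ⊥ := by
    refine (Subgroup.eq_bot_iff_forall N).2 fun x hx =>
      FaithfulSMul.eq_of_smul_eq_smul fun y : Pt => ?_
    rw [one_smul]
    exact (hfix ▸ Set.mem_univ y : y ∈ MulAction.fixedPoints N Pt) ⟨x, hx⟩
  have htop : (⊤ : Subgroup G) = ⊥ := by
    rw [← hcent, hbot, eq_comm, Subgroup.centralizer_eq_top_iff_subset]
    simp
  obtain ⟨a, b, hab⟩ := exists_pair_ne Pt
  obtain ⟨g, rfl⟩ := MulAction.exists_smul_eq G a b
  have hg : g ∈ (⊥ : Subgroup G) := htop ▸ Subgroup.mem_top g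
  rw [Subgroup.mem_bot.1 hg, one_smul] at hab
  exact hab rfl

variable {F : Type*} [Field F] {G : Type*} [Group G]

lemma exists_range_eq_of_mulEquiv {X : Subgroup G} (e : X ≃* PSL2 F) :
    ∃ φ : SL2 F →* G, φ.range = X ∧ φ.ker = Subgroup.center (SL2 F) := by
  let ψ : SL2 F →* X := e.symm.toMonoidHom.comp (QuotientGroup.mk' (Subgroup.center (SL2 F)))
  have hψ : Function.Surjective ψ := e.symm.surjective.comp (QuotientGroup.mk'_surjective _)
  refine ⟨X.subtype.comp ψ, ?_, ?_⟩
  · rw [MonoidHom.range_comp, MonoidHom.range_eq_top.2 hψ, ← MonoidHom.range_eq_map,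
      Subgroup.range_subtype]
  · rw [← QuotientGroup.ker_mk' (Subgroup.center (SL2 F))]
    ext s
    simp [ψ, MonoidHom.mem_ker]

variable [Finite F] [Finite G] {φ : SL2 F →* G} {Pt : Type*} [MulAction G Pt] [Finite Pt]
  [Nontrivial Pt] [FaithfulSMul G Pt] [MulAction.IsPreprimitive G Pt]
  [MulAction.IsPretransitive φ.range Pt]
  (hker : φ.ker = Subgroup.center (SL2 F)) (hnorm : φ.range.Normal)
  (hcent : Subgroup.centralizer (φ.range : Set G) = ⊥) (hq : 4 ≤ Nat.card F)
  {𝓑 : Set (Set Pt)} {k r : ℕ} (hD : IsDesign 𝓑 k 3) (hk : 2 < k) (hkv : k < Nat.card Pt - 1)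
  (hnonsym : Nat.card 𝓑 ≠ Nat.card Pt) (hr : ∀ x : Pt, repNum 𝓑 x = r) (h3r : 3 ∣ r)
  (hacts : ActsOn G 𝓑) (hflag : FlagTransitive G 𝓑)
include hker hnorm hcent hq hD hk hkv hnonsym hr h3r hacts hflag

theorem exists_isCoatom_pointStabilizer_or_card_eq_five :
    (∃ α : Pt, IsCoatom (pointStabilizer φ α)) ∨ Nat.card Pt = 5 := by
  obtain ⟨R, rfl⟩ := h3r
  by_cases hFPt : (Nat.card F).Coprime (Nat.card Pt)
  · exact .inl (exists_isCoatom_pointStabilizer_of_coprime hker hnorm hFPt)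
  have hv := hD.card_points_eq three_pos hkv hr
  have hR := hD.two_le_of_repNum_eq_mul three_pos hkv hr
  have hRα (α : Pt) : 3 * R ∣ Nat.card (MulAction.stabilizer G α) := by
    have hpos : 0 < repNum 𝓑 α := by rw [hr]; lia
    obtain ⟨⟨B, hB⟩⟩ := (Nat.card_pos_iff.1 hpos).1
    exact hr α ▸ repNum_dvd_card_stabilizer hacts hflag α ⟨B, hB⟩
  have horbit (α β : Pt) (hαβ : β ≠ α) :
      R ∣ (MulAction.orbit (MulAction.stabilizer G α) β).ncard := by
    have hdvd := repNum_dvd_mul_ncard_orbit (G := G) hD hflag hαβ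
    rw [hr] at hdvd
    exact Nat.dvd_of_mul_dvd_mul_left three_pos hdvd
  refine (exists_isCoatom_pointStabilizer_or_dvd hker hnorm hcent hq (by lia)
    ⟨k - 1, by lia⟩ hFPt hRα horbit).imp_right fun hdvd => ?_
  obtain ⟨p, hp, hpq⟩ := exists_card_eq_prime_pow F
  obtain ⟨α⟩ : Nonempty Pt := inferInstance
  have hord := mul_dvd_mul_right
    ((hRα α).trans (card_stabilizer_dvd hker hnorm hcent α)) (Nat.card Pt)
  rw [mul_right_comm (Nat.card _), card_pointStabilizer_mul, card_SL2] at hord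
  have hle := card_le_two_mul_card (Pt := Pt) hker
  have hle' := card_le_card (Pt := Pt) hker
  rw [hv] at hle hle' hord hFPt ⊢
  rw [hpq] at hle hle' hord hFPt hq hdvd
  exact mul_sub_one_add_one_eq_five hp.two_le hq hR hdvd hk (hD.lt_repNum three_pos hkv hr hnonsym)
    (hD.dvd_repNum_mul_sub_one three_pos hkv hr) hle hle' hFPt hord

theorem isPreprimitive_range : MulAction.IsPreprimitive φ.range Pt := by
  rcases exists_isCoatom_pointStabilizer_or_card_eq_five hker hnorm hcent hq hD hk hkv hnonsym hr
    h3r hacts hflag with ⟨α, hα⟩ | h5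
  · exact (MulAction.isCoatom_stabilizer_iff_preprimitive φ.range α).1
      (isCoatom_of_isCoatom_comap φ.rangeRestrict_surjective hα)
  · exact MulAction.IsPreprimitive.of_prime_card (h5 ▸ Nat.prime_five)

end SLTwo

/-- For a non-trivial, non-symmetric flag-transitive, point-primitive
`2-(v,k,3)` design with `3 ∣ r` and almost simple automorphism group `G` with socle
`X ≅ PSL(2,q)`, the socle `X` itself acts point-primitively; equivalently, every point
stabilizer `X_α` is a maximal subgroup of `X`. -/
theorem stmt_8
    (q : ℕ) (hq4 : 4 ≤ q)
    (F : Type) [Field F] [Fintype F] (hF : Fintype.card F = q)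
    {Pt : Type*} [Fintype Pt] {G : Type*} [Group G] [MulAction G Pt] [FaithfulSMul G Pt]
    -- `D = (Pt, 𝓑)` is a non-trivial, non-symmetric `2-(v,k,3)` design …
    (𝓑 : Set (Set Pt)) (v k : ℕ) (hv : Nat.card Pt = v)
    (hD : IsDesign 𝓑 k 3) (hnt : 2 < k ∧ k < v - 1)
    (hnonsym : Nat.card 𝓑 ≠ v)
    -- … whose replication number `r` is divisible by 3, …
    (r : ℕ) (hr : ∀ x : Pt, repNum 𝓑 x = r) (h3r : 3 ∣ r)
    -- … admitting the flag-transitive, point-primitive automorphism group `G`, …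
    (hacts : ActsOn G 𝓑) (hflag : FlagTransitive G 𝓑)
    (hprim : PointPrimitive G Pt)
    -- … where `G` is almost simple with socle `X ≅ PSL(2,q)` (so `PSL(2,q) ⊴ G ≤ PΓL(2,q)`):
    (X : Subgroup G) (hXnormal : X.Normal)
    (hXiso : Nonempty (X ≃* PSL2 F))
    (hXcent : Subgroup.centralizer (X : Set G) = ⊥)
    :
    PointPrimitive X Pt ∧ ∀ α : Pt, IsCoatom (MulAction.stabilizer X α) := by
  obtain ⟨e⟩ := hXiso
  subst hv hF
  have : Finite G := Finite.of_injective _ (MulAction.toPerm_injective (α := G) (β := Pt))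
  have : Nontrivial Pt := Finite.one_lt_card_iff_nontrivial.1 (by lia)
  have : MulAction.IsPreprimitive G Pt := pointPrimitive_iff_isPreprimitive.1 hprim
  obtain ⟨φ, rfl, hker⟩ := SLTwo.exists_range_eq_of_mulEquiv e
  have : MulAction.IsPretransitive φ.range Pt :=
    SLTwo.isPretransitive_of_centralizer_eq_bot hXnormal hXcent
  have hX : MulAction.IsPreprimitive φ.range Pt :=
    SLTwo.isPreprimitive_range hker hXnormal hXcent (Nat.card_eq_fintype_card.ge.trans' hq4)
      hD hnt.1 hnt.2 hnonsym hr h3r hacts hflag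
  exact ⟨pointPrimitive_iff_isPreprimitive.2 hX,
    fun α => (MulAction.isCoatom_stabilizer_iff_preprimitive _ α).2 hX⟩
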